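/- Let d > 2 be an integer, c₀ ∈ (0,1], and ε ∈ (0,1). There exist constants c, C > 0 depending only on (d, c₀), and δ ∈ (0,1) depending only on (d, c₀, ε), such that for every admissible kernel J on ℤ^d with constant c₀ and every family G ∈ 𝒢 such that (J,G) satisfies Assumption G, for every β ∈ [0, β(δ)] and every x ∈ ℤ^d, G_β(x) ≤ δ_0(x) + (C/σ_J^d) · (σ_J/(σ_J ∨ |x|))^{d−2−ε} · exp(−c·|x|/ξ(β)). -/

import Mathlib

open scoped ENNReal

noncomputable section

namespace Blackbox

/-- Supremum norm of a lattice point. -/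
def supNorm {d : ℕ} (x : Fin d → ℤ) : ℝ :=
  ((Finset.univ.sup fun i => (x i).natAbs : ℕ) : ℝ)

/-- Squared Euclidean norm of a lattice point. -/
def sqNorm {d : ℕ} (x : Fin d → ℤ) : ℝ :=
  ∑ i, ((x i : ℝ)) ^ 2

/-- Invariance under coordinate permutations and sign flips of individual coordinates. -/
def IsSymmFun {d : ℕ} {α : Type*} (f : (Fin d → ℤ) → α) : Prop :=
  ∀ (π : Equiv.Perm (Fin d)) (e : Fin d → Bool) (x : Fin d → ℤ),
    f (fun i => (if e i then -1 else 1) * x (π i)) = f x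

/-- First coordinate (dot product with `e₁`). -/
def e1 {d : ℕ} {α : Type*} [Zero α] (y : Fin d → α) : α :=
  if h : 0 < d then y ⟨0, h⟩ else 0

/-- An admissible kernel on `ℤ^d` with constant `c₀`. -/
structure AdmissibleKernel (d : ℕ) (c₀ : ℝ) where
  J : (Fin d → ℤ) → ℝ
  nonneg : ∀ x, 0 ≤ J x
  zero_at_zero : J 0 = 0
  summable : Summable J
  norm_one : ∑' x, J x = 1
  symm : IsSymmFun J
  R : ℝ
  R_ge_one : 1 ≤ R
  range_le : ∀ x, 0 < J x → supNorm x ≤ R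
  range_attained : ∃ x, 0 < J x ∧ supNorm x = R
  summable_sq : Summable fun x => sqNorm x * J x
  sigma_lower : c₀ * R ≤ Real.sqrt (∑' x, sqNorm x * J x)
  J_upper : ∀ x, J x ≤ c₀⁻¹ / R ^ d

/-- `σ_J`, the square root of the variance of the kernel. -/
def AdmissibleKernel.sigma {d : ℕ} {c₀ : ℝ} (K : AdmissibleKernel d c₀) : ℝ :=
  Real.sqrt (∑' x, sqNorm x * K.J x)

/-- A family `G ∈ 𝒢` together with an admissible kernel `J` such that `(J,G)` satisfies
Assumption G (with error-term family `H`). -/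
structure Model (d : ℕ) (c₀ : ℝ) where
  K : AdmissibleKernel d c₀
  G : ℝ → (Fin d → ℤ) → ℝ≥0∞
  βc : ℝ≥0∞
  βc_pos : 0 < βc
  init : ∀ x, G 0 x = if x = 0 then 1 else 0
  G' : ℝ → (Fin d → ℤ) → ℝ
  mono : ∀ (x : Fin d → ℤ) ⦃β₁ β₂ : ℝ⦄, 0 ≤ β₁ → β₁ ≤ β₂ →
    ENNReal.ofReal β₂ ≤ βc → G β₁ x ≤ G β₂ x
  deriv : ∀ (x : Fin d → ℤ) ⦃β : ℝ⦄, 0 ≤ β → ENNReal.ofReal β < βc →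
    HasDerivWithinAt (fun t => (G t x).toReal) (G' β x) (Set.Ici 0) β
  symm : ∀ β, IsSymmFun (G β)
  expDecay : ∀ ⦃β : ℝ⦄, 0 ≤ β → ENNReal.ofReal β < βc →
    ∃ C > (0:ℝ), ∃ c > (0:ℝ), ∀ x, G β x ≤ ENNReal.ofReal (C * Real.exp (-c * supNorm x))
  limit : βc ≠ ⊤ → ∀ x, G βc.toReal x = ⨆ β ∈ Set.Ico (0 : ℝ) βc.toReal, G β x
  I1 : ∀ ⦃β' β : ℝ⦄, 0 ≤ β' → β' ≤ β → ENNReal.ofReal β < βc →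
    ∀ x, G β x ≤ G β' x + ENNReal.ofReal (β - β') *
      ∑' p : (Fin d → ℤ) × (Fin d → ℤ),
        G β' p.1 * ENNReal.ofReal (K.J p.2) * G β (x - p.1 - p.2)
  H : ℝ → (Fin d → ℤ) → ℝ
  H_nonneg : ∀ β x, 0 ≤ H β x
  H_zero : ∀ x, H 0 x = 0
  H_symm : ∀ β x, H β (-x) = H β x
  H_cont : ∀ x, ContinuousOn (fun β => H β x)
    {β : ℝ | 0 ≤ β ∧ ENNReal.ofReal β < βc}
  H_expDecay : ∀ ⦃β : ℝ⦄, 0 ≤ β → ENNReal.ofReal β < βc →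
    ∃ C > (0:ℝ), ∃ c > (0:ℝ), ∀ x, H β x ≤ C * Real.exp (-c * supNorm x)
  I2 : ∀ ⦃β : ℝ⦄, 0 ≤ β → ENNReal.ofReal β < βc → ∀ x,
    (∑' p : (Fin d → ℤ) × (Fin d → ℤ),
      (G β p.1).toReal * (K.J p.2 - H β p.2) * (G β (x - p.1 - p.2)).toReal)
      ≤ G' β x

namespace Model

variable {d : ℕ} {c₀ : ℝ}

def sigma (M : Model d c₀) : ℝ := M.K.sigma

/-- `F_β = J * G_β`. -/
def F (M : Model d c₀) (β : ℝ) (x : Fin d → ℤ) : ℝ≥0∞ :=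
  ∑' y, ENNReal.ofReal (M.K.J y) * M.G β (x - y)

/-- The susceptibility `χ(β)`. -/
def chi (M : Model d c₀) (β : ℝ) : ℝ≥0∞ := ∑' x, M.G β x

/-- `ξ(β)²`. -/
def xiSq (M : Model d c₀) (β : ℝ) : ℝ≥0∞ :=
  (∑' x, ENNReal.ofReal (sqNorm x) * M.F β x) / M.chi β

/-- The correlation length of order two, `ξ(β)`. -/
def xi (M : Model d c₀) (β : ℝ) : ℝ := Real.sqrt (M.xiSq β).toReal

/-- The error term `E(β)`. -/
def E (M : Model d c₀) (β : ℝ) : ℝ≥0∞ :=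
  ⨆ t ∈ Set.Icc (0 : ℝ) β,
    (ENNReal.ofReal (∑' x, M.H t x) +
      ENNReal.ofReal (∑' x, sqNorm x * M.H t x) / M.xiSq t)

/-- `β(δ)`. -/
def betaOf (M : Model d c₀) (δ : ℝ) : ℝ :=
  sSup {β : ℝ | 0 ≤ β ∧ ENNReal.ofReal β < M.βc ∧ M.E β < ENNReal.ofReal δ}

/-- One-step distribution of the effective random walk at parameter `β`. -/
def effStep (M : Model d c₀) (β : ℝ) (y : Fin d → ℤ) : ℝ≥0∞ :=
  M.F β y / M.chi β

/-- `k`-step distribution of the effective random walk at parameter `β`. -/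
def effIter (M : Model d c₀) (β : ℝ) : ℕ → (Fin d → ℤ) → ℝ≥0∞
  | 0 => fun x => if x = 0 then 1 else 0
  | n + 1 => fun x => ∑' y, M.effStep β y * M.effIter β n (x - y)

/-- Moment generating function `M_β(s)` of the first coordinate of one step of the
effective random walk. -/
def Mgf (M : Model d c₀) (β s : ℝ) : ℝ≥0∞ :=
  ∑' y : Fin d → ℤ, M.effStep β y * ENNReal.ofReal (Real.exp (s / M.xi β * ((e1 y : ℤ) : ℝ)))

end Model

end Blackbox
open Blackbox

/-!
Integrating `∂_β G_β ≤ G_β * J * G_β` and iterating bounds `F_β` by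
`∑_{j < n} (β - t) ^ j F_t^{*(j + 1)}` plus a remainder, for every `t ≤ β`, while the lower
differential inequality keeps `(β - t) χ(t)` below `1 + 4δ` and makes `χ(β)` at most about
`(ξ(β) / σ) ^ 2`. So `F_β` is governed by the walk with step distribution `F_t / χ(t)`, whose
exponential moments at scale `ξ(t)` stay bounded: when the susceptibility grows by the factor `128`,
`ξ` grows by at least `8`, which makes up for the moment lost in the renewal bound. An Esseen
inequality for the characteristic function then gives a local limit bound for this walk, as if its
steps were uniform on a box of side `ξ(t)`.

Choosing `t` with `ξ(t) = u` and `n = K ^ 2` compares the values at scales `u` and `u K` of `F_β`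
smeared with the weight `exp (-κ‖·‖ / u)`. In dimension `d > 2` the recursion over the scales
`u, u K, u K ^ 2, …` contracts once `K` is large, up to a constant per scale. That constant and the
error `δ` cost a power of the distance, at most `ε` if `K` is large and then `δ` is small. The
endpoint `β = β(δ)` is reached by left limits.
-/

namespace Blackbox

section Convolution

variable {Γ : Type*} [AddCommGroup Γ]

/-- Convolution of `[0, ∞]`-valued functions on an abelian group, written as a sum over a single
variable so that `Model.F` is a convolution by definition. -/
def conv (f g : Γ → ℝ≥0∞) (x : Γ) : ℝ≥0∞ :=
  ∑' y, f y * g (x - y)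

infixl:70 "⋆" => conv

lemma tsum_mul_conv (w f g : Γ → ℝ≥0∞) :
    ∑' x, w x * (f ⋆ g) x = ∑' y, ∑' z, w (y + z) * (f y * g z) := by
  unfold conv
  simp_rw [← ENNReal.tsum_mul_left]
  rw [ENNReal.tsum_comm]
  refine tsum_congr fun y => ?_
  rw [← (Equiv.addLeft y).tsum_eq]
  simp

lemma tsum_mul_conv_of_map_add {w : Γ → ℝ≥0∞} (hw : ∀ x y, w (x + y) = w x * w y)
    (f g : Γ → ℝ≥0∞) :
    ∑' x, w x * (f ⋆ g) x = (∑' x, w x * f x) * ∑' x, w x * g x := by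
  rw [tsum_mul_conv, ← ENNReal.tsum_mul_right]
  refine tsum_congr fun y => ?_
  rw [← ENNReal.tsum_mul_left]
  refine tsum_congr fun z => ?_
  rw [hw]
  ring

lemma tsum_conv (f g : Γ → ℝ≥0∞) : ∑' x, (f ⋆ g) x = (∑' x, f x) * ∑' x, g x := by
  simpa only [one_mul] using
    tsum_mul_conv_of_map_add (w := fun _ => 1) (fun _ _ => (one_mul _).symm) f g

lemma conv_comm (f g : Γ → ℝ≥0∞) : f ⋆ g = g ⋆ f := by
  funext x
  unfold conv
  rw [← (Equiv.subLeft x).tsum_eq]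
  simp [mul_comm]

lemma conv_assoc (f g h : Γ → ℝ≥0∞) : f ⋆ g ⋆ h = f ⋆ (g ⋆ h) := by
  funext x
  calc (f ⋆ g ⋆ h) x = ∑' y, h (x - y) * (f ⋆ g) y := tsum_congr fun y => mul_comm _ _
    _ = ∑' y, ∑' z, h (x - (y + z)) * (f y * g z) := tsum_mul_conv (fun y => h (x - y)) f g
    _ = (f ⋆ (g ⋆ h)) x := tsum_congr fun y => by
        rw [conv, ← ENNReal.tsum_mul_left]
        refine tsum_congr fun z => ?_
        rw [sub_add_eq_sub_sub]
        ring

lemma conv_mono {f f' g g' : Γ → ℝ≥0∞} (hf : f ≤ f') (hg : g ≤ g') : f ⋆ g ≤ f' ⋆ g' :=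
  fun _ => ENNReal.tsum_le_tsum fun y => mul_le_mul' (hf y) (hg _)

lemma conv_add (f g h : Γ → ℝ≥0∞) : f ⋆ (g + h) = f ⋆ g + f ⋆ h := by
  funext x
  simp only [conv, Pi.add_apply, mul_add, ENNReal.tsum_add]

lemma conv_smul (a : ℝ≥0∞) (f g : Γ → ℝ≥0∞) : f ⋆ (a • g) = a • (f ⋆ g) := by
  funext x
  simp only [conv, Pi.smul_apply, smul_eq_mul, ← ENNReal.tsum_mul_left, mul_left_comm]

lemma smul_conv (a : ℝ≥0∞) (f g : Γ → ℝ≥0∞) : (a • f) ⋆ g = a • (f ⋆ g) := by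
  rw [conv_comm, conv_smul, conv_comm]

lemma conv_sum {ι : Type*} (s : Finset ι) (f : Γ → ℝ≥0∞) (g : ι → Γ → ℝ≥0∞) :
    f ⋆ (∑ i ∈ s, g i) = ∑ i ∈ s, f ⋆ g i := by
  classical
  induction s using Finset.induction_on with
  | empty => funext x; simp [conv]
  | insert i s hi ih => rw [Finset.sum_insert hi, Finset.sum_insert hi, conv_add, ih]

lemma conv_apply_le_tsum_mul {f g : Γ → ℝ≥0∞} {A : ℝ≥0∞} (hg : ∀ x, g x ≤ A) (x : Γ) :
    (f ⋆ g) x ≤ (∑' y, f y) * A := by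
  rw [← ENNReal.tsum_mul_right]
  exact ENNReal.tsum_le_tsum fun y => mul_le_mul' le_rfl (hg _)

lemma conv_apply_ne_top {f g : Γ → ℝ≥0∞} (hf : ∑' x, f x ≠ ⊤) (hg : ∑' x, g x ≠ ⊤) (x : Γ) :
    (f ⋆ g) x ≠ ⊤ :=
  ne_top_of_le_ne_top (tsum_conv f g ▸ ENNReal.mul_ne_top hf hg) (ENNReal.le_tsum x)

variable [DecidableEq Γ]

lemma single_conv (f : Γ → ℝ≥0∞) : Pi.single 0 1 ⋆ f = f := by
  funext x
  rw [conv, tsum_eq_single 0 fun y hy => by simp [hy]]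
  simp

lemma conv_single (f : Γ → ℝ≥0∞) : f ⋆ Pi.single 0 1 = f := by
  rw [conv_comm, single_conv]

/-- Convolution powers: if `p` is the step distribution of a random walk started at `0`, then
`convPow p n` is the law of its position after `n` steps. -/
def convPow (f : Γ → ℝ≥0∞) : ℕ → Γ → ℝ≥0∞
  | 0 => Pi.single 0 1
  | n + 1 => f ⋆ convPow f n

lemma convPow_one (f : Γ → ℝ≥0∞) : convPow f 1 = f := conv_single f

lemma convPow_add (f : Γ → ℝ≥0∞) (m n : ℕ) : convPow f (m + n) = convPow f m ⋆ convPow f n := by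
  induction m with
  | zero => rw [zero_add, convPow, single_conv]
  | succ m ih => rw [Nat.succ_add, convPow, ih, convPow, conv_assoc]

lemma smul_convPow (a : ℝ≥0∞) (f : Γ → ℝ≥0∞) (n : ℕ) :
    convPow (a • f) n = a ^ n • convPow f n := by
  induction n with
  | zero => simp [convPow]
  | succ n ih => rw [convPow, ih, conv_smul, smul_conv, smul_smul, ← pow_succ, convPow]

lemma tsum_mul_convPow_of_map_add {w : Γ → ℝ≥0∞} (hw0 : w 0 = 1)
    (hw : ∀ x y, w (x + y) = w x * w y) (f : Γ → ℝ≥0∞) (n : ℕ) :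
    ∑' x, w x * convPow f n x = (∑' x, w x * f x) ^ n := by
  induction n with
  | zero =>
    rw [pow_zero, tsum_eq_single 0 fun y hy => by simp [convPow, hy]]
    simp [convPow, hw0]
  | succ n ih => rw [convPow, tsum_mul_conv_of_map_add hw, ih, pow_succ']

lemma tsum_convPow (f : Γ → ℝ≥0∞) (n : ℕ) : ∑' x, convPow f n x = (∑' x, f x) ^ n := by
  simpa only [one_mul] using
    tsum_mul_convPow_of_map_add (w := fun _ => 1) rfl (fun _ _ => (one_mul _).symm) f n

lemma le_sum_convPow_of_le_add_smul_conv {f g : Γ → ℝ≥0∞} {b : ℝ≥0∞}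
    (h : f ≤ g + b • (g ⋆ f)) (n : ℕ) :
    f ≤ ∑ j ∈ Finset.range n, b ^ j • convPow g (j + 1) + b ^ n • (convPow g n ⋆ f) := by
  induction n with
  | zero => simp [convPow, single_conv]
  | succ n ih =>
    calc f ≤ ∑ j ∈ Finset.range n, b ^ j • convPow g (j + 1) + b ^ n • (convPow g n ⋆ f) := ih
      _ ≤ ∑ j ∈ Finset.range n, b ^ j • convPow g (j + 1)
            + b ^ n • (convPow g n ⋆ (g + b • (g ⋆ f))) := by
          gcongr
          exact conv_mono le_rfl h
      _ = ∑ j ∈ Finset.range (n + 1), b ^ j • convPow g (j + 1)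
            + b ^ (n + 1) • (convPow g (n + 1) ⋆ f) := by
          rw [Finset.sum_range_succ, conv_add, conv_smul, smul_add, smul_smul, ← pow_succ,
            ← conv_assoc, convPow_add, convPow_one, add_assoc]

end Convolution

section Lattice

variable {d : ℕ}

lemma supNorm_eq_norm (x : Fin d → ℤ) : supNorm x = ‖x‖ := by
  rw [supNorm, Pi.norm_def, ← NNReal.coe_natCast, NNReal.coe_inj,
    Finset.apply_sup_eq_sup_comp_of_linearOrder _ (fun _ _ h => Nat.cast_le.2 h) (by simp)]
  exact Finset.sup_congr rfl fun i _ => by simp [NNReal.natCast_natAbs]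

lemma abs_coord_le_norm (x : Fin d → ℤ) (i : Fin d) : |(x i : ℝ)| ≤ ‖x‖ := by
  rw [← Int.norm_eq_abs]
  exact norm_le_pi_norm x i

lemma exists_abs_coord_eq_norm [NeZero d] (x : Fin d → ℤ) : ∃ i, |(x i : ℝ)| = ‖x‖ := by
  obtain ⟨i, -, hi⟩ := Finset.exists_mem_eq_sup Finset.univ Finset.univ_nonempty (‖x ·‖₊)
  exact ⟨i, by rw [Pi.norm_def, hi, coe_nnnorm, Int.norm_eq_abs]⟩

lemma exp_mul_norm_le_sum_cosh [NeZero d] (a : ℝ) (x : Fin d → ℤ) :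
    Real.exp (a * ‖x‖) ≤ ∑ i, 2 * Real.cosh (a * x i) := by
  obtain ⟨i, hi⟩ := exists_abs_coord_eq_norm x
  calc Real.exp (a * ‖x‖) ≤ 2 * Real.cosh (a * ‖x‖) := by
        rw [Real.cosh_eq]
        linarith [Real.exp_pos (-(a * ‖x‖))]
    _ = 2 * Real.cosh (a * x i) := by
        rw [← Real.cosh_abs, abs_mul, abs_norm, ← hi, ← abs_mul, Real.cosh_abs]
    _ ≤ ∑ i, 2 * Real.cosh (a * x i) :=
        Finset.single_le_sum (f := fun i => 2 * Real.cosh (a * x i))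
          (fun j _ => by positivity) (Finset.mem_univ i)

lemma sqNorm_nonneg (x : Fin d → ℤ) : 0 ≤ sqNorm x :=
  Finset.sum_nonneg fun _ _ => sq_nonneg _

lemma sqNorm_add_add_sqNorm_sub (x y : Fin d → ℤ) :
    sqNorm (x + y) + sqNorm (x - y) = 2 * (sqNorm x + sqNorm y) := by
  unfold sqNorm
  rw [← Finset.sum_add_distrib, ← Finset.sum_add_distrib, Finset.mul_sum]
  refine Finset.sum_congr rfl fun i _ => ?_
  push_cast [Pi.add_apply, Pi.sub_apply]
  ring

lemma sqNorm_le_mul_norm_sq (x : Fin d → ℤ) : sqNorm x ≤ d * ‖x‖ ^ 2 := by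
  calc sqNorm x ≤ ∑ _i : Fin d, ‖x‖ ^ 2 := Finset.sum_le_sum fun i _ => by
        rw [← sq_abs]
        exact pow_le_pow_left₀ (abs_nonneg _) (abs_coord_le_norm x i) 2
    _ = d * ‖x‖ ^ 2 := by simp

lemma tsum_prod_coord {α : Type*} (f : α → ℝ≥0∞) (n : ℕ) :
    ∑' x : Fin n → α, ∏ i, f (x i) = (∑' a, f a) ^ n := by
  induction n with
  | zero => simp
  | succ n ih =>
    rw [← (Fin.consEquiv (fun _ => α)).tsum_eq, ENNReal.tsum_prod', pow_succ']
    simp only [Fin.consEquiv_apply, Fin.prod_univ_succ, Fin.cons_zero, Fin.cons_succ,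
      ENNReal.tsum_mul_left, ih, ENNReal.tsum_mul_right]

lemma tsum_exp_neg_mul_abs_ne_top {a : ℝ} (ha : 0 < a) :
    ∑' m : ℤ, ENNReal.ofReal (Real.exp (-a * |(m : ℝ)|)) ≠ ⊤ := by
  have hnat : Summable fun n : ℕ => Real.exp (-a * (n : ℝ)) := by
    simpa [mul_comm] using Real.summable_exp_nat_mul_iff.2 (neg_lt_zero.2 ha)
  have hint : Summable fun m : ℤ => Real.exp (-a * |(m : ℝ)|) := by
    refine Summable.of_nat_of_neg ?_ ?_ <;> simpa using hnat
  exact hint.tsum_ofReal_ne_top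

lemma tsum_exp_neg_mul_norm_ne_top {a : ℝ} (ha : 0 < a) :
    ∑' x : Fin d → ℤ, ENNReal.ofReal (Real.exp (-a * ‖x‖)) ≠ ⊤ := by
  rcases Nat.eq_zero_or_pos d with rfl | hd
  · simp
  have hprod (x : Fin d → ℤ) : ENNReal.ofReal (Real.exp (-a * ‖x‖))
      ≤ ∏ i, ENNReal.ofReal (Real.exp (-(a / d) * |(x i : ℝ)|)) := by
    rw [← ENNReal.ofReal_prod_of_nonneg fun i _ => (Real.exp_pos _).le, ← Real.exp_sum,
      ← Finset.mul_sum]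
    refine ENNReal.ofReal_le_ofReal (Real.exp_le_exp.2 ?_)
    have hsum : ∑ i, |(x i : ℝ)| ≤ d * ‖x‖ := by
      simpa using Finset.sum_le_card_nsmul Finset.univ _ _ fun i _ => abs_coord_le_norm x i
    have hscaled := mul_le_mul_of_nonneg_left hsum (by positivity : 0 ≤ a / d)
    have hcancel : a / d * (d * ‖x‖) = a * ‖x‖ := by field_simp
    linarith
  refine ne_top_of_le_ne_top ?_ (ENNReal.tsum_le_tsum hprod)
  rw [tsum_prod_coord fun m : ℤ => ENNReal.ofReal (Real.exp (-(a / d) * |(m : ℝ)|))]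
  exact ENNReal.pow_ne_top (tsum_exp_neg_mul_abs_ne_top (by positivity))

end Lattice

section Moments

variable {d : ℕ}

/-- The second moment of a measure on `ℤ^d` given by its point masses, for the Euclidean norm. -/
def secondMoment (f : (Fin d → ℤ) → ℝ≥0∞) : ℝ≥0∞ :=
  ∑' x, ENNReal.ofReal (sqNorm x) * f x

/-- The moment generating function of the `i`-th coordinate at `s`, for a measure on `ℤ^d` given
by its point masses. -/
def expMoment (i : Fin d) (s : ℝ) (f : (Fin d → ℤ) → ℝ≥0∞) : ℝ≥0∞ :=
  ∑' x, ENNReal.ofReal (Real.exp (s * x i)) * f x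

lemma ofReal_exp_mul_coord_add (i : Fin d) (s : ℝ) (x y : Fin d → ℤ) :
    ENNReal.ofReal (Real.exp (s * ((x + y) i : ℤ)))
      = ENNReal.ofReal (Real.exp (s * x i)) * ENNReal.ofReal (Real.exp (s * y i)) := by
  rw [Pi.add_apply, Int.cast_add, mul_add, Real.exp_add, ENNReal.ofReal_mul (Real.exp_pos _).le]

lemma expMoment_convPow (i : Fin d) (s : ℝ) (f : (Fin d → ℤ) → ℝ≥0∞) (n : ℕ) :
    expMoment i s (convPow f n) = expMoment i s f ^ n :=
  tsum_mul_convPow_of_map_add (by simp) (ofReal_exp_mul_coord_add i s) f n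

lemma expMoment_mono (i : Fin d) (s : ℝ) {f g : (Fin d → ℤ) → ℝ≥0∞} (h : f ≤ g) :
    expMoment i s f ≤ expMoment i s g :=
  ENNReal.tsum_le_tsum fun x => mul_le_mul' le_rfl (h x)

lemma expMoment_smul (i : Fin d) (s : ℝ) (a : ℝ≥0∞) (f : (Fin d → ℤ) → ℝ≥0∞) :
    expMoment i s (a • f) = a * expMoment i s f := by
  simp only [expMoment, Pi.smul_apply, smul_eq_mul, ← ENNReal.tsum_mul_left, mul_left_comm]

lemma secondMoment_mono {f g : (Fin d → ℤ) → ℝ≥0∞} (h : f ≤ g) :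
    secondMoment f ≤ secondMoment g :=
  ENNReal.tsum_le_tsum fun x => mul_le_mul' le_rfl (h x)

lemma secondMoment_add (f g : (Fin d → ℤ) → ℝ≥0∞) :
    secondMoment (f + g) = secondMoment f + secondMoment g := by
  simp only [secondMoment, Pi.add_apply, mul_add, ENNReal.tsum_add]

lemma secondMoment_smul (a : ℝ≥0∞) (f : (Fin d → ℤ) → ℝ≥0∞) :
    secondMoment (a • f) = a * secondMoment f := by
  simp only [secondMoment, Pi.smul_apply, smul_eq_mul, ← ENNReal.tsum_mul_left, mul_left_comm]

lemma tsum_sqNorm_add_mul_of_even {g : (Fin d → ℤ) → ℝ≥0∞} (hg : ∀ x, g (-x) = g x)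
    (y : Fin d → ℤ) :
    ∑' z, ENNReal.ofReal (sqNorm (y + z)) * g z
      = ENNReal.ofReal (sqNorm y) * ∑' z, g z + secondMoment g := by
  have hreflect : ∑' z, ENNReal.ofReal (sqNorm (y + z)) * g z
      = ∑' z, ENNReal.ofReal (sqNorm (y - z)) * g z := by
    rw [← (Equiv.neg _).tsum_eq]
    exact tsum_congr fun z => by simp [hg, sub_eq_add_neg]
  refine (ENNReal.mul_right_inj (a := 2) (by norm_num) (by norm_num)).1 ?_
  rw [two_mul]
  nth_rewrite 2 [hreflect]
  rw [← ENNReal.tsum_add, secondMoment, ← ENNReal.tsum_mul_left, ← ENNReal.tsum_add,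
    ← ENNReal.tsum_mul_left]
  refine tsum_congr fun z => ?_
  rw [← add_mul, ← ENNReal.ofReal_add (sqNorm_nonneg _) (sqNorm_nonneg _),
    sqNorm_add_add_sqNorm_sub, ENNReal.ofReal_mul two_pos.le,
    ENNReal.ofReal_add (sqNorm_nonneg _) (sqNorm_nonneg _), ENNReal.ofReal_ofNat]
  ring

lemma secondMoment_conv (f : (Fin d → ℤ) → ℝ≥0∞) {g : (Fin d → ℤ) → ℝ≥0∞}
    (hg : ∀ x, g (-x) = g x) :
    secondMoment (f ⋆ g) = secondMoment f * ∑' x, g x + (∑' x, f x) * secondMoment g := by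
  rw [secondMoment, tsum_mul_conv, secondMoment, ← ENNReal.tsum_mul_right,
    ← ENNReal.tsum_mul_right, ← ENNReal.tsum_add]
  refine tsum_congr fun y => ?_
  simp only [mul_left_comm _ (f y), ENNReal.tsum_mul_left, tsum_sqNorm_add_mul_of_even hg]
  ring

lemma tsum_ne_top_of_le_exp {f : (Fin d → ℤ) → ℝ≥0∞} {C c : ℝ} (hc : 0 < c)
    (h : ∀ x, f x ≤ ENNReal.ofReal (C * Real.exp (-c * ‖x‖))) : ∑' x, f x ≠ ⊤ := by
  refine ne_top_of_le_ne_top ?_ (ENNReal.tsum_le_tsum h)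
  simp only [ENNReal.ofReal_mul' (Real.exp_pos _).le, ENNReal.tsum_mul_left]
  exact ENNReal.mul_ne_top ENNReal.ofReal_ne_top (tsum_exp_neg_mul_norm_ne_top hc)

lemma sq_mul_exp_neg_mul_le {c : ℝ} (hc : 0 < c) {t : ℝ} (ht : 0 ≤ t) :
    t ^ 2 * Real.exp (-c * t) ≤ 8 / c ^ 2 * Real.exp (-(c / 2) * t) := by
  have hquad : (c / 2 * t) ^ 2 / 2 ≤ Real.exp (c / 2 * t) := by
    have := Real.quadratic_le_exp_of_nonneg (x := c / 2 * t) (by positivity)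
    nlinarith [mul_nonneg hc.le ht]
  calc t ^ 2 * Real.exp (-c * t)
      = 8 / c ^ 2 * ((c / 2 * t) ^ 2 / 2) * Real.exp (-c * t) := by field_simp; norm_num
    _ ≤ 8 / c ^ 2 * Real.exp (c / 2 * t) * Real.exp (-c * t) := by gcongr
    _ = 8 / c ^ 2 * Real.exp (-(c / 2) * t) := by rw [mul_assoc, ← Real.exp_add]; ring_nf

lemma secondMoment_ne_top_of_le_exp {f : (Fin d → ℤ) → ℝ≥0∞} {C c : ℝ} (hC : 0 ≤ C) (hc : 0 < c)
    (h : ∀ x, f x ≤ ENNReal.ofReal (C * Real.exp (-c * ‖x‖))) : secondMoment f ≠ ⊤ := by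
  refine tsum_ne_top_of_le_exp (C := d * C * (8 / c ^ 2)) (half_pos hc) fun x => ?_
  refine (mul_le_mul' le_rfl (h x)).trans ?_
  rw [← ENNReal.ofReal_mul (sqNorm_nonneg x)]
  refine ENNReal.ofReal_le_ofReal ?_
  calc sqNorm x * (C * Real.exp (-c * ‖x‖))
      ≤ d * ‖x‖ ^ 2 * (C * Real.exp (-c * ‖x‖)) := by gcongr; exact sqNorm_le_mul_norm_sq x
    _ = d * C * (‖x‖ ^ 2 * Real.exp (-c * ‖x‖)) := by ring
    _ ≤ d * C * (8 / c ^ 2 * Real.exp (-(c / 2) * ‖x‖)) :=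
        mul_le_mul_of_nonneg_left (sq_mul_exp_neg_mul_le hc (norm_nonneg x)) (by positivity)
    _ = d * C * (8 / c ^ 2) * Real.exp (-(c / 2) * ‖x‖) := by ring

end Moments

section Symmetry

variable {d : ℕ}

/-- The lattice symmetry permuting the coordinates by `π` and flipping the signs marked by `e`, as
in `IsSymmFun`. -/
def signedPerm (π : Equiv.Perm (Fin d)) (e : Fin d → Bool) : (Fin d → ℤ) ≃+ (Fin d → ℤ) where
  toFun x i := (if e i then -1 else 1) * x (π i)
  invFun y i := (if e (π.symm i) then -1 else 1) * y (π.symm i)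
  left_inv x := by
    funext i
    by_cases h : e (π.symm i) <;> simp [h]
  right_inv x := by
    funext i
    by_cases h : e i <;> simp [h]
  map_add' x y := funext fun _ => mul_add _ _ _

lemma IsSymmFun.conv {f g : (Fin d → ℤ) → ℝ≥0∞} (hf : IsSymmFun f) (hg : IsSymmFun g) :
    IsSymmFun (f ⋆ g) := by
  intro π e x
  change (f ⋆ g) (signedPerm π e x) = (f ⋆ g) x
  unfold Blackbox.conv
  rw [← (signedPerm π e).toEquiv.tsum_eq]
  refine tsum_congr fun y => ?_
  change f (signedPerm π e y) * g (signedPerm π e x - signedPerm π e y) = _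
  rw [← map_sub]
  exact congrArg₂ _ (hf π e y) (hg π e _)

lemma IsSymmFun.map_neg {α : Type*} {f : (Fin d → ℤ) → α} (hf : IsSymmFun f) (x : Fin d → ℤ) :
    f (-x) = f x := by
  rw [← hf 1 (fun _ => true) x]
  congr 1
  funext i
  simp

end Symmetry

section Basics

variable {d : ℕ} {c₀ : ℝ}

/-- The kernel `J`, with values in `[0, ∞]`. -/
def AdmissibleKernel.weight (K : AdmissibleKernel d c₀) (x : Fin d → ℤ) : ℝ≥0∞ :=
  ENNReal.ofReal (K.J x)

lemma AdmissibleKernel.isSymmFun_weight (K : AdmissibleKernel d c₀) : IsSymmFun K.weight :=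
  fun π e x => congrArg ENNReal.ofReal (K.symm π e x)

lemma AdmissibleKernel.tsum_weight (K : AdmissibleKernel d c₀) : ∑' x, K.weight x = 1 := by
  simp only [weight]
  rw [← ENNReal.ofReal_tsum_of_nonneg K.nonneg K.summable, K.norm_one, ENNReal.ofReal_one]

lemma AdmissibleKernel.sigma_nonneg (K : AdmissibleKernel d c₀) : 0 ≤ K.sigma :=
  Real.sqrt_nonneg _

lemma AdmissibleKernel.sigma_sq (K : AdmissibleKernel d c₀) :
    K.sigma ^ 2 = ∑' x, sqNorm x * K.J x :=
  Real.sq_sqrt (tsum_nonneg fun x => mul_nonneg (sqNorm_nonneg x) (K.nonneg x))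

lemma AdmissibleKernel.secondMoment_weight (K : AdmissibleKernel d c₀) :
    secondMoment K.weight = ENNReal.ofReal (K.sigma ^ 2) := by
  rw [sigma_sq, ENNReal.ofReal_tsum_of_nonneg
    (fun x => mul_nonneg (sqNorm_nonneg x) (K.nonneg x)) K.summable_sq]
  exact tsum_congr fun x => (ENNReal.ofReal_mul (sqNorm_nonneg x)).symm

lemma AdmissibleKernel.R_le_sigma_div (K : AdmissibleKernel d c₀) (hc : 0 < c₀) :
    K.R ≤ K.sigma / c₀ :=
  (le_div_iff₀' hc).2 K.sigma_lower

lemma AdmissibleKernel.sigma_pos (K : AdmissibleKernel d c₀) (hc : 0 < c₀) : 0 < K.sigma :=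
  (mul_pos hc (zero_lt_one.trans_le K.R_ge_one)).trans_le K.sigma_lower

lemma AdmissibleKernel.sigma_sq_le (K : AdmissibleKernel d c₀) :
    K.sigma ^ 2 ≤ d * K.R ^ 2 := by
  have hbound (x : Fin d → ℤ) : sqNorm x * K.J x ≤ d * K.R ^ 2 * K.J x := by
    rcases (K.nonneg x).eq_or_lt with hx | hx
    · simp [← hx]
    · have hR := K.range_le x hx
      rw [supNorm_eq_norm] at hR
      gcongr
      exact (sqNorm_le_mul_norm_sq x).trans (by gcongr)
  calc K.sigma ^ 2 = ∑' x, sqNorm x * K.J x := K.sigma_sq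
    _ ≤ ∑' x, d * K.R ^ 2 * K.J x := K.summable_sq.tsum_le_tsum hbound (K.summable.mul_left _)
    _ = d * K.R ^ 2 := by rw [tsum_mul_left, K.norm_one, mul_one]

namespace Model

/-- The parameter `β` lies in `[0, β_c)`. -/
def Subcritical (M : Model d c₀) (β : ℝ) : Prop := 0 ≤ β ∧ ENNReal.ofReal β < M.βc

/-- The susceptibility as a real number. -/
def susc (M : Model d c₀) (β : ℝ) : ℝ := (M.chi β).toReal

/-- The second moment `ξ(β)² χ(β)` of `F_β` as a real number. -/
def spread (M : Model d c₀) (β : ℝ) : ℝ := (secondMoment (M.F β)).toReal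

variable (M : Model d c₀)

lemma F_eq_conv (β : ℝ) : M.F β = M.K.weight ⋆ M.G β := rfl

lemma isSymmFun_F (β : ℝ) : IsSymmFun (M.F β) := M.K.isSymmFun_weight.conv (M.symm β)

lemma tsum_G (β : ℝ) : ∑' x, M.G β x = M.chi β := rfl

lemma tsum_F (β : ℝ) : ∑' x, M.F β x = M.chi β := by
  rw [F_eq_conv, tsum_conv, M.K.tsum_weight, one_mul, chi]

lemma secondMoment_F (β : ℝ) :
    secondMoment (M.F β) = secondMoment (M.G β) + ENNReal.ofReal (M.sigma ^ 2) * M.chi β := by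
  rw [F_eq_conv, secondMoment_conv _ (M.symm β).map_neg, M.K.tsum_weight,
    M.K.secondMoment_weight, one_mul, add_comm, chi, sigma]

lemma G_zero : M.G 0 = Pi.single 0 1 := by
  funext x
  rw [M.init, Pi.single_apply]

lemma F_zero : M.F 0 = M.K.weight := by rw [F_eq_conv, G_zero, conv_single]

lemma chi_zero : M.chi 0 = 1 := by rw [← tsum_F, F_zero, M.K.tsum_weight]

lemma susc_zero : M.susc 0 = 1 := by rw [susc, chi_zero, ENNReal.toReal_one]

lemma xi_nonneg (β : ℝ) : 0 ≤ M.xi β := Real.sqrt_nonneg _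

lemma xi_zero : M.xi 0 = M.sigma := by
  rw [xi, xiSq, chi_zero, div_one, F_zero]
  change Real.sqrt (secondMoment M.K.weight).toReal = M.K.sigma
  rw [M.K.secondMoment_weight, ENNReal.toReal_ofReal (sq_nonneg _),
    Real.sqrt_sq M.K.sigma_nonneg]

lemma susc_nonneg (β : ℝ) : 0 ≤ M.susc β := ENNReal.toReal_nonneg

lemma spread_nonneg (β : ℝ) : 0 ≤ M.spread β := ENNReal.toReal_nonneg

variable {M} {β β' : ℝ}

lemma G_mono (h : ENNReal.ofReal β ≤ M.βc) (h0 : 0 ≤ β') (hle : β' ≤ β) : M.G β' ≤ M.G β :=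
  fun x => M.mono x h0 hle h

lemma F_mono (h : ENNReal.ofReal β ≤ M.βc) (h0 : 0 ≤ β') (hle : β' ≤ β) : M.F β' ≤ M.F β :=
  conv_mono le_rfl (G_mono h h0 hle)

lemma one_le_chi (h0 : 0 ≤ β) (h : ENNReal.ofReal β ≤ M.βc) : 1 ≤ M.chi β :=
  M.chi_zero ▸ ENNReal.tsum_le_tsum (G_mono h le_rfl h0)

namespace Subcritical

lemma of_le (h : M.Subcritical β) (h0 : 0 ≤ β') (hle : β' ≤ β) : M.Subcritical β' :=
  ⟨h0, (ENNReal.ofReal_le_ofReal hle).trans_lt h.2⟩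

lemma chi_ne_top (h : M.Subcritical β) : M.chi β ≠ ⊤ := by
  obtain ⟨C, -, c, hc, hdecay⟩ := M.expDecay h.1 h.2
  simp only [supNorm_eq_norm] at hdecay
  exact tsum_ne_top_of_le_exp hc hdecay

lemma secondMoment_G_ne_top (h : M.Subcritical β) : secondMoment (M.G β) ≠ ⊤ := by
  obtain ⟨C, hC, c, hc, hdecay⟩ := M.expDecay h.1 h.2
  simp only [supNorm_eq_norm] at hdecay
  exact secondMoment_ne_top_of_le_exp hC.le hc hdecay

lemma secondMoment_F_ne_top (h : M.Subcritical β) : secondMoment (M.F β) ≠ ⊤ := by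
  rw [secondMoment_F]
  exact ENNReal.add_ne_top.2
    ⟨h.secondMoment_G_ne_top, ENNReal.mul_ne_top ENNReal.ofReal_ne_top h.chi_ne_top⟩

lemma ofReal_susc (h : M.Subcritical β) : ENNReal.ofReal (M.susc β) = M.chi β :=
  ENNReal.ofReal_toReal h.chi_ne_top

lemma ofReal_spread (h : M.Subcritical β) :
    ENNReal.ofReal (M.spread β) = secondMoment (M.F β) :=
  ENNReal.ofReal_toReal h.secondMoment_F_ne_top

lemma one_le_susc (h : M.Subcritical β) : 1 ≤ M.susc β :=
  ENNReal.toReal_mono h.chi_ne_top (one_le_chi h.1 h.2.le)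

lemma susc_pos (h : M.Subcritical β) : 0 < M.susc β := zero_lt_one.trans_le h.one_le_susc

lemma spread_eq (h : M.Subcritical β) :
    M.spread β = (secondMoment (M.G β)).toReal + M.sigma ^ 2 * M.susc β := by
  rw [spread, secondMoment_F, ENNReal.toReal_add h.secondMoment_G_ne_top
    (ENNReal.mul_ne_top ENNReal.ofReal_ne_top h.chi_ne_top), ENNReal.toReal_mul,
    ENNReal.toReal_ofReal (sq_nonneg _), susc]

lemma sigma_sq_mul_susc_le_spread (h : M.Subcritical β) :
    M.sigma ^ 2 * M.susc β ≤ M.spread β := by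
  rw [h.spread_eq]
  exact le_add_of_nonneg_left ENNReal.toReal_nonneg

lemma spread_pos (h : M.Subcritical β) (hc : 0 < c₀) : 0 < M.spread β :=
  (mul_pos (pow_pos (M.K.sigma_pos hc) 2) h.susc_pos).trans_le h.sigma_sq_mul_susc_le_spread

lemma xiSq_eq (h : M.Subcritical β) : M.xiSq β = ENNReal.ofReal (M.spread β / M.susc β) := by
  rw [ENNReal.ofReal_div_of_pos h.susc_pos, h.ofReal_susc, h.ofReal_spread, xiSq, secondMoment]

lemma xi_eq (h : M.Subcritical β) : M.xi β = Real.sqrt (M.spread β / M.susc β) := by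
  rw [xi, h.xiSq_eq, ENNReal.toReal_ofReal (div_nonneg (M.spread_nonneg β) (M.susc_nonneg β))]

lemma xi_sq (h : M.Subcritical β) : M.xi β ^ 2 = M.spread β / M.susc β := by
  rw [h.xi_eq, Real.sq_sqrt (div_nonneg (M.spread_nonneg β) (M.susc_nonneg β))]

lemma sigma_le_xi (h : M.Subcritical β) : M.sigma ≤ M.xi β := by
  rw [h.xi_eq]
  exact Real.le_sqrt_of_sq_le ((le_div_iff₀ h.susc_pos).2 h.sigma_sq_mul_susc_le_spread)

lemma xi_pos (h : M.Subcritical β) (hc : 0 < c₀) : 0 < M.xi β :=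
  (M.K.sigma_pos hc).trans_le h.sigma_le_xi

lemma susc_mono (h : M.Subcritical β) (h0 : 0 ≤ β') (hle : β' ≤ β) : M.susc β' ≤ M.susc β :=
  ENNReal.toReal_mono h.chi_ne_top (ENNReal.tsum_le_tsum (G_mono h.2.le h0 hle))

lemma spread_mono (h : M.Subcritical β) (h0 : 0 ≤ β') (hle : β' ≤ β) :
    M.spread β' ≤ M.spread β :=
  ENNReal.toReal_mono h.secondMoment_F_ne_top (secondMoment_mono (F_mono h.2.le h0 hle))

lemma G_le_add_smul_conv (h : M.Subcritical β) (h0 : 0 ≤ β') (hle : β' ≤ β) :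
    M.G β ≤ M.G β' + ENNReal.ofReal (β - β') • (M.G β' ⋆ M.F β) := by
  intro x
  refine (M.I1 h0 hle h.2 x).trans_eq ?_
  simp only [ENNReal.tsum_prod', mul_assoc, ENNReal.tsum_mul_left]
  rfl

lemma F_le_add_smul_conv (h : M.Subcritical β) (h0 : 0 ≤ β') (hle : β' ≤ β) :
    M.F β ≤ M.F β' + ENNReal.ofReal (β - β') • (M.F β' ⋆ M.F β) :=
  calc M.F β ≤ M.K.weight ⋆ (M.G β' + ENNReal.ofReal (β - β') • (M.G β' ⋆ M.F β)) :=
        conv_mono le_rfl (h.G_le_add_smul_conv h0 hle)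
    _ = M.F β' + ENNReal.ofReal (β - β') • (M.F β' ⋆ M.F β) := by
        rw [conv_add, conv_smul, ← conv_assoc, ← F_eq_conv]

lemma susc_le_add (h : M.Subcritical β) (h0 : 0 ≤ β') (hle : β' ≤ β) :
    M.susc β ≤ M.susc β' + (β - β') * (M.susc β' * M.susc β) := by
  have h' := h.of_le h0 hle
  have hsum := ENNReal.tsum_le_tsum (h.F_le_add_smul_conv h0 hle)
  simp only [Pi.add_apply, Pi.smul_apply, smul_eq_mul, ENNReal.tsum_add, ENNReal.tsum_mul_left,
    tsum_conv, tsum_F, ← h.ofReal_susc, ← h'.ofReal_susc] at hsum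
  have hχ := M.susc_nonneg β
  have hχ' := M.susc_nonneg β'
  have hb := sub_nonneg.2 hle
  rw [← ENNReal.ofReal_mul hχ', ← ENNReal.ofReal_mul hb,
    ← ENNReal.ofReal_add hχ' (by positivity)] at hsum
  exact (ENNReal.ofReal_le_ofReal_iff (by positivity)).1 hsum

lemma spread_le_add (h : M.Subcritical β) (h0 : 0 ≤ β') (hle : β' ≤ β) :
    M.spread β
      ≤ M.spread β' + (β - β') * (M.spread β' * M.susc β + M.susc β' * M.spread β) := by
  have h' := h.of_le h0 hle
  have hmom := secondMoment_mono (h.F_le_add_smul_conv h0 hle)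
  rw [secondMoment_add, secondMoment_smul, secondMoment_conv _ (M.isSymmFun_F β).map_neg, tsum_F,
    tsum_F, ← h.ofReal_susc, ← h'.ofReal_susc, ← h.ofReal_spread, ← h'.ofReal_spread] at hmom
  have hχ := M.susc_nonneg β
  have hχ' := M.susc_nonneg β'
  have hv := M.spread_nonneg β
  have hv' := M.spread_nonneg β'
  have hb := sub_nonneg.2 hle
  rw [← ENNReal.ofReal_mul hv', ← ENNReal.ofReal_mul hχ',
    ← ENNReal.ofReal_add (by positivity) (by positivity),
    ← ENNReal.ofReal_mul hb, ← ENNReal.ofReal_add hv' (by positivity)] at hmom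
  exact (ENNReal.ofReal_le_ofReal_iff (by positivity)).1 hmom

end Subcritical
end Model

lemma continuousOn_of_monotoneOn_of_le_add_mul {f : ℝ → ℝ} {s : Set ℝ} {L : ℝ} (hL : 0 ≤ L)
    (hmono : MonotoneOn f s)
    (hlip : ∀ x ∈ s, ∀ y ∈ s, x ≤ y → f y ≤ f x + (y - x) * L) : ContinuousOn f s := by
  refine (LipschitzOnWith.of_le_add_mul ⟨L, hL⟩ fun x hx y hy => ?_).continuousOn
  change f x ≤ f y + L * dist x y
  rcases le_total x y with hxy | hxy
  · exact (hmono hx hy hxy).trans (le_add_of_nonneg_right (by positivity))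
  · rw [Real.dist_eq, abs_of_nonneg (sub_nonneg.2 hxy), mul_comm]
    exact hlip y hy x hx hxy

namespace Model.Subcritical

variable {M : Model d c₀} {b : ℝ}

lemma continuousOn_susc (h : M.Subcritical b) : ContinuousOn M.susc (Set.Icc 0 b) := by
  refine continuousOn_of_monotoneOn_of_le_add_mul (L := M.susc b * M.susc b)
    (mul_self_nonneg _) (fun x hx y hy hxy => (h.of_le hy.1 hy.2).susc_mono hx.1 hxy)
    fun x hx y hy hxy => ((h.of_le hy.1 hy.2).susc_le_add hx.1 hxy).trans ?_
  have hy0 := M.susc_nonneg y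
  have hb0 := M.susc_nonneg b
  have := sub_nonneg.2 hxy
  gcongr
  exacts [h.susc_mono hx.1 hx.2, h.susc_mono hy.1 hy.2]

lemma continuousOn_spread (h : M.Subcritical b) : ContinuousOn M.spread (Set.Icc 0 b) := by
  have hb0 := M.susc_nonneg b
  have hvb0 := M.spread_nonneg b
  refine continuousOn_of_monotoneOn_of_le_add_mul
    (L := M.spread b * M.susc b + M.susc b * M.spread b) (by positivity)
    (fun x hx y hy hxy => (h.of_le hy.1 hy.2).spread_mono hx.1 hxy)
    fun x hx y hy hxy => ((h.of_le hy.1 hy.2).spread_le_add hx.1 hxy).trans ?_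
  have hy0 := M.susc_nonneg y
  have hvy0 := M.spread_nonneg y
  have := sub_nonneg.2 hxy
  gcongr
  exacts [h.spread_mono hx.1 hx.2, h.susc_mono hy.1 hy.2, h.susc_mono hx.1 hx.2,
    h.spread_mono hy.1 hy.2]

lemma continuousOn_xi (h : M.Subcritical b) : ContinuousOn M.xi (Set.Icc 0 b) := by
  have hquot : ContinuousOn (fun t => Real.sqrt (M.spread t / M.susc t)) (Set.Icc 0 b) :=
    (h.continuousOn_spread.div h.continuousOn_susc fun t ht =>
      (h.of_le ht.1 ht.2).susc_pos.ne').sqrt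
  exact hquot.congr fun t ht => (h.of_le ht.1 ht.2).xi_eq

end Model.Subcritical
end Basics

section DifferentialInequalities

open Filter Topology

lemma hasSum_toReal_of_tsum_ne_top {α : Type*} {f : α → ℝ≥0∞} (hf : ∑' x, f x ≠ ⊤) :
    HasSum (fun x => (f x).toReal) (∑' x, f x).toReal := by
  rw [ENNReal.tsum_toReal_eq fun x => ENNReal.ne_top_of_tsum_ne_top hf x]
  exact ENNReal.hasSum_toReal hf

lemma conv_conv_apply_eq_tsum_prod {Γ : Type*} [AddCommGroup Γ] (f g h : Γ → ℝ≥0∞) (x : Γ) :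
    (f ⋆ (g ⋆ h)) x = ∑' p : Γ × Γ, f p.1 * g p.2 * h (x - p.1 - p.2) := by
  simp only [ENNReal.tsum_prod', mul_assoc, ENNReal.tsum_mul_left]
  rfl

lemma tendsto_nhdsGT_of_continuousOn_Icc {f : ℝ → ℝ} {a b t : ℝ} (hf : ContinuousOn f (Set.Icc a b))
    (hat : a ≤ t) (htb : t < b) : Tendsto f (𝓝[>] t) (𝓝 (f t)) :=
  (hf t ⟨hat, htb.le⟩).mono_left ((nhdsWithin_le_iff).2
    (Filter.mem_of_superset (Ioo_mem_nhdsGT htb) fun _ hx => ⟨hat.trans hx.1.le, hx.2.le⟩))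

lemma le_of_eventually_le_right {f : ℝ → ℝ} {a b : ℝ} (hab : a ≤ b)
    (hf : ContinuousOn f (Set.Icc a b))
    (h : ∀ t ∈ Set.Ico a b, ∀ᶠ z in 𝓝[>] t, f z ≤ f t) : f b ≤ f a := by
  refine image_le_of_liminf_slope_right_le_deriv_boundary hf (B := fun _ => f a)
    (B' := fun _ => 0) le_rfl continuousOn_const (fun t _ => hasDerivWithinAt_const ..)
    (fun t ht r hr => Eventually.frequently ?_) (Set.right_mem_Icc.2 hab)
  filter_upwards [h t ht, self_mem_nhdsWithin] with z hz htz
  rw [slope_def_field]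
  exact (div_nonpos_of_nonpos_of_nonneg (sub_nonpos.2 hz) (sub_nonneg.2 (le_of_lt htz))).trans_lt hr

variable {d : ℕ} {c₀ : ℝ}

namespace Model

/-- The error function `H_t`, with values in `[0, ∞]`. -/
def hWeight (M : Model d c₀) (t : ℝ) (x : Fin d → ℤ) : ℝ≥0∞ := ENNReal.ofReal (M.H t x)

/-- The total mass of `H_t` as a real number. -/
def hMass (M : Model d c₀) (t : ℝ) : ℝ := (∑' x, M.hWeight t x).toReal

/-- The second moment of `H_t` as a real number. -/
def hSpread (M : Model d c₀) (t : ℝ) : ℝ := (secondMoment (M.hWeight t)).toReal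

/-- The parameter `β` is subcritical and the error term satisfies `E(β) < δ`. -/
def Controlled (M : Model d c₀) (δ β : ℝ) : Prop :=
  M.Subcritical β ∧ M.E β < ENNReal.ofReal δ

variable {M : Model d c₀} {β t b r δ : ℝ}

lemma hWeight_neg (M : Model d c₀) (t : ℝ) (x : Fin d → ℤ) : M.hWeight t (-x) = M.hWeight t x := by
  rw [hWeight, M.H_symm, hWeight]

lemma hMass_nonneg (M : Model d c₀) (t : ℝ) : 0 ≤ M.hMass t := ENNReal.toReal_nonneg

lemma hSpread_nonneg (M : Model d c₀) (t : ℝ) : 0 ≤ M.hSpread t := ENNReal.toReal_nonneg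

lemma hMass_eq (M : Model d c₀) (t : ℝ) : M.hMass t = ∑' x, M.H t x := by
  rw [hMass, ENNReal.tsum_toReal_eq (f := M.hWeight t) fun x => ENNReal.ofReal_ne_top]
  exact tsum_congr fun x => ENNReal.toReal_ofReal (M.H_nonneg t x)

lemma hSpread_eq (M : Model d c₀) (t : ℝ) : M.hSpread t = ∑' x, sqNorm x * M.H t x := by
  simp only [hSpread, secondMoment, hWeight]
  rw [ENNReal.tsum_toReal_eq fun x =>
    ENNReal.mul_ne_top ENNReal.ofReal_ne_top ENNReal.ofReal_ne_top]
  refine tsum_congr fun x => ?_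
  rw [ENNReal.toReal_mul, ENNReal.toReal_ofReal (sqNorm_nonneg x),
    ENNReal.toReal_ofReal (M.H_nonneg t x)]

namespace Subcritical

lemma tsum_hWeight_ne_top (h : M.Subcritical β) : ∑' x, M.hWeight β x ≠ ⊤ := by
  obtain ⟨C, -, c, hc, hdecay⟩ := M.H_expDecay h.1 h.2
  simp only [supNorm_eq_norm] at hdecay
  exact tsum_ne_top_of_le_exp hc fun x => ENNReal.ofReal_le_ofReal (hdecay x)

lemma secondMoment_hWeight_ne_top (h : M.Subcritical β) : secondMoment (M.hWeight β) ≠ ⊤ := by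
  obtain ⟨C, hC, c, hc, hdecay⟩ := M.H_expDecay h.1 h.2
  simp only [supNorm_eq_norm] at hdecay
  exact secondMoment_ne_top_of_le_exp hC.le hc fun x => ENNReal.ofReal_le_ofReal (hdecay x)

lemma toReal_conv_sub_toReal_conv_le (h : M.Subcritical t) (x : Fin d → ℤ) :
    ((M.G t ⋆ M.F t) x).toReal - ((M.G t ⋆ (M.hWeight t ⋆ M.G t)) x).toReal ≤ M.G' t x := by
  refine le_trans (le_of_eq ?_) (M.I2 h.1 h.2 x)
  have hG : ∑' x, M.G t x ≠ ⊤ := h.chi_ne_top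
  have hGJG := conv_apply_ne_top hG (tsum_F M t ▸ h.chi_ne_top) x
  have hGHG := conv_apply_ne_top hG
    (tsum_conv (M.hWeight t) (M.G t) ▸ ENNReal.mul_ne_top h.tsum_hWeight_ne_top hG) x
  rw [F_eq_conv, conv_conv_apply_eq_tsum_prod] at hGJG
  rw [conv_conv_apply_eq_tsum_prod] at hGHG
  rw [F_eq_conv, conv_conv_apply_eq_tsum_prod, conv_conv_apply_eq_tsum_prod,
    ← ((hasSum_toReal_of_tsum_ne_top hGJG).sub (hasSum_toReal_of_tsum_ne_top hGHG)).tsum_eq]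
  refine tsum_congr fun p => ?_
  simp only [ENNReal.toReal_mul, AdmissibleKernel.weight, hWeight,
    ENNReal.toReal_ofReal (M.K.nonneg _), ENNReal.toReal_ofReal (M.H_nonneg _ _)]
  ring

/-- By monotonicity in `β`, differentiating a finite partial sum is enough for a lower bound. -/
lemma eventually_mul_le_sub_tsum {w : (Fin d → ℤ) → ℝ≥0∞} (h : M.Subcritical b) (h0 : 0 ≤ t)
    (htb : t < b) (hG : ∀ z, M.Subcritical z → ∑' x, w x * M.G z x ≠ ⊤)
    (hGF : ∑' x, w x * (M.G t ⋆ M.F t) x ≠ ⊤)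
    (hGHG : ∑' x, w x * (M.G t ⋆ (M.hWeight t ⋆ M.G t)) x ≠ ⊤)
    (hr : r < (∑' x, w x * (M.G t ⋆ M.F t) x).toReal
      - (∑' x, w x * (M.G t ⋆ (M.hWeight t ⋆ M.G t)) x).toReal) :
    ∀ᶠ z in 𝓝[>] t, r * (z - t)
      ≤ (∑' x, w x * M.G z x).toReal - (∑' x, w x * M.G t x).toReal := by
  have ht : M.Subcritical t := h.of_le h0 htb.le
  obtain ⟨S, hS⟩ := (((hasSum_toReal_of_tsum_ne_top hGF).sub
    (hasSum_toReal_of_tsum_ne_top hGHG)).eventually_const_lt hr).exists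
  have hderiv_gt : r < ∑ x ∈ S, (w x).toReal * M.G' t x := by
    refine hS.trans_le (Finset.sum_le_sum fun x _ => ?_)
    rw [ENNReal.toReal_mul, ENNReal.toReal_mul, ← mul_sub]
    exact mul_le_mul_of_nonneg_left (ht.toReal_conv_sub_toReal_conv_le x) ENNReal.toReal_nonneg
  have hderiv : HasDerivWithinAt (fun z => ∑ x ∈ S, (w x).toReal * (M.G z x).toReal)
      (∑ x ∈ S, (w x).toReal * M.G' t x) (Set.Ioi t) t :=
    HasDerivWithinAt.fun_sum fun x _ =>
      ((M.deriv x ht.1 ht.2).mono fun z hz => h0.trans (le_of_lt hz)).const_mul _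
  rw [hasDerivWithinAt_iff_tendsto_slope' (by simp)] at hderiv
  filter_upwards [hderiv.eventually (lt_mem_nhds hderiv_gt), Ioo_mem_nhdsGT htb] with z hslope hz
  have hzsub : M.Subcritical z := h.of_le (h0.trans hz.1.le) hz.2.le
  rw [slope_def_field, lt_div_iff₀ (sub_pos.2 hz.1), ← Finset.sum_sub_distrib] at hslope
  refine hslope.le.trans ?_
  simp only [← ENNReal.toReal_mul]
  refine sum_le_hasSum S (fun x _ => sub_nonneg.2 (ENNReal.toReal_mono ?_ ?_))
    ((hasSum_toReal_of_tsum_ne_top (hG z hzsub)).sub (hasSum_toReal_of_tsum_ne_top (hG t ht)))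
  · exact ENNReal.ne_top_of_tsum_ne_top (hG z hzsub) x
  · exact mul_le_mul' le_rfl (G_mono hzsub.2.le h0 hz.1.le x)

lemma log_susc_sub_le (h : M.Subcritical b) {a : ℝ} (h0 : 0 ≤ a) (hab : a ≤ b) :
    Real.log (M.susc b) - Real.log (M.susc a) ≤ M.susc b * (b - a) := by
  have hχa := (h.of_le h0 hab).susc_pos
  rw [← Real.log_div h.susc_pos.ne' hχa.ne']
  refine (Real.log_le_sub_one_of_pos (div_pos h.susc_pos hχa)).trans ?_
  rw [div_sub_one hχa.ne', div_le_iff₀ hχa]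
  linarith [h.susc_le_add h0 hab]

end Subcritical

namespace Controlled

lemma of_le {β' : ℝ} (h : M.Controlled δ β) (h0 : 0 ≤ β') (hle : β' ≤ β) : M.Controlled δ β' :=
  ⟨h.1.of_le h0 hle, lt_of_le_of_lt (biSup_mono fun _ ht => ⟨ht.1, ht.2.trans hle⟩) h.2⟩

lemma pos (h : M.Controlled δ β) : 0 < δ := ENNReal.ofReal_pos.1 (pos_of_gt h.2)

lemma hMass_add_hSpread_div_xiSq_le (h : M.Controlled δ β) :
    ENNReal.ofReal (M.hMass β) + ENNReal.ofReal (M.hSpread β) / M.xiSq β ≤ ENNReal.ofReal δ := by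
  rw [hMass_eq, hSpread_eq]
  exact (le_biSup (fun t => ENNReal.ofReal (∑' x, M.H t x) +
    ENNReal.ofReal (∑' x, sqNorm x * M.H t x) / M.xiSq t)
    (Set.right_mem_Icc.2 h.1.1)).trans h.2.le

lemma hMass_le (h : M.Controlled δ β) : M.hMass β ≤ δ :=
  (ENNReal.ofReal_le_ofReal_iff h.pos.le).1
    (le_self_add.trans h.hMass_add_hSpread_div_xiSq_le)

lemma hMass_mul_spread_add_le (h : M.Controlled δ β) (hc : 0 < c₀) :
    M.hMass β * M.spread β + M.hSpread β * M.susc β ≤ δ * M.spread β := by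
  have hχ := h.1.susc_pos
  have hv := h.1.spread_pos hc
  have hS := M.hSpread_nonneg β
  have hle := h.hMass_add_hSpread_div_xiSq_le
  rw [h.1.xiSq_eq, ← ENNReal.ofReal_div_of_pos (by positivity),
    ← ENNReal.ofReal_add (M.hMass_nonneg β) (by positivity),
    ENNReal.ofReal_le_ofReal_iff h.pos.le] at hle
  calc M.hMass β * M.spread β + M.hSpread β * M.susc β
      = (M.hMass β + M.hSpread β / (M.spread β / M.susc β)) * M.spread β := by field_simp
    _ ≤ δ * M.spread β := by gcongr

lemma eventually_mul_le_susc_sub (h : M.Controlled δ b) (h0 : 0 ≤ t) (htb : t < b)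
    (hr : r < (1 - δ) * M.susc t ^ 2) :
    ∀ᶠ z in 𝓝[>] t, r * (z - t) ≤ M.susc z - M.susc t := by
  have ht := h.of_le h0 htb.le
  have hχ := ht.1.chi_ne_top
  have hH := ht.1.tsum_hWeight_ne_top
  have hdini := h.1.eventually_mul_le_sub_tsum (w := fun _ => 1) (r := r) h0 htb
  simp only [one_mul, tsum_conv, tsum_F, tsum_G] at hdini
  refine hdini (fun z hz => hz.chi_ne_top) (by finiteness) (by finiteness) (hr.trans_le ?_)
  simp only [ENNReal.toReal_mul]
  change _ ≤ M.susc t * M.susc t - M.susc t * (M.hMass t * M.susc t)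
  nlinarith [sq_nonneg (M.susc t), ht.hMass_le]

lemma mul_susc_mul_spread_le (h : M.Controlled δ t) (hc : 0 < c₀) {g : ℝ}
    (hg : g = (secondMoment (M.G t)).toReal) :
    (2 - 2 * δ) * (M.susc t * M.spread t)
      ≤ g * M.susc t + M.susc t * M.spread t + M.sigma ^ 2 * (M.susc t * M.susc t)
        - (((g * M.hMass t + M.susc t * M.hSpread t) * M.susc t + M.susc t * M.hMass t * g)
          + M.sigma ^ 2 * (M.susc t * M.hMass t * M.susc t)) := by
  have hspread : M.spread t = g + M.sigma ^ 2 * M.susc t := hg ▸ h.1.spread_eq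
  have hcontrol := h.hMass_mul_spread_add_le hc
  have hle : M.hMass t * g ≤ M.hMass t * M.spread t :=
    mul_le_mul_of_nonneg_left (hspread ▸ le_add_of_nonneg_right
      (mul_nonneg (sq_nonneg _) (M.susc_nonneg t))) (M.hMass_nonneg t)
  have hHχ := mul_nonneg (M.hSpread_nonneg t) (M.susc_nonneg t)
  calc (2 - 2 * δ) * (M.susc t * M.spread t)
      = M.susc t * (2 * M.spread t - 2 * (δ * M.spread t)) := by ring
    _ ≤ M.susc t * (2 * M.spread t
          - (M.hMass t * M.spread t + M.hMass t * g + M.hSpread t * M.susc t)) :=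
        mul_le_mul_of_nonneg_left (by linarith) (M.susc_nonneg t)
    _ = _ := by linear_combination (M.susc t - M.hMass t * M.susc t) * hspread

lemma tsum_sqNorm_add_mul (s : ℝ≥0∞) (f : (Fin d → ℤ) → ℝ≥0∞) :
    ∑' x, (ENNReal.ofReal (sqNorm x) + s) * f x = secondMoment f + s * ∑' x, f x := by
  simp only [add_mul, ENNReal.tsum_add, ENNReal.tsum_mul_left, secondMoment]

lemma eventually_mul_le_spread_sub (h : M.Controlled δ b) (hc : 0 < c₀) (h0 : 0 ≤ t) (htb : t < b)
    (hr : r < (2 - 2 * δ) * (M.susc t * M.spread t)) :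
    ∀ᶠ z in 𝓝[>] t, r * (z - t) ≤ M.spread z - M.spread t := by
  have ht := h.of_le h0 htb.le
  have hχ := ht.1.chi_ne_top
  have hG := ht.1.secondMoment_G_ne_top
  have hF := ht.1.secondMoment_F_ne_top
  have hH := ht.1.tsum_hWeight_ne_top
  have hH2 := ht.1.secondMoment_hWeight_ne_top
  have hdini := h.1.eventually_mul_le_sub_tsum (r := r)
    (w := fun x => ENNReal.ofReal (sqNorm x) + ENNReal.ofReal (M.sigma ^ 2)) h0 htb
  simp only [tsum_sqNorm_add_mul, ← conv_assoc, tsum_conv, tsum_F, tsum_G,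
    secondMoment_conv _ (M.symm t).map_neg, secondMoment_conv _ (M.hWeight_neg t),
    secondMoment_conv _ (M.isSymmFun_F t).map_neg, ← secondMoment_F] at hdini
  refine hdini (fun z hz => hz.secondMoment_F_ne_top) (by finiteness) (by finiteness)
    (hr.trans_le ?_)
  simp (disch := finiteness) only [ENNReal.toReal_add, ENNReal.toReal_mul,
    ENNReal.toReal_ofReal (sq_nonneg M.sigma)]
  exact ht.mul_susc_mul_spread_le hc rfl

variable {a : ℝ}

lemma eventually_inv_susc_add_le (h : M.Controlled δ b) (h0 : 0 ≤ t) (htb : t < b) :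
    ∀ᶠ z in 𝓝[>] t, (M.susc z)⁻¹ + (1 - 2 * δ) * z ≤ (M.susc t)⁻¹ + (1 - 2 * δ) * t := by
  have hδ0 := h.pos
  have hχ := (h.1.of_le h0 htb.le).susc_pos
  have hincr := h.eventually_mul_le_susc_sub (r := (1 - 3 / 2 * δ) * M.susc t ^ 2) h0 htb
    (by nlinarith [pow_pos hχ 2])
  have hlt : (1 - 2 * δ) * M.susc t * M.susc t < (1 - 3 / 2 * δ) * M.susc t ^ 2 := by
    nlinarith [pow_pos hχ 2]
  have hright := ((tendsto_nhdsGT_of_continuousOn_Icc h.1.continuousOn_susc h0 htb).const_mul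
    ((1 - 2 * δ) * M.susc t)).eventually_lt_const hlt
  filter_upwards [hincr, hright, Ioo_mem_nhdsGT htb] with z hz hzχ htz
  have hχz := (h.1.of_le (h0.trans htz.1.le) htz.2.le).susc_pos
  have hsub := sub_pos.2 htz.1
  have hinv : (1 - 2 * δ) * (z - t) ≤ (M.susc t)⁻¹ - (M.susc z)⁻¹ := by
    rw [inv_sub_inv hχ.ne' hχz.ne', le_div_iff₀ (by positivity)]
    calc (1 - 2 * δ) * (z - t) * (M.susc t * M.susc z)
        = (1 - 2 * δ) * M.susc t * M.susc z * (z - t) := by ring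
      _ ≤ (1 - 3 / 2 * δ) * M.susc t ^ 2 * (z - t) := by gcongr
      _ ≤ M.susc z - M.susc t := hz
  linarith

lemma mul_sub_le_inv_susc_sub_inv_susc (h : M.Controlled δ b) (h0 : 0 ≤ a)
    (hab : a ≤ b) : (1 - 2 * δ) * (b - a) ≤ (M.susc a)⁻¹ - (M.susc b)⁻¹ := by
  have hanti := le_of_eventually_le_right
    (f := fun t => (M.susc t)⁻¹ + (1 - 2 * δ) * t) hab
    (((h.1.continuousOn_susc.mono (Set.Icc_subset_Icc_left h0)).inv₀ fun t ht =>
      (h.1.of_le (h0.trans ht.1) ht.2).susc_pos.ne').add (by fun_prop))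
    fun t ht => h.eventually_inv_susc_add_le (h0.trans ht.1) ht.2
  linarith

lemma eventually_mul_log_susc_sub_le (h : M.Controlled δ b) (hc : 0 < c₀) (hδ : δ < 1 / 4)
    (h0 : 0 ≤ t) (htb : t < b) :
    ∀ᶠ z in 𝓝[>] t, (2 - 3 * δ) * Real.log (M.susc z) - Real.log (M.spread z)
      ≤ (2 - 3 * δ) * Real.log (M.susc t) - Real.log (M.spread t) := by
  have hδ0 := h.pos
  have ht := h.1.of_le h0 htb.le
  have hv := ht.spread_pos hc
  have hχv := mul_pos ht.susc_pos hv
  have hincr := h.eventually_mul_le_spread_sub (r := (2 - 5 / 2 * δ) * (M.susc t * M.spread t))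
    hc h0 htb (by nlinarith)
  have hlt : (2 - 3 * δ) * (M.susc t * M.spread t)
      < (2 - 5 / 2 * δ) * (M.susc t * M.spread t) := by nlinarith
  have hright := (((tendsto_nhdsGT_of_continuousOn_Icc h.1.continuousOn_susc h0 htb).mul
    (tendsto_nhdsGT_of_continuousOn_Icc h.1.continuousOn_spread h0 htb)).const_mul
    (2 - 3 * δ)).eventually_lt_const hlt
  filter_upwards [hincr, hright, Ioo_mem_nhdsGT htb] with z hz hzχv htz
  have hzsub := h.1.of_le (h0.trans htz.1.le) htz.2.le
  have hvz := hzsub.spread_pos hc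
  have hsub := sub_pos.2 htz.1
  have hlogv : (2 - 3 * δ) * (M.susc z * (z - t))
      ≤ Real.log (M.spread z) - Real.log (M.spread t) := by
    rw [← Real.log_div hvz.ne' hv.ne']
    refine le_trans ?_ (Real.one_sub_inv_le_log_of_pos (div_pos hvz hv))
    rw [inv_div, one_sub_div hvz.ne', le_div_iff₀ hvz]
    calc (2 - 3 * δ) * (M.susc z * (z - t)) * M.spread z
        = (2 - 3 * δ) * (M.susc z * M.spread z) * (z - t) := by ring
      _ ≤ (2 - 5 / 2 * δ) * (M.susc t * M.spread t) * (z - t) := by gcongr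
      _ ≤ M.spread z - M.spread t := hz
  have hlogχ := mul_le_mul_of_nonneg_left (hzsub.log_susc_sub_le h0 htz.1.le)
    (by linarith : 0 ≤ 2 - 3 * δ)
  linarith

lemma mul_log_susc_div_le (h : M.Controlled δ b) (hc : 0 < c₀) (hδ : δ < 1 / 4) (h0 : 0 ≤ a)
    (hab : a ≤ b) :
    (2 - 3 * δ) * Real.log (M.susc b / M.susc a) ≤ Real.log (M.spread b / M.spread a) := by
  have hsub (t : ℝ) (ht : t ∈ Set.Icc a b) := h.1.of_le (h0.trans ht.1) ht.2
  have hanti := le_of_eventually_le_right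
    (f := fun t => (2 - 3 * δ) * Real.log (M.susc t) - Real.log (M.spread t)) hab
    ((continuousOn_const.mul ((h.1.continuousOn_susc.mono (Set.Icc_subset_Icc_left h0)).log
      fun t ht => (hsub t ht).susc_pos.ne')).sub
      ((h.1.continuousOn_spread.mono (Set.Icc_subset_Icc_left h0)).log
        fun t ht => ((hsub t ht).spread_pos hc).ne'))
    fun t ht => h.eventually_mul_log_susc_sub_le hc hδ (h0.trans ht.1) ht.2
  have ha := h.1.of_le h0 hab
  rw [Real.log_div h.1.susc_pos.ne' ha.susc_pos.ne',
    Real.log_div (h.1.spread_pos hc).ne' (ha.spread_pos hc).ne']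
  linarith

lemma rpow_susc_div_le_sq_xi_div (h : M.Controlled δ b) (hc : 0 < c₀) (hδ : δ < 1 / 4)
    (h0 : 0 ≤ a) (hab : a ≤ b) :
    (M.susc b / M.susc a) ^ (1 - 3 * δ) ≤ (M.xi b / M.xi a) ^ 2 := by
  have ha := h.1.of_le h0 hab
  have hχ := div_pos h.1.susc_pos ha.susc_pos
  have hv := div_pos (h.1.spread_pos hc) (ha.spread_pos hc)
  have hxi : (M.xi b / M.xi a) ^ 2 = (M.spread b / M.spread a) / (M.susc b / M.susc a) := by
    rw [div_pow, h.1.xi_sq, ha.xi_sq, div_div_div_comm]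
  rw [hxi, ← Real.log_le_log_iff (by positivity) (by positivity), Real.log_rpow hχ,
    Real.log_div hv.ne' hχ.ne']
  linarith [h.mul_log_susc_div_le hc hδ h0 hab]

lemma xi_mono (h : M.Controlled δ b) (hc : 0 < c₀) (hδ : δ < 1 / 4) (h0 : 0 ≤ a)
    (hab : a ≤ b) : M.xi a ≤ M.xi b := by
  have ha := h.1.of_le h0 hab
  have hχ : 1 ≤ M.susc b / M.susc a := (one_le_div ha.susc_pos).2 (h.1.susc_mono h0 hab)
  have hxi := (Real.one_le_rpow hχ (by linarith : 0 ≤ 1 - 3 * δ)).trans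
    (h.rpow_susc_div_le_sq_xi_div hc hδ h0 hab)
  rw [one_le_sq_iff₀ (div_nonneg (M.xi_nonneg b) (M.xi_nonneg a))] at hxi
  exact (one_le_div (ha.xi_pos hc)).1 hxi

lemma sub_mul_susc_le (h : M.Controlled δ b) (hδ : δ < 1 / 4) (h0 : 0 ≤ a) (hab : a ≤ b) :
    (b - a) * M.susc a ≤ (1 + 4 * δ) * (1 - M.susc a / M.susc b) := by
  have hδ0 := h.pos
  have hχa := (h.1.of_le h0 hab).susc_pos
  have hinv : (1 - 2 * δ) * (b - a) * M.susc a ≤ 1 - M.susc a / M.susc b := by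
    have := mul_le_mul_of_nonneg_right (h.mul_sub_le_inv_susc_sub_inv_susc h0 hab) hχa.le
    rwa [sub_mul (M.susc a)⁻¹, inv_mul_cancel₀ hχa.ne', inv_mul_eq_div] at this
  have hnonneg := mul_nonneg (sub_nonneg.2 hab) hχa.le
  calc (b - a) * M.susc a ≤ ((1 + 4 * δ) * (1 - 2 * δ)) * ((b - a) * M.susc a) :=
        le_mul_of_one_le_left hnonneg (by nlinarith)
    _ = (1 + 4 * δ) * ((1 - 2 * δ) * (b - a) * M.susc a) := by ring
    _ ≤ (1 + 4 * δ) * (1 - M.susc a / M.susc b) := by gcongr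

end Controlled
end Model
end DifferentialInequalities

section StepDistribution

variable {d : ℕ} {f : (Fin d → ℤ) → ℝ≥0∞}

lemma cosh_mul_le {r : ℝ} (hr : |r| ≤ 1) (y : ℝ) :
    Real.cosh (r * y) ≤ 1 + r ^ 2 * y ^ 2 / 2 + r ^ 4 * Real.cosh y := by
  have hhead : HasSum
      (fun n : ℕ => if n < 2 then (r * y) ^ (2 * n) / ((2 * n).factorial : ℝ) else 0)
      (1 + r ^ 2 * y ^ 2 / 2) := by
    convert hasSum_sum_of_ne_finset_zero (s := Finset.range 2) (L := .unconditional ℕ) ?_ using 1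
    · simp [Finset.sum_range_succ, mul_pow]
    · intro n hn
      exact if_neg (by simpa using hn)
  refine hasSum_le (fun n => ?_) (Real.hasSum_cosh (r * y))
    (hhead.add ((Real.hasSum_cosh y).mul_left (r ^ 4)))
  have hy : 0 ≤ y ^ (2 * n) / ((2 * n).factorial : ℝ) := by rw [pow_mul]; positivity
  split_ifs with hn
  · exact le_add_of_nonneg_right (by positivity)
  · rw [zero_add, mul_pow, mul_div_assoc]
    refine mul_le_mul_of_nonneg_right ?_ hy
    rw [← (even_two_mul n).pow_abs, ← (by decide : Even 4).pow_abs r]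
    exact pow_le_pow_of_le_one (abs_nonneg r) hr (by omega)

lemma expMoment_neg (hf : ∀ x, f (-x) = f x) (i : Fin d) (s : ℝ) :
    expMoment i (-s) f = expMoment i s f := by
  unfold expMoment
  rw [← (Equiv.neg (Fin d → ℤ)).tsum_eq]
  simp [hf]

lemma expMoment_eq_tsum_cosh (hf : ∀ x, f (-x) = f x) (i : Fin d) (s : ℝ) :
    expMoment i s f = ∑' x, ENNReal.ofReal (Real.cosh (s * x i)) * f x := by
  have hdouble : expMoment i s f + expMoment i (-s) f
      = 2 * ∑' x, ENNReal.ofReal (Real.cosh (s * x i)) * f x := by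
    unfold expMoment
    rw [← ENNReal.tsum_add, ← ENNReal.tsum_mul_left]
    refine tsum_congr fun x => ?_
    rw [← add_mul, ← mul_assoc, ← ENNReal.ofReal_add (by positivity) (by positivity),
      ← ENNReal.ofReal_ofNat 2, ← ENNReal.ofReal_mul zero_le_two, Real.cosh_eq, neg_mul,
      mul_div_cancel₀ _ two_ne_zero]
  rw [expMoment_neg hf, ← two_mul] at hdouble
  exact (ENNReal.mul_right_inj (by simp) (by simp)).1 hdouble

lemma IsSymmFun.tsum_coord_sq_mul (hf : IsSymmFun f) (i : Fin d) :
    ∑' x, ENNReal.ofReal ((x i : ℝ) ^ 2) * f x = secondMoment f / d := by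
  have hperm (j : Fin d) : ∑' x, ENNReal.ofReal ((x j : ℝ) ^ 2) * f x
      = ∑' x, ENNReal.ofReal ((x i : ℝ) ^ 2) * f x := by
    rw [← (signedPerm (Equiv.swap j i) fun _ => false).toEquiv.tsum_eq]
    refine tsum_congr fun x => ?_
    have hfx : f (signedPerm (Equiv.swap j i) (fun _ => false) x) = f x := hf _ _ x
    change _ * f (signedPerm (Equiv.swap j i) (fun _ => false) x) = _
    rw [hfx]
    simp [signedPerm]
  have hsum : secondMoment f = d * ∑' x, ENNReal.ofReal ((x i : ℝ) ^ 2) * f x := by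
    have hcoord (x : Fin d → ℤ) : ENNReal.ofReal (sqNorm x) * f x
        = ∑ j, ENNReal.ofReal ((x j : ℝ) ^ 2) * f x := by
      rw [sqNorm, ENNReal.ofReal_sum_of_nonneg fun j _ => sq_nonneg _, Finset.sum_mul]
    simp only [secondMoment, hcoord]
    rw [Summable.tsum_finsetSum fun _ _ => ENNReal.summable,
      Finset.sum_congr rfl fun j _ => hperm j]
    simp
  rw [hsum, mul_comm, ENNReal.mul_div_cancel_right (mod_cast i.pos.ne') (by simp)]

lemma IsSymmFun.expMoment_le (hf : IsSymmFun f) {u s₀ s : ℝ} (hu : 0 < u) (hs₀ : 0 < s₀)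
    (hs : |s| ≤ s₀) (h2 : secondMoment f ≤ ENNReal.ofReal (u ^ 2) * ∑' x, f x) (i : Fin d)
    (hexp : expMoment i (s₀ / u) f ≤ 2 * ∑' x, f x) :
    expMoment i (s / u) f
      ≤ ENNReal.ofReal (1 + s ^ 2 / (2 * d) + 2 * (s / s₀) ^ 4) * ∑' x, f x := by
  have hd : (0 : ℝ) < d := by exact_mod_cast i.pos
  have hr : |s / s₀| ≤ 1 := by rwa [abs_div, abs_of_pos hs₀, div_le_one hs₀]
  have hcosh (x : Fin d → ℤ) : ENNReal.ofReal (Real.cosh (s / u * x i)) * f x ≤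
      f x + ENNReal.ofReal (s ^ 2 / (2 * u ^ 2)) * (ENNReal.ofReal ((x i : ℝ) ^ 2) * f x)
      + ENNReal.ofReal ((s / s₀) ^ 4) * (ENNReal.ofReal (Real.cosh (s₀ / u * x i)) * f x) := by
    have h := cosh_mul_le hr (s₀ / u * x i)
    rw [show s / s₀ * (s₀ / u * x i) = s / u * x i by field_simp,
      show (s / s₀) ^ 2 * (s₀ / u * x i) ^ 2 / 2 = s ^ 2 / (2 * u ^ 2) * (x i : ℝ) ^ 2 by
        field_simp] at h
    rw [← mul_assoc, ← mul_assoc, ← ENNReal.ofReal_mul (by positivity),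
      ← ENNReal.ofReal_mul (by positivity), ← one_add_mul, ← add_mul, ← ENNReal.ofReal_one,
      ← ENNReal.ofReal_add zero_le_one (by positivity),
      ← ENNReal.ofReal_add (by positivity) (by positivity)]
    gcongr
  calc expMoment i (s / u) f
      ≤ ∑' x, f x + ENNReal.ofReal (s ^ 2 / (2 * u ^ 2)) * (secondMoment f / d)
        + ENNReal.ofReal ((s / s₀) ^ 4) * expMoment i (s₀ / u) f := by
        rw [expMoment_eq_tsum_cosh hf.map_neg, expMoment_eq_tsum_cosh hf.map_neg,
          ← hf.tsum_coord_sq_mul i, ← ENNReal.tsum_mul_left, ← ENNReal.tsum_mul_left,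
          ← ENNReal.tsum_add, ← ENNReal.tsum_add]
        exact ENNReal.tsum_le_tsum hcosh
    _ ≤ ∑' x, f x + ENNReal.ofReal (s ^ 2 / (2 * u ^ 2)) *
          ((ENNReal.ofReal (u ^ 2) * ∑' x, f x) / ENNReal.ofReal d)
        + ENNReal.ofReal ((s / s₀) ^ 4) * (2 * ∑' x, f x) := by
        rw [ENNReal.ofReal_natCast]
        gcongr
    _ = (ENNReal.ofReal 1 + ENNReal.ofReal (s ^ 2 / (2 * u ^ 2) * (u ^ 2 / d))
          + ENNReal.ofReal ((s / s₀) ^ 4 * 2)) * ∑' x, f x := by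
        rw [ENNReal.ofReal_mul (by positivity), ENNReal.ofReal_mul (by positivity),
          ENNReal.ofReal_div_of_pos hd]
        simp only [ENNReal.ofReal_one, ENNReal.ofReal_ofNat, ENNReal.div_eq_inv_mul]
        ring
    _ = ENNReal.ofReal (1 + s ^ 2 / (2 * d) + 2 * (s / s₀) ^ 4) * ∑' x, f x := by
        rw [← ENNReal.ofReal_add (by positivity) (by positivity),
          ← ENNReal.ofReal_add (by positivity) (by positivity)]
        congr 2
        field_simp

/-- Step distributions at scale `u`: symmetric probability mass functions on `ℤ^d` with
variance `u²` whose exponential moments at rate `s₀ / u` are at most `2`. -/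
structure IsStep (u s₀ : ℝ) (p : (Fin d → ℤ) → ℝ≥0∞) : Prop where
  symm : IsSymmFun p
  mass : ∑' x, p x = 1
  variance : secondMoment p = ENNReal.ofReal (u ^ 2)
  exp_le : ∀ i, expMoment i (s₀ / u) p ≤ 2

end StepDistribution

section CharacteristicFunction

variable {d : ℕ} {p : (Fin d → ℤ) → ℝ≥0∞} {u s₀ : ℝ}

/-- The pairing `⟨θ, x⟩` of a frequency with a lattice point. -/
def pairing (θ : Fin d → ℝ) (x : Fin d → ℤ) : ℝ :=
  ∑ i, θ i * x i

lemma pairing_sub_left (θ θ' : Fin d → ℝ) (x : Fin d → ℤ) :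
    pairing (θ - θ') x = pairing θ x - pairing θ' x := by
  simp [pairing, sub_mul, Finset.sum_sub_distrib]

lemma pairing_sub (θ : Fin d → ℝ) (x y : Fin d → ℤ) :
    pairing θ (x - y) = pairing θ x - pairing θ y := by
  simp [pairing, mul_sub, Finset.sum_sub_distrib]

lemma pairing_neg (θ : Fin d → ℝ) (x : Fin d → ℤ) : pairing θ (-x) = -pairing θ x := by
  simp [pairing]

lemma abs_pairing_le {θ : Fin d → ℝ} {a : ℝ} (hθ : ∀ i, |θ i| ≤ a) (x : Fin d → ℤ) :
    |pairing θ x| ≤ d * (a * ‖x‖) := by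
  calc |pairing θ x| ≤ ∑ i, |θ i * x i| := Finset.abs_sum_le_sum_abs _ _
    _ ≤ ∑ _i : Fin d, a * ‖x‖ := Finset.sum_le_sum fun i _ => by
        rw [abs_mul]
        exact mul_le_mul (hθ i) (abs_coord_le_norm x i) (abs_nonneg _)
          ((abs_nonneg _).trans (hθ i))
    _ = d * (a * ‖x‖) := by simp

lemma pairing_pow_four_le (θ : Fin d → ℝ) (y : Fin d → ℤ) :
    pairing θ y ^ 4 ≤ (∑ i, θ i ^ 2) ^ 2 * (d * ∑ i, (y i : ℝ) ^ 4) := by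
  have hcard : (∑ i, (y i : ℝ) ^ 2) ^ 2 ≤ d * ∑ i, (y i : ℝ) ^ 4 := by
    have h := sq_sum_le_card_mul_sum_sq (s := Finset.univ) (f := fun i => (y i : ℝ) ^ 2)
    simp only [← pow_mul] at h
    simpa using h
  calc pairing θ y ^ 4 = (pairing θ y ^ 2) ^ 2 := by ring
    _ ≤ ((∑ i, θ i ^ 2) * ∑ i, (y i : ℝ) ^ 2) ^ 2 := by
        gcongr
        exact Finset.sum_mul_sq_le_sq_mul_sq _ _ _
    _ = (∑ i, θ i ^ 2) ^ 2 * (∑ i, (y i : ℝ) ^ 2) ^ 2 := mul_pow _ _ _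
    _ ≤ (∑ i, θ i ^ 2) ^ 2 * (d * ∑ i, (y i : ℝ) ^ 4) := by gcongr

/-- The characteristic function of a symmetric distribution, as a cosine series. -/
def charFn (p : (Fin d → ℤ) → ℝ≥0∞) (θ : Fin d → ℝ) : ℝ :=
  ∑' y, (p y).toReal * Real.cos (pairing θ y)

lemma hasSum_toReal_mul_of_tsum_ne_top {w : (Fin d → ℤ) → ℝ} (hw : ∀ x, 0 ≤ w x)
    (h : ∑' x, ENNReal.ofReal (w x) * p x ≠ ⊤) :
    HasSum (fun x => (p x).toReal * w x) (∑' x, ENNReal.ofReal (w x) * p x).toReal := by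
  simpa [ENNReal.toReal_mul, hw, mul_comm] using hasSum_toReal_of_tsum_ne_top h

lemma summable_toReal_mul_of_abs_le_one (hp : ∑' x, p x ≠ ⊤) {w : (Fin d → ℤ) → ℝ}
    (hw : ∀ x, |w x| ≤ 1) : Summable fun x => (p x).toReal * w x :=
  (hasSum_toReal_of_tsum_ne_top hp).summable.of_norm_bounded fun x => by
    rw [norm_mul, Real.norm_eq_abs, Real.norm_eq_abs, abs_of_nonneg ENNReal.toReal_nonneg]
    exact mul_le_of_le_one_right ENNReal.toReal_nonneg (hw x)

lemma hasSum_charFn (hp : ∑' x, p x ≠ ⊤) (θ : Fin d → ℝ) :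
    HasSum (fun y => (p y).toReal * Real.cos (pairing θ y)) (charFn p θ) :=
  (summable_toReal_mul_of_abs_le_one hp fun _ => Real.abs_cos_le_one _).hasSum

lemma hasSum_zero_of_map_eq_neg {α : Type*} {g : α → ℝ} (e : α ≃ α) (hg : Summable g)
    (h : ∀ x, g (e x) = -g x) : HasSum g 0 := by
  have hneg : ∑' x, g x = -∑' x, g x := by
    rw [← tsum_neg, ← e.tsum_eq g]
    exact tsum_congr h
  rw [← self_eq_neg.1 hneg]
  exact hg.hasSum

lemma hasSum_mul_sin_pairing (hp : ∑' x, p x ≠ ⊤) (heven : ∀ x, p (-x) = p x)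
    (θ : Fin d → ℝ) : HasSum (fun y => (p y).toReal * Real.sin (pairing θ y)) 0 :=
  hasSum_zero_of_map_eq_neg (Equiv.neg _)
    (summable_toReal_mul_of_abs_le_one hp fun _ => Real.abs_sin_le_one _)
    fun x => by simp [heven, pairing_neg]

lemma hasSum_mul_cos_pairing_sub (hp : ∑' x, p x ≠ ⊤) (heven : ∀ x, p (-x) = p x)
    (θ : Fin d → ℝ) (x : Fin d → ℤ) :
    HasSum (fun y => (p y).toReal * Real.cos (pairing θ (x - y)))
      (charFn p θ * Real.cos (pairing θ x)) := by
  have hadd := ((hasSum_charFn hp θ).mul_right (Real.cos (pairing θ x))).add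
    ((hasSum_mul_sin_pairing hp heven θ).mul_right (Real.sin (pairing θ x)))
  simpa only [pairing_sub, Real.cos_sub, mul_add, mul_assoc, zero_mul, add_zero, mul_comm,
    mul_left_comm] using hadd

namespace IsSymmFun

lemma hasSum_mul_coord_sq (hp : IsSymmFun p) (h2 : secondMoment p ≠ ⊤) (i : Fin d) :
    HasSum (fun y => (p y).toReal * (y i : ℝ) ^ 2) ((secondMoment p).toReal / d) := by
  have hi := hp.tsum_coord_sq_mul i
  have hd : (d : ℝ≥0∞) ≠ 0 := mod_cast i.pos.ne'
  convert hasSum_toReal_mul_of_tsum_ne_top (fun y => sq_nonneg (y i : ℝ))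
    (hi ▸ ENNReal.div_ne_top h2 hd) using 1
  rw [hi, ENNReal.toReal_div, ENNReal.toReal_natCast]

lemma hasSum_mul_coord_mul_coord (hp : IsSymmFun p) (h2 : secondMoment p ≠ ⊤) {i j : Fin d}
    (hij : i ≠ j) : HasSum (fun y => (p y).toReal * ((y i : ℝ) * y j)) 0 := by
  refine hasSum_zero_of_map_eq_neg (signedPerm 1 fun k => decide (k = i)).toEquiv ?_ fun x => ?_
  · refine ((hp.hasSum_mul_coord_sq h2 i).summable.add
      (hp.hasSum_mul_coord_sq h2 j).summable).of_norm_bounded fun y => ?_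
    rw [norm_mul, Real.norm_eq_abs, Real.norm_eq_abs, abs_of_nonneg ENNReal.toReal_nonneg,
      ← mul_add]
    refine mul_le_mul_of_nonneg_left ?_ ENNReal.toReal_nonneg
    rw [abs_le]
    constructor <;> nlinarith [sq_nonneg ((y i : ℝ) - y j), sq_nonneg ((y i : ℝ) + y j)]
  · have hflip : p (signedPerm 1 (fun k => decide (k = i)) x) = p x := hp _ _ x
    change (p (signedPerm 1 (fun k => decide (k = i)) x)).toReal * _ = _
    rw [hflip]
    simp [signedPerm, hij.symm]

lemma hasSum_mul_pairing_sq (hp : IsSymmFun p) (h2 : secondMoment p ≠ ⊤) (θ : Fin d → ℝ) :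
    HasSum (fun y => (p y).toReal * pairing θ y ^ 2)
      ((∑ i, θ i ^ 2) * ((secondMoment p).toReal / d)) := by
  have hcoord (i j : Fin d) : HasSum (fun y => (p y).toReal * ((y i : ℝ) * y j))
      (if i = j then (secondMoment p).toReal / d else 0) := by
    split_ifs with hij
    · subst hij
      simpa only [sq] using hp.hasSum_mul_coord_sq h2 i
    · exact hp.hasSum_mul_coord_mul_coord h2 hij
  have hsum : HasSum (fun y => ∑ i, ∑ j, θ i * θ j * ((p y).toReal * ((y i : ℝ) * y j)))
      (∑ i, ∑ j, θ i * θ j * (if i = j then (secondMoment p).toReal / d else 0)) :=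
    hasSum_sum fun i _ => hasSum_sum fun j _ => (hcoord i j).mul_left _
  convert hsum using 1
  · funext y
    simp_rw [pairing, sq, Finset.sum_mul_sum, Finset.mul_sum]
    exact Finset.sum_congr rfl fun i _ => Finset.sum_congr rfl fun j _ => by ring
  · simp [Finset.sum_mul, sq]

end IsSymmFun

lemma pow_four_le_cosh (y : ℝ) : y ^ 4 ≤ 24 * Real.cosh y := by
  have h := le_hasSum (Real.hasSum_cosh y) 2 fun n _ => by rw [pow_mul]; positivity
  rw [div_le_iff₀ (by positivity)] at h
  simpa [Nat.factorial, mul_comm] using h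

lemma cos_le_one_sub_sq_add_pow_four (y : ℝ) : Real.cos y ≤ 1 - y ^ 2 / 2 + y ^ 4 / 2 := by
  rcases le_total |y| 1 with hy | hy
  · have h := (abs_le.1 (Real.cos_bound hy)).2
    rw [Even.pow_abs (by decide)] at h
    nlinarith [sq_nonneg (y ^ 2)]
  · nlinarith [Real.cos_le_one y, (one_le_sq_iff_one_le_abs y).2 hy]

lemma sum_sq_mul_sq_le (hd : 0 < d) (hu : 0 < u) {θ : Fin d → ℝ}
    (hθ : ∀ i, |θ i| ≤ s₀ ^ 2 / (10 * d ^ 2) / u) :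
    (∑ i, θ i ^ 2) * u ^ 2 ≤ s₀ ^ 4 / (100 * d ^ 3) := by
  calc (∑ i, θ i ^ 2) * u ^ 2 ≤ (∑ _i : Fin d, (s₀ ^ 2 / (10 * d ^ 2) / u) ^ 2) * u ^ 2 := by
        gcongr ?_ * _
        exact Finset.sum_le_sum fun i _ => sq_le_sq' (abs_le.1 (hθ i)).1 (abs_le.1 (hθ i)).2
    _ = s₀ ^ 4 / (100 * d ^ 3) := by
        simp only [Finset.sum_const, Finset.card_univ, Fintype.card_fin, nsmul_eq_mul]
        field_simp
        norm_num

namespace IsStep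

lemma mass_ne_top (hp : IsStep u s₀ p) : ∑' x, p x ≠ ⊤ := by
  simp [hp.mass]

lemma hasSum_toReal (hp : IsStep u s₀ p) : HasSum (fun x => (p x).toReal) 1 := by
  simpa [hp.mass] using hasSum_toReal_of_tsum_ne_top hp.mass_ne_top

lemma hasSum_mul_pairing_sq (hp : IsStep u s₀ p) (θ : Fin d → ℝ) :
    HasSum (fun y => (p y).toReal * pairing θ y ^ 2) ((∑ i, θ i ^ 2) * (u ^ 2 / d)) := by
  simpa [hp.variance, sq_nonneg] using hp.symm.hasSum_mul_pairing_sq (by simp [hp.variance]) θ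

lemma one_sub_le_charFn (hp : IsStep u s₀ p) (θ : Fin d → ℝ) :
    1 - (∑ i, θ i ^ 2) * (u ^ 2 / d) / 2 ≤ charFn p θ :=
  hasSum_le (fun y => by
      have h := mul_le_mul_of_nonneg_left (Real.one_sub_sq_div_two_le_cos (x := pairing θ y))
        (ENNReal.toReal_nonneg (a := p y))
      rwa [mul_sub, mul_one, mul_div_assoc'] at h)
    (hp.hasSum_toReal.sub ((hp.hasSum_mul_pairing_sq θ).div_const 2))
    (hasSum_charFn hp.mass_ne_top θ)

lemma tsum_coord_pow_four_le (hp : IsStep u s₀ p) (hu : 0 < u) (hs₀ : 0 < s₀) (i : Fin d) :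
    ∑' y, ENNReal.ofReal ((y i : ℝ) ^ 4) * p y ≤ ENNReal.ofReal (48 * (u / s₀) ^ 4) := by
  have hcosh (y : Fin d → ℤ) : (y i : ℝ) ^ 4 ≤ 24 * (u / s₀) ^ 4 * Real.cosh (s₀ / u * y i) :=
    calc (y i : ℝ) ^ 4 = (u / s₀) ^ 4 * (s₀ / u * y i) ^ 4 := by field_simp
      _ ≤ (u / s₀) ^ 4 * (24 * Real.cosh (s₀ / u * y i)) := by
          gcongr
          exact pow_four_le_cosh _
      _ = 24 * (u / s₀) ^ 4 * Real.cosh (s₀ / u * y i) := by ring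
  calc ∑' y, ENNReal.ofReal ((y i : ℝ) ^ 4) * p y
      ≤ ∑' y, ENNReal.ofReal (24 * (u / s₀) ^ 4)
          * (ENNReal.ofReal (Real.cosh (s₀ / u * y i)) * p y) := by
        refine ENNReal.tsum_le_tsum fun y => ?_
        rw [← mul_assoc, ← ENNReal.ofReal_mul (by positivity)]
        gcongr
        exact hcosh y
    _ = ENNReal.ofReal (24 * (u / s₀) ^ 4) * expMoment i (s₀ / u) p := by
        rw [ENNReal.tsum_mul_left, ← expMoment_eq_tsum_cosh hp.symm.map_neg]
    _ ≤ ENNReal.ofReal (24 * (u / s₀) ^ 4) * 2 := by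
        gcongr
        exact hp.exp_le i
    _ = ENNReal.ofReal (48 * (u / s₀) ^ 4) := by
        rw [← ENNReal.ofReal_ofNat 2, ← ENNReal.ofReal_mul (by positivity)]
        ring_nf

lemma charFn_le (hp : IsStep u s₀ p) (hu : 0 < u) (hs₀ : 0 < s₀) (θ : Fin d → ℝ) :
    charFn p θ ≤ 1 - (∑ i, θ i ^ 2) * (u ^ 2 / d) / 2
      + (∑ i, θ i ^ 2) ^ 2 * d * (d * (48 * (u / s₀) ^ 4)) / 2 := by
  have hfour (i : Fin d) := hasSum_toReal_mul_of_tsum_ne_top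
    (fun y => (by decide : Even 4).pow_nonneg (y i : ℝ))
    ((hp.tsum_coord_pow_four_le hu hs₀ i).trans_lt ENNReal.ofReal_lt_top).ne
  have hle := hasSum_le (fun y => ?_) (hasSum_charFn hp.mass_ne_top θ)
    ((hp.hasSum_toReal.sub ((hp.hasSum_mul_pairing_sq θ).div_const 2)).add
      (((hasSum_sum (s := Finset.univ) fun i _ => hfour i).mul_left
        ((∑ i, θ i ^ 2) ^ 2 * d)).div_const 2))
  · refine hle.trans ?_
    gcongr
    calc ∑ i, (∑' y, ENNReal.ofReal ((y i : ℝ) ^ 4) * p y).toReal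
        ≤ ∑ _i : Fin d, 48 * (u / s₀) ^ 4 := Finset.sum_le_sum fun i _ =>
          ENNReal.toReal_le_of_le_ofReal (by positivity) (hp.tsum_coord_pow_four_le hu hs₀ i)
      _ = d * (48 * (u / s₀) ^ 4) := by simp
  · calc (p y).toReal * Real.cos (pairing θ y)
        ≤ (p y).toReal * (1 - pairing θ y ^ 2 / 2
            + (∑ i, θ i ^ 2) ^ 2 * (d * ∑ i, (y i : ℝ) ^ 4) / 2) := by
          gcongr
          refine (cos_le_one_sub_sq_add_pow_four _).trans ?_
          gcongr
          exact pairing_pow_four_le θ y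
      _ = _ := by
          rw [← Finset.mul_sum]
          ring

lemma charFn_nonneg (hp : IsStep u s₀ p) (hd : 0 < d) (hu : 0 < u) (hs₀ : 0 < s₀) (hs₁ : s₀ ≤ 1)
    {θ : Fin d → ℝ} (hθ : ∀ i, |θ i| ≤ s₀ ^ 2 / (10 * d ^ 2) / u) : 0 ≤ charFn p θ := by
  have hd' : (1 : ℝ) ≤ d := mod_cast hd
  refine le_trans ?_ (hp.one_sub_le_charFn θ)
  have hA : (∑ i, θ i ^ 2) * u ^ 2 ≤ 1 := (sum_sq_mul_sq_le hd hu hθ).trans <| by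
    rw [div_le_one (by positivity)]
    linarith [pow_le_one₀ hs₀.le hs₁ (n := 4), one_le_pow₀ hd' (n := 3)]
  have hA' : (∑ i, θ i ^ 2) * (u ^ 2 / d) ≤ 1 := by
    rw [← mul_div_assoc, div_le_one (by positivity)]
    exact hA.trans hd'
  linarith

lemma charFn_le_exp (hp : IsStep u s₀ p) (hd : 0 < d) (hu : 0 < u) (hs₀ : 0 < s₀)
    {θ : Fin d → ℝ} (hθ : ∀ i, |θ i| ≤ s₀ ^ 2 / (10 * d ^ 2) / u) :
    charFn p θ ≤ Real.exp (-((∑ i, θ i ^ 2) * u ^ 2 / (4 * d))) := by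
  have hbound := hp.charFn_le hu hs₀ θ
  have hA := sum_sq_mul_sq_le hd hu hθ
  set A := ∑ i, θ i ^ 2
  have hquartic : A ^ 2 * d * (d * (48 * (u / s₀) ^ 4)) / 2 ≤ A * u ^ 2 / (4 * d) :=
    calc A ^ 2 * d * (d * (48 * (u / s₀) ^ 4)) / 2
        = A * u ^ 2 * (A * u ^ 2) * (24 * d ^ 2 / s₀ ^ 4) := by field_simp; ring
      _ ≤ A * u ^ 2 * (s₀ ^ 4 / (100 * d ^ 3)) * (24 * d ^ 2 / s₀ ^ 4) := by gcongr
      _ = A * u ^ 2 / d * (24 / 100) := by field_simp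
      _ ≤ A * u ^ 2 / d * (1 / 4) := mul_le_mul_of_nonneg_left (by norm_num) (by positivity)
      _ = A * u ^ 2 / (4 * d) := by ring
  have hsplit : A * (u ^ 2 / d) / 2 = A * u ^ 2 / (4 * d) + A * u ^ 2 / (4 * d) := by ring
  linarith [Real.add_one_le_exp (-(A * u ^ 2 / (4 * d)))]

end IsStep

end CharacteristicFunction

section EsseenInequality

lemma summable_one_div_one_add_int_sq : Summable fun l : ℤ => 1 / (1 + (l : ℝ) ^ 2) := by
  refine Summable.of_nonneg_of_le (fun l => by positivity) (fun l => ?_)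
    ((Real.summable_one_div_int_pow.2 one_lt_two).add (hasSum_ite_eq 0 1).summable)
  rcases eq_or_ne l 0 with rfl | hl
  · simp
  · simp only [hl, if_false, add_zero]
    exact one_div_le_one_div_of_le (by positivity) (by linarith)

/-- The constant `∑_{l ∈ ℤ} 1 / (1 + l²)`, which dominates discrete Gaussian sums. -/
def lorentzSum : ℝ := ∑' l : ℤ, 1 / (1 + (l : ℝ) ^ 2)

lemma lorentzSum_pos : 0 < lorentzSum :=
  summable_one_div_one_add_int_sq.tsum_pos (fun l => by positivity) 0 (by norm_num)

lemma exp_neg_mul_sq_le {α : ℝ} (hα : 0 < α) (t : ℝ) :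
    Real.exp (-(α * t ^ 2)) ≤ (1 + 1 / α) * (1 / (1 + t ^ 2)) := by
  rw [Real.exp_neg, mul_one_div, ← one_div, div_le_div_iff₀ (Real.exp_pos _) (by positivity)]
  calc 1 * (1 + t ^ 2) ≤ 1 + t ^ 2 + (α * t ^ 2 + 1 / α) := by
        rw [one_mul]
        exact le_add_of_nonneg_right (by positivity)
    _ = (1 + 1 / α) * (α * t ^ 2 + 1) := by field_simp; ring
    _ ≤ (1 + 1 / α) * Real.exp (α * t ^ 2) := by
        gcongr
        exact Real.add_one_le_exp _

lemma sum_exp_neg_mul_sq_le {α : ℝ} (hα : 0 < α) {N : ℕ} (a : Fin N) :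
    ∑ b : Fin N, Real.exp (-(α * ((a : ℝ) - (b : ℝ)) ^ 2)) ≤ (1 + 1 / α) * lorentzSum := by
  have hinj : Function.Injective fun b : Fin N => ((a : ℕ) : ℤ) - ((b : ℕ) : ℤ) := fun b b' h => by
    simpa [Fin.ext_iff] using h
  calc ∑ b : Fin N, Real.exp (-(α * ((a : ℝ) - (b : ℝ)) ^ 2))
      ≤ ∑ b : Fin N, (1 + 1 / α) * (1 / (1 + ((((a : ℕ) : ℤ) - ((b : ℕ) : ℤ) : ℤ) : ℝ) ^ 2)) :=
        Finset.sum_le_sum fun b _ => by simpa using exp_neg_mul_sq_le hα ((a : ℝ) - (b : ℝ))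
    _ = ∑' b : Fin N, (1 + 1 / α) * (1 / (1 + ((((a : ℕ) : ℤ) - ((b : ℕ) : ℤ) : ℤ) : ℝ) ^ 2)) :=
        (tsum_fintype _).symm
    _ ≤ ∑' l : ℤ, (1 + 1 / α) * (1 / (1 + (l : ℝ) ^ 2)) :=
        tsum_comp_le_tsum_of_inj (summable_one_div_one_add_int_sq.mul_left _)
          (fun l => by positivity) hinj
    _ = (1 + 1 / α) * lorentzSum := tsum_mul_left

variable {d : ℕ} {ι : Type*} [Fintype ι] {p : (Fin d → ℤ) → ℝ≥0∞}

/-- The kernel `∑_{m,m'} φ_p(τ_m - τ_{m'})^j cos ⟨τ_m - τ_{m'}, x⟩` attached to a finite family `τ`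
of frequencies. For `j = 0` it equals `|∑_m exp(i ⟨τ_m, x⟩)|²`, and convolution with `p`
raises `j` by one. -/
def freqKernel (p : (Fin d → ℤ) → ℝ≥0∞) (τ : ι → Fin d → ℝ) (j : ℕ) (x : Fin d → ℤ) : ℝ :=
  ∑ m, ∑ m', charFn p (τ m - τ m') ^ j * Real.cos (pairing (τ m - τ m') x)

lemma freqKernel_zero (p : (Fin d → ℤ) → ℝ≥0∞) (τ : ι → Fin d → ℝ) (x : Fin d → ℤ) :
    freqKernel p τ 0 x =
      (∑ m, Real.cos (pairing (τ m) x)) ^ 2 + (∑ m, Real.sin (pairing (τ m) x)) ^ 2 := by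
  simp only [freqKernel, sq, Finset.sum_mul_sum, ← Finset.sum_add_distrib, pow_zero, one_mul,
    pairing_sub_left, Real.cos_sub]

lemma hasSum_mul_freqKernel_sub (hp : ∑' x, p x ≠ ⊤) (heven : ∀ x, p (-x) = p x)
    (τ : ι → Fin d → ℝ) (j : ℕ) (x : Fin d → ℤ) :
    HasSum (fun y => (p y).toReal * freqKernel p τ j (x - y)) (freqKernel p τ (j + 1) x) := by
  have h := hasSum_sum (s := Finset.univ) fun m _ => hasSum_sum (s := Finset.univ) fun m' _ =>
    (hasSum_mul_cos_pairing_sub hp heven (τ m - τ m') x).mul_left (charFn p (τ m - τ m') ^ j)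
  simpa only [freqKernel, Finset.mul_sum, pow_succ, mul_assoc, mul_left_comm] using h

lemma freqKernel_nonneg (hp : ∑' x, p x ≠ ⊤) (heven : ∀ x, p (-x) = p x) (τ : ι → Fin d → ℝ)
    (j : ℕ) (x : Fin d → ℤ) : 0 ≤ freqKernel p τ j x := by
  induction j generalizing x with
  | zero =>
    rw [freqKernel_zero]
    positivity
  | succ j ih =>
    exact (hasSum_mul_freqKernel_sub hp heven τ j x).nonneg fun y =>
      mul_nonneg ENNReal.toReal_nonneg (ih _)

lemma convPow_conv_freqKernel (hp : ∑' x, p x ≠ ⊤) (heven : ∀ x, p (-x) = p x)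
    (τ : ι → Fin d → ℝ) (j : ℕ) :
    (convPow p j ⋆ fun x => ENNReal.ofReal (freqKernel p τ 0 x)) =
      fun x => ENNReal.ofReal (freqKernel p τ j x) := by
  induction j with
  | zero => exact single_conv _
  | succ j ih =>
    rw [convPow, conv_assoc, ih]
    funext x
    have hsum := hasSum_mul_freqKernel_sub hp heven τ j x
    have hnonneg (y : Fin d → ℤ) : 0 ≤ (p y).toReal * freqKernel p τ j (x - y) :=
      mul_nonneg ENNReal.toReal_nonneg (freqKernel_nonneg hp heven τ j _)
    rw [← hsum.tsum_eq, ENNReal.ofReal_tsum_of_nonneg hnonneg hsum.summable]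
    refine tsum_congr fun y => ?_
    rw [ENNReal.ofReal_mul ENNReal.toReal_nonneg,
      ENNReal.ofReal_toReal (ENNReal.ne_top_of_tsum_ne_top hp y)]

lemma card_sq_div_four_le_freqKernel_zero (p : (Fin d → ℤ) → ℝ≥0∞) {τ : ι → Fin d → ℝ}
    {x : Fin d → ℤ} (hx : ∀ m, |pairing (τ m) x| ≤ 1) :
    (Fintype.card ι : ℝ) ^ 2 / 4 ≤ freqKernel p τ 0 x := by
  have hcos : (Fintype.card ι : ℝ) / 2 ≤ ∑ m, Real.cos (pairing (τ m) x) :=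
    calc (Fintype.card ι : ℝ) / 2 = ∑ _m : ι, (1 / 2 : ℝ) := by simp [div_eq_mul_inv]
      _ ≤ ∑ m, Real.cos (pairing (τ m) x) := Finset.sum_le_sum fun m _ => by
          linarith [Real.one_sub_sq_div_two_le_cos (x := pairing (τ m) x),
            (sq_le_one_iff_abs_le_one _).2 (hx m)]
  calc (Fintype.card ι : ℝ) ^ 2 / 4 = ((Fintype.card ι : ℝ) / 2) ^ 2 := by ring
    _ ≤ (∑ m, Real.cos (pairing (τ m) x)) ^ 2 := by gcongr
    _ ≤ freqKernel p τ 0 x := by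
        rw [freqKernel_zero]
        exact le_add_of_nonneg_right (sq_nonneg _)

/-- The `N ^ d` frequencies of the grid `{0, θ, …, (N - 1)θ}^d`. -/
def gridFreq (θ : ℝ) (N : ℕ) (m : Fin d → Fin N) (i : Fin d) : ℝ := θ * (m i : ℝ)

lemma abs_gridFreq_le {θ : ℝ} (hθ : 0 ≤ θ) {N : ℕ} (m : Fin d → Fin N) (i : Fin d) :
    |gridFreq θ N m i| ≤ θ * N := by
  rw [gridFreq, abs_of_nonneg (by positivity)]
  exact mul_le_mul_of_nonneg_left (mod_cast (m i).2.le) hθ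

lemma abs_gridFreq_sub_le {θ : ℝ} (hθ : 0 ≤ θ) {N : ℕ} (m m' : Fin d → Fin N) (i : Fin d) :
    |(gridFreq θ N m - gridFreq θ N m') i| ≤ θ * N := by
  have hm (n : Fin d → Fin N) : gridFreq θ N n i ∈ Set.Icc 0 (θ * N) :=
    ⟨by unfold gridFreq; positivity, (le_abs_self _).trans (abs_gridFreq_le hθ n i)⟩
  simpa using abs_sub_le_of_le_of_le (hm m).1 (hm m).2 (hm m').1 (hm m').2

lemma IsStep.freqKernel_gridFreq_le {u s₀ : ℝ} (hp : IsStep u s₀ p) (hd : 0 < d) (hu : 0 < u)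
    (hs₀ : 0 < s₀) (hs₁ : s₀ ≤ 1) {N : ℕ} {θ : ℝ} (hθ : 0 < θ)
    (hN : θ * N ≤ s₀ ^ 2 / (10 * d ^ 2) / u) {j : ℕ} (hj : 0 < j) (x : Fin d → ℤ) :
    freqKernel p (gridFreq θ N) j x ≤
      N ^ d * ((1 + 1 / (j * θ ^ 2 * u ^ 2 / (4 * d))) * lorentzSum) ^ d := by
  set α : ℝ := j * θ ^ 2 * u ^ 2 / (4 * d) with hα
  have hterm (m m' : Fin d → Fin N) :
      charFn p (gridFreq θ N m - gridFreq θ N m') ^ j *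
        Real.cos (pairing (gridFreq θ N m - gridFreq θ N m') x) ≤
      ∏ i, Real.exp (-(α * ((m i : ℝ) - (m' i : ℝ)) ^ 2)) := by
    have hle (i : Fin d) := (abs_gridFreq_sub_le hθ.le m m' i).trans hN
    have hnonneg := hp.charFn_nonneg hd hu hs₀ hs₁ hle
    calc _ ≤ charFn p (gridFreq θ N m - gridFreq θ N m') ^ j :=
          mul_le_of_le_one_right (pow_nonneg hnonneg _) (Real.cos_le_one _)
      _ ≤ Real.exp (-((∑ i, (gridFreq θ N m - gridFreq θ N m') i ^ 2) * u ^ 2 / (4 * d))) ^ j := by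
          gcongr
          exact hp.charFn_le_exp hd hu hs₀ hle
      _ = ∏ i, Real.exp (-(α * ((m i : ℝ) - (m' i : ℝ)) ^ 2)) := by
          simp only [← Real.exp_nat_mul, ← Real.exp_sum, Finset.sum_neg_distrib, ← Finset.mul_sum,
            hα, Pi.sub_apply, gridFreq, ← mul_sub, mul_pow]
          ring_nf
  calc freqKernel p (gridFreq θ N) j x
      ≤ ∑ m : Fin d → Fin N, ∑ m' : Fin d → Fin N,
          ∏ i, Real.exp (-(α * ((m i : ℝ) - (m' i : ℝ)) ^ 2)) :=
        Finset.sum_le_sum fun m _ => Finset.sum_le_sum fun m' _ => hterm m m'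
    _ = ∑ m : Fin d → Fin N, ∏ i, ∑ b : Fin N, Real.exp (-(α * ((m i : ℝ) - (b : ℝ)) ^ 2)) := by
        simp only [Finset.prod_univ_sum, Fintype.piFinset_univ]
    _ ≤ ∑ _m : Fin d → Fin N, ∏ _i : Fin d, ((1 + 1 / α) * lorentzSum) :=
        Finset.sum_le_sum fun m _ => Finset.prod_le_prod (fun i _ => by positivity) fun i _ =>
          sum_exp_neg_mul_sq_le (by positivity) (m i)
    _ = N ^ d * ((1 + 1 / α) * lorentzSum) ^ d := by simp

lemma one_add_one_div_gridFreq_le {b u c : ℝ} (hu : 0 < u) (hb : u ≤ b) (hc : 0 < c) {j N : ℕ}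
    (hj : 0 < j) (hN₀ : 0 < N) (hN : (N : ℝ) ≤ 2 * √j) (hd : 0 < d) :
    1 + 1 / (j * (c / (N * b)) ^ 2 * u ^ 2 / (4 * d)) ≤ (1 + 16 * d / c ^ 2) * (b / u) ^ 2 := by
  have hbu : 1 ≤ (b / u) ^ 2 := one_le_pow₀ ((one_le_div hu).2 hb)
  have hNj : (N : ℝ) ^ 2 / j ≤ 4 := by
    rw [div_le_iff₀ (by positivity)]
    calc (N : ℝ) ^ 2 ≤ (2 * √j) ^ 2 := by gcongr
      _ = 4 * (j : ℝ) := by rw [mul_pow, Real.sq_sqrt (by positivity)]; norm_num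
  calc 1 + 1 / (j * (c / (N * b)) ^ 2 * u ^ 2 / (4 * d))
      = 1 + 4 * d / c ^ 2 * (b / u) ^ 2 * ((N : ℝ) ^ 2 / j) := by field_simp
    _ ≤ (b / u) ^ 2 + 4 * d / c ^ 2 * (b / u) ^ 2 * 4 := by gcongr
    _ = (1 + 16 * d / c ^ 2) * (b / u) ^ 2 := by ring

/-- The constant in the concentration bound `IsStep.convPow_conv_indicator_le`. -/
def esseenConst (d : ℕ) (s₀ : ℝ) : ℝ :=
  4 * ((1 + 16 * d / (s₀ ^ 2 / (10 * d ^ 2)) ^ 2) * lorentzSum) ^ d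

lemma esseenConst_pos (d : ℕ) (s₀ : ℝ) : 0 < esseenConst d s₀ := by
  have := lorentzSum_pos
  unfold esseenConst
  positivity

lemma indicator_closedBall_le_freqKernel {b θ : ℝ} (hθ : 0 ≤ θ) {N : ℕ} (hN₀ : 0 < N)
    (hN : d * (θ * N * b) ≤ 1) :
    (Metric.closedBall (0 : Fin d → ℤ) b).indicator 1 ≤
      ENNReal.ofReal (4 / ((N : ℝ) ^ d) ^ 2) •
        fun x => ENNReal.ofReal (freqKernel p (gridFreq θ N) 0 x) := by
  refine fun y => Set.indicator_apply_le' (fun hy => ?_) fun _ => bot_le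
  have hlower := card_sq_div_four_le_freqKernel_zero p (τ := gridFreq θ N) (x := y) fun m =>
    (abs_pairing_le (abs_gridFreq_le hθ m) y).trans <| hN.trans' <| by
      gcongr
      simpa using hy
  simp only [Pi.smul_apply, smul_eq_mul, Pi.one_apply]
  rw [← ENNReal.ofReal_mul (by positivity), ← ENNReal.ofReal_one]
  refine ENNReal.ofReal_le_ofReal ?_
  calc (1 : ℝ) = 4 / ((N : ℝ) ^ d) ^ 2 * (((N : ℝ) ^ d) ^ 2 / 4) := by field_simp
    _ ≤ _ := by
        gcongr
        simpa using hlower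

theorem IsStep.convPow_conv_indicator_le {u s₀ : ℝ} (hp : IsStep u s₀ p) (hd : 0 < d) (hu : 0 < u)
    (hs₀ : 0 < s₀) (hs₁ : s₀ ≤ 1) {b : ℝ} (hb : u ≤ b) {j : ℕ} (hj : 0 < j) (x : Fin d → ℤ) :
    (convPow p j ⋆ (Metric.closedBall 0 b).indicator 1) x ≤
      ENNReal.ofReal (esseenConst d s₀ * (b / u) ^ (2 * d) / √j ^ d) := by
  have hd₁ : (1 : ℝ) ≤ d := mod_cast hd
  have hb₀ := hu.trans_le hb
  set c : ℝ := s₀ ^ 2 / (10 * d ^ 2) with hc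
  set N := ⌈√(j : ℝ)⌉₊
  have hj₁ : 1 ≤ √(j : ℝ) := Real.one_le_sqrt.2 (mod_cast hj)
  have hN : √(j : ℝ) ≤ N := Nat.le_ceil _
  have hN₀ : 0 < N := Nat.ceil_pos.2 (by positivity)
  have hN₂ : (N : ℝ) ≤ 2 * √j := by linarith [Nat.ceil_lt_add_one (Real.sqrt_nonneg (j : ℝ))]
  have hθN : c / (N * b) * N = c / b := by field_simp
  have hdc : d * (c / (N * b) * N * b) ≤ 1 := by
    rw [hθN, div_mul_cancel₀ _ hb₀.ne', hc, ← mul_div_assoc, div_le_one (by positivity)]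
    nlinarith [pow_le_one₀ hs₀.le hs₁ (n := 2)]
  refine (conv_mono le_rfl
    (indicator_closedBall_le_freqKernel (p := p) (by positivity) hN₀ hdc) x).trans ?_
  rw [conv_smul, convPow_conv_freqKernel hp.mass_ne_top hp.symm.map_neg, Pi.smul_apply, smul_eq_mul,
    ← ENNReal.ofReal_mul (by positivity)]
  refine ENNReal.ofReal_le_ofReal ?_
  have hupper := hp.freqKernel_gridFreq_le hd hu hs₀ hs₁ (N := N) (θ := c / (N * b))
    (by positivity) (by rw [hθN]; gcongr) hj x
  have hS := lorentzSum_pos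
  set α := j * (c / (N * b)) ^ 2 * u ^ 2 / (4 * d)
  calc _ ≤ 4 / ((N : ℝ) ^ d) ^ 2 * (N ^ d * ((1 + 1 / α) * lorentzSum) ^ d) := by gcongr
    _ = 4 * ((1 + 1 / α) * lorentzSum) ^ d / (N : ℝ) ^ d := by field_simp
    _ ≤ 4 * ((1 + 16 * d / c ^ 2) * (b / u) ^ 2 * lorentzSum) ^ d / √j ^ d := by
        gcongr
        exact one_add_one_div_gridFreq_le hu hb (by positivity) hj hN₀ hN₂ hd
    _ = esseenConst d s₀ * (b / u) ^ (2 * d) / √j ^ d := by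
        rw [esseenConst, ← hc, mul_right_comm _ _ lorentzSum, mul_pow, ← pow_mul]
        ring

end EsseenInequality

section LocalLimitTheorem

variable {d : ℕ}

/-- The exponential weight `x ↦ exp (a‖x‖)` in the supremum norm. -/
def expWeight (a : ℝ) (x : Fin d → ℤ) : ℝ≥0∞ := ENNReal.ofReal (Real.exp (a * ‖x‖))

lemma expWeight_mono {a b : ℝ} (h : a ≤ b) : (expWeight a : (Fin d → ℤ) → ℝ≥0∞) ≤ expWeight b :=
  fun x => ENNReal.ofReal_le_ofReal (Real.exp_le_exp.2 (by gcongr))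

lemma expWeight_le_one {a : ℝ} (ha : a ≤ 0) (x : Fin d → ℤ) : expWeight a x ≤ 1 :=
  ENNReal.ofReal_le_one.2
    (Real.exp_le_one_iff.2 (mul_nonpos_of_nonpos_of_nonneg ha (norm_nonneg x)))

lemma expWeight_neg_sub_le {r : ℝ} (hr : 0 ≤ r) (x y : Fin d → ℤ) :
    expWeight (-r) (x - y) ≤ expWeight (-r) x * expWeight r y := by
  unfold expWeight
  rw [← ENNReal.ofReal_mul (by positivity), ← Real.exp_add]
  refine ENNReal.ofReal_le_ofReal (Real.exp_le_exp.2 ?_)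
  linarith [mul_le_mul_of_nonneg_left (norm_sub_norm_le x y) hr]

lemma conv_expWeight_neg_le {r : ℝ} (hr : 0 ≤ r) (f : (Fin d → ℤ) → ℝ≥0∞) :
    f ⋆ expWeight (-r) ≤ (∑' y, expWeight r y * f y) • expWeight (-r) := fun x =>
  calc (f ⋆ expWeight (-r)) x
      ≤ ∑' y, expWeight r y * f y * expWeight (-r) x := ENNReal.tsum_le_tsum fun y =>
        (mul_le_mul' le_rfl (expWeight_neg_sub_le hr x y)).trans_eq (by ring)
    _ = ((∑' y, expWeight r y * f y) • expWeight (-r)) x := ENNReal.tsum_mul_right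

lemma expWeight_neg_sub_sub_le {l r : ℝ} (hl : 0 ≤ l) (hlr : l ≤ r) (x y z : Fin d → ℤ) :
    expWeight (-(2 * r)) (x - y - z) ≤ expWeight (-l) x *
      ((expWeight (2 * l) y + expWeight (2 * l) z) * expWeight (-r) (x - y - z)) := by
  have htri : ‖x‖ ≤ ‖x - y - z‖ + ‖y‖ + ‖z‖ := by
    linarith [norm_sub_norm_le x y, norm_sub_norm_le (x - y) z]
  have hmax : Real.exp (l * (‖y‖ + ‖z‖)) ≤ Real.exp (2 * l * ‖y‖) + Real.exp (2 * l * ‖z‖) := by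
    rcases le_total ‖y‖ ‖z‖ with h | h
    · exact (Real.exp_le_exp.2 (by nlinarith)).trans (le_add_of_nonneg_left (Real.exp_pos _).le)
    · exact (Real.exp_le_exp.2 (by nlinarith)).trans (le_add_of_nonneg_right (Real.exp_pos _).le)
  unfold expWeight
  rw [← ENNReal.ofReal_add (by positivity) (by positivity), ← ENNReal.ofReal_mul (by positivity),
    ← ENNReal.ofReal_mul (by positivity)]
  refine ENNReal.ofReal_le_ofReal ?_
  calc Real.exp (-(2 * r) * ‖x - y - z‖)
      ≤ Real.exp (-l * ‖x‖) * (Real.exp (l * (‖y‖ + ‖z‖)) * Real.exp (-r * ‖x - y - z‖)) := by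
        rw [← Real.exp_add, ← Real.exp_add]
        refine Real.exp_le_exp.2 ?_
        linarith [mul_le_mul_of_nonneg_left htri hl,
          mul_le_mul_of_nonneg_right hlr (norm_nonneg (x - y - z))]
    _ ≤ _ := by gcongr

lemma conv_conv_expWeight_neg_le {l r : ℝ} (hl : 0 ≤ l) (hlr : l ≤ r) (f g : (Fin d → ℤ) → ℝ≥0∞)
    (x : Fin d → ℤ) :
    (f ⋆ g ⋆ expWeight (-(2 * r))) x ≤ expWeight (-l) x *
      (((expWeight (2 * l) * f) ⋆ (g ⋆ expWeight (-r))) x +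
        ((expWeight (2 * l) * g) ⋆ (f ⋆ expWeight (-r))) x) := by
  have hswap : (expWeight (2 * l) * g) ⋆ (f ⋆ expWeight (-r)) =
      f ⋆ ((expWeight (2 * l) * g) ⋆ expWeight (-r)) := by
    rw [← conv_assoc, conv_comm _ f, conv_assoc]
  rw [hswap, conv_assoc, conv_conv_apply_eq_tsum_prod, conv_conv_apply_eq_tsum_prod,
    conv_conv_apply_eq_tsum_prod, ← ENNReal.tsum_add, ← ENNReal.tsum_mul_left]
  refine ENNReal.tsum_le_tsum fun q => ?_
  refine (mul_le_mul' le_rfl (expWeight_neg_sub_sub_le hl hlr x q.1 q.2)).trans_eq ?_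
  simp only [Pi.mul_apply]
  ring

lemma conv_conv_expWeight_neg_le_of_le {l r : ℝ} (hl : 0 ≤ l) (hlr : l ≤ r)
    {f g : (Fin d → ℤ) → ℝ≥0∞} {A B : ℝ≥0∞} (hfA : ∀ x, (f ⋆ expWeight (-r)) x ≤ A)
    (hgA : ∀ x, (g ⋆ expWeight (-r)) x ≤ A) (hfB : ∑' x, expWeight (2 * l) x * f x ≤ B)
    (hgB : ∑' x, expWeight (2 * l) x * g x ≤ B) :
    f ⋆ g ⋆ expWeight (-(2 * r)) ≤ (2 * (B * A)) • expWeight (-l) := fun x =>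
  calc (f ⋆ g ⋆ expWeight (-(2 * r))) x
      ≤ expWeight (-l) x * (B * A + B * A) :=
        (conv_conv_expWeight_neg_le hl hlr f g x).trans <| mul_le_mul' le_rfl <| add_le_add
          ((conv_apply_le_tsum_mul hgA x).trans (mul_le_mul' hfB le_rfl))
          ((conv_apply_le_tsum_mul hfA x).trans (mul_le_mul' hgB le_rfl))
    _ = ((2 * (B * A)) • expWeight (-l)) x := by rw [Pi.smul_apply, smul_eq_mul]; ring

lemma tsum_expWeight_mul_le_sum_expMoment [NeZero d] (a : ℝ) (f : (Fin d → ℤ) → ℝ≥0∞) :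
    ∑' x, expWeight a x * f x ≤ ∑ i, (expMoment i a f + expMoment i (-a) f) := by
  simp only [expMoment, ← ENNReal.tsum_add]
  rw [← Summable.tsum_finsetSum fun _ _ => ENNReal.summable]
  refine ENNReal.tsum_le_tsum fun x => ?_
  calc expWeight a x * f x
      ≤ ENNReal.ofReal (∑ i, 2 * Real.cosh (a * x i)) * f x :=
        mul_le_mul' (ENNReal.ofReal_le_ofReal (exp_mul_norm_le_sum_cosh a x)) le_rfl
    _ = ∑ i, (ENNReal.ofReal (Real.exp (a * x i)) * f x
          + ENNReal.ofReal (Real.exp (-a * x i)) * f x) := by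
        rw [ENNReal.ofReal_sum_of_nonneg fun i _ => by positivity, Finset.sum_mul]
        refine Finset.sum_congr rfl fun i _ => ?_
        rw [← add_mul, ← ENNReal.ofReal_add (by positivity) (by positivity), Real.cosh_eq,
          mul_div_cancel₀ _ two_ne_zero, neg_mul]

lemma conv_tsum {Γ : Type*} [AddCommGroup Γ] (f : Γ → ℝ≥0∞) (g : ℕ → Γ → ℝ≥0∞) (x : Γ) :
    (f ⋆ fun y => ∑' n, g n y) x = ∑' n, (f ⋆ g n) x := by
  simp only [conv, ← ENNReal.tsum_mul_left]
  exact ENNReal.tsum_comm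

lemma expWeight_neg_le_tsum_indicator {κ u : ℝ} (hκ : 0 ≤ κ) (hu : 0 < u) (y : Fin d → ℤ) :
    expWeight (-(κ / u)) y ≤ ∑' n : ℕ,
      (ENNReal.ofReal (Real.exp (-κ * n)) • (Metric.closedBall 0 ((n + 1) * u)).indicator 1) y := by
  set n := ⌊‖y‖ / u⌋₊
  have hn : (n : ℝ) ≤ ‖y‖ / u := Nat.floor_le (by positivity)
  have hy : y ∈ Metric.closedBall 0 ((n + 1) * u) := by
    rw [mem_closedBall_zero_iff, ← div_le_iff₀ hu]
    exact (Nat.lt_floor_add_one _).le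
  refine le_trans ?_ (ENNReal.le_tsum n)
  rw [Pi.smul_apply, Set.indicator_of_mem hy, Pi.one_apply, smul_eq_mul, mul_one]
  refine ENNReal.ofReal_le_ofReal (Real.exp_le_exp.2 ?_)
  calc -(κ / u) * ‖y‖ = -κ * (‖y‖ / u) := by ring
    _ ≤ -κ * n := mul_le_mul_of_nonpos_left hn (neg_nonpos.2 hκ)

lemma summable_exp_neg_mul_mul_succ_pow {κ : ℝ} (hκ : 0 < κ) (k : ℕ) :
    Summable fun n : ℕ => Real.exp (-κ * n) * ((n : ℝ) + 1) ^ k := by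
  have h := (summable_nat_add_iff 1).2 (Real.summable_pow_mul_exp_neg_nat_mul k hκ)
  refine (h.mul_left (Real.exp κ)).congr fun n => ?_
  rw [mul_left_comm, ← Real.exp_add, mul_comm]
  push_cast
  ring_nf

/-- The constant in the uniform bound `IsStep.convPow_conv_expWeight_neg_le_ofReal`. -/
def concentrationConst (d : ℕ) (s₀ κ : ℝ) : ℝ :=
  esseenConst d s₀ * ∑' n : ℕ, Real.exp (-κ * n) * ((n : ℝ) + 1) ^ (2 * d)

lemma concentrationConst_nonneg (d : ℕ) (s₀ κ : ℝ) : 0 ≤ concentrationConst d s₀ κ :=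
  mul_nonneg (esseenConst_pos d s₀).le (tsum_nonneg fun n => by positivity)

namespace IsStep

variable {p : (Fin d → ℤ) → ℝ≥0∞} {u s₀ : ℝ}

lemma convPow_conv_expWeight_neg_le_ofReal (hp : IsStep u s₀ p) (hd : 0 < d) (hu : 0 < u)
    (hs₀ : 0 < s₀) (hs₁ : s₀ ≤ 1) {κ : ℝ} (hκ : 0 < κ) {j : ℕ} (hj : 0 < j) (x : Fin d → ℤ) :
    (convPow p j ⋆ expWeight (-(κ / u))) x ≤
      ENNReal.ofReal (concentrationConst d s₀ κ / √j ^ d) := by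
  have hsum := summable_exp_neg_mul_mul_succ_pow hκ (2 * d)
  have hC := esseenConst_pos d s₀
  have hterm (n : ℕ) : (convPow p j ⋆ (ENNReal.ofReal (Real.exp (-κ * n)) •
      (Metric.closedBall 0 ((n + 1) * u)).indicator 1)) x ≤
      ENNReal.ofReal (esseenConst d s₀ / √j ^ d *
        (Real.exp (-κ * n) * ((n : ℝ) + 1) ^ (2 * d))) := by
    have hb : u ≤ ((n : ℝ) + 1) * u := le_mul_of_one_le_left hu.le (by simp)
    rw [conv_smul, Pi.smul_apply, smul_eq_mul]
    refine (mul_le_mul' le_rfl (hp.convPow_conv_indicator_le hd hu hs₀ hs₁ hb hj x)).trans_eq ?_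
    rw [← ENNReal.ofReal_mul (by positivity), mul_div_cancel_right₀ _ hu.ne']
    ring_nf
  calc (convPow p j ⋆ expWeight (-(κ / u))) x
      ≤ ∑' n : ℕ, (convPow p j ⋆ (ENNReal.ofReal (Real.exp (-κ * n)) •
          (Metric.closedBall 0 ((n + 1) * u)).indicator 1)) x := by
        rw [← conv_tsum]
        exact conv_mono le_rfl (expWeight_neg_le_tsum_indicator hκ.le hu) x
    _ ≤ ∑' n : ℕ, ENNReal.ofReal
          (esseenConst d s₀ / √j ^ d * (Real.exp (-κ * n) * ((n : ℝ) + 1) ^ (2 * d))) :=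
        ENNReal.tsum_le_tsum hterm
    _ = ENNReal.ofReal (concentrationConst d s₀ κ / √j ^ d) := by
        rw [← ENNReal.ofReal_tsum_of_nonneg (fun n => by positivity) (hsum.mul_left _),
          tsum_mul_left, concentrationConst, div_mul_eq_mul_div]

lemma expMoment_le (hp : IsStep u s₀ p) (hu : 0 < u) (hs₀ : 0 < s₀) (hs₁ : s₀ ≤ 1) {s : ℝ}
    (hs : |s| ≤ s₀) (i : Fin d) :
    expMoment i (s / u) p ≤ ENNReal.ofReal (Real.exp (3 * (s / s₀) ^ 2)) := by
  have hd : (1 : ℝ) ≤ d := mod_cast i.pos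
  have hle := hp.symm.expMoment_le hu hs₀ hs (by simp [hp.mass, hp.variance]) i
    (by simpa [hp.mass] using hp.exp_le i)
  rw [hp.mass, mul_one] at hle
  refine hle.trans (ENNReal.ofReal_le_ofReal ?_)
  have hr : (s / s₀) ^ 2 ≤ 1 := by
    rwa [sq_le_one_iff_abs_le_one, abs_div, abs_of_pos hs₀, div_le_one hs₀]
  have hquadratic : s ^ 2 / (2 * d) ≤ (s / s₀) ^ 2 := by
    rw [div_pow]
    gcongr
    linarith [pow_le_one₀ hs₀.le hs₁ (n := 2)]
  have hquartic : (s / s₀) ^ 4 ≤ (s / s₀) ^ 2 := by nlinarith [sq_nonneg (s / s₀)]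
  linarith [Real.add_one_le_exp (3 * (s / s₀) ^ 2)]

lemma tsum_expWeight_mul_convPow_le (hp : IsStep u s₀ p) (hd : 0 < d) (hu : 0 < u) (hs₀ : 0 < s₀)
    (hs₁ : s₀ ≤ 1) {s B : ℝ} (hs : |s| ≤ s₀) {j : ℕ} (hB : j * (3 * (s / s₀) ^ 2) ≤ B) :
    ∑' y, expWeight (s / u) y * convPow p j y ≤ ENNReal.ofReal (2 * d * Real.exp B) := by
  have : NeZero d := ⟨hd.ne'⟩
  have hmoment (i : Fin d) : expMoment i (s / u) (convPow p j) ≤ ENNReal.ofReal (Real.exp B) := by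
    rw [expMoment_convPow]
    refine (pow_le_pow_left₀ bot_le (hp.expMoment_le hu hs₀ hs₁ hs i) j).trans ?_
    rw [← ENNReal.ofReal_pow (by positivity), ← Real.exp_nat_mul]
    exact ENNReal.ofReal_le_ofReal (Real.exp_le_exp.2 hB)
  have hneg (i : Fin d) :
      expMoment i (-(s / u)) (convPow p j) = expMoment i (s / u) (convPow p j) := by
    rw [expMoment_convPow, expMoment_convPow, expMoment_neg hp.symm.map_neg]
  calc ∑' y, expWeight (s / u) y * convPow p j y
      ≤ ∑ i, (expMoment i (s / u) (convPow p j) + expMoment i (-(s / u)) (convPow p j)) :=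
        tsum_expWeight_mul_le_sum_expMoment _ _
    _ ≤ ∑ _i : Fin d, (ENNReal.ofReal (Real.exp B) + ENNReal.ofReal (Real.exp B)) := by
        gcongr with i
        · exact hmoment i
        · exact (hneg i).trans_le (hmoment i)
    _ = ENNReal.ofReal (2 * d * Real.exp B) := by
        rw [Finset.sum_const, Finset.card_univ, Fintype.card_fin, nsmul_eq_mul, ← two_mul,
          ENNReal.ofReal_mul (by positivity), ENNReal.ofReal_mul (by norm_num),
          ENNReal.ofReal_natCast, ENNReal.ofReal_ofNat]
        ring

end IsStep

/-- The constant in the local limit estimate `IsStep.convPow_conv_expWeight_neg_le`. -/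
def localLimitConst (d : ℕ) (s₀ : ℝ) : ℝ :=
  4 * d * Real.exp 1 * 2 ^ d * max 1 (concentrationConst d s₀ (s₀ / 8))

lemma one_le_localLimitConst {d : ℕ} (hd : 0 < d) (s₀ : ℝ) : 1 ≤ localLimitConst d s₀ := by
  have hd₁ : (1 : ℝ) ≤ d := mod_cast hd
  have he : 1 ≤ Real.exp 1 := Real.one_le_exp zero_le_one
  have hpow : (1 : ℝ) ≤ 2 ^ d := one_le_pow₀ one_le_two
  have hmax : 1 ≤ max 1 (concentrationConst d s₀ (s₀ / 8)) := le_max_left _ _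
  calc (1 : ℝ) = 1 * 1 * 1 * 1 * 1 := by norm_num
    _ ≤ localLimitConst d s₀ := by
        unfold localLimitConst
        gcongr
        norm_num

namespace IsStep

variable {p : (Fin d → ℤ) → ℝ≥0∞} {u s₀ : ℝ}

lemma convPow_conv_expWeight_neg_le_of_lt_four (hp : IsStep u s₀ p) (hd : 0 < d) (hu : 0 < u)
    (hs₀ : 0 < s₀) (hs₁ : s₀ ≤ 1) {j : ℕ} (hj : 0 < j) (hj₄ : j < 4) :
    convPow p j ⋆ expWeight (-(s₀ / 4 / u)) ≤
      ENNReal.ofReal (localLimitConst d s₀ / √j ^ d) • expWeight (-(s₀ / 4 / (u * √j))) := by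
  have hj₁ : 1 ≤ √(j : ℝ) := Real.one_le_sqrt.2 (mod_cast hj)
  have hj₂ : √(j : ℝ) ≤ 2 := Real.sqrt_le_iff.2 ⟨zero_le_two, by norm_num; exact_mod_cast hj₄.le⟩
  have hj₃ : (j : ℝ) ≤ 3 := mod_cast Nat.le_of_lt_succ hj₄
  have hmass := hp.tsum_expWeight_mul_convPow_le hd hu hs₀ hs₁ (s := s₀ / 4) (j := j) (B := 1)
    (by rw [abs_of_pos (by positivity)]; linarith) (by
      rw [div_right_comm, div_self hs₀.ne']
      linarith)
  have hconst : 2 * d * Real.exp 1 ≤ localLimitConst d s₀ / √j ^ d := by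
    rw [le_div_iff₀ (by positivity), localLimitConst]
    calc 2 * d * Real.exp 1 * √j ^ d ≤ 4 * d * Real.exp 1 * 2 ^ d * 1 := by
          rw [mul_one]
          gcongr
          norm_num
      _ ≤ _ := by
          gcongr
          exact le_max_left _ _
  refine (conv_expWeight_neg_le (by positivity) _).trans fun x => mul_le_mul'
    (hmass.trans (ENNReal.ofReal_le_ofReal hconst)) (expWeight_mono (neg_le_neg ?_) x)
  gcongr
  exact le_mul_of_one_le_right hu.le hj₁

lemma convPow_conv_expWeight_neg_le_of_le_four_mul (hp : IsStep u s₀ p) (hd : 0 < d) (hu : 0 < u)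
    (hs₀ : 0 < s₀) (hs₁ : s₀ ≤ 1) {j k : ℕ} (hk : 0 < k) (hjk : j ≤ 4 * k) (hj : 0 < j)
    (x : Fin d → ℤ) :
    (convPow p k ⋆ expWeight (-(s₀ / 8 / u))) x ≤
      ENNReal.ofReal (2 ^ d * concentrationConst d s₀ (s₀ / 8) / √j ^ d) := by
  refine (hp.convPow_conv_expWeight_neg_le_ofReal hd hu hs₀ hs₁ (by positivity) hk x).trans
    (ENNReal.ofReal_le_ofReal ?_)
  have hC := concentrationConst_nonneg d s₀ (s₀ / 8)
  have hsqrt : √(j : ℝ) ≤ 2 * √k :=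
    calc √(j : ℝ) ≤ √(2 ^ 2 * k) := Real.sqrt_le_sqrt (by norm_num; exact_mod_cast hjk)
      _ = 2 * √k := by rw [Real.sqrt_mul (by norm_num), Real.sqrt_sq zero_le_two]
  rw [div_le_div_iff₀ (by positivity) (by positivity), mul_comm (2 ^ d), mul_assoc, ← mul_pow]
  gcongr

lemma convPow_conv_expWeight_neg_le_of_four_le (hp : IsStep u s₀ p) (hd : 0 < d) (hu : 0 < u)
    (hs₀ : 0 < s₀) (hs₁ : s₀ ≤ 1) {j : ℕ} (hj₄ : 4 ≤ j) :
    convPow p j ⋆ expWeight (-(s₀ / 4 / u)) ≤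
      ENNReal.ofReal (localLimitConst d s₀ / √j ^ d) • expWeight (-(s₀ / 4 / (u * √j))) := by
  have hj : 0 < j := by omega
  have hj₂ : 2 ≤ √(j : ℝ) := Real.le_sqrt_of_sq_le (by norm_num; exact_mod_cast hj₄)
  set l := s₀ / 4 / (u * √j) with hl
  have htilt : 2 * l = s₀ / (2 * √j) / u := by rw [hl]; field_simp; norm_num
  have hmass {k : ℕ} (hk : k ≤ j) :
      ∑' y, expWeight (2 * l) y * convPow p k y ≤ ENNReal.ofReal (2 * d * Real.exp 1) := by
    rw [htilt]
    refine hp.tsum_expWeight_mul_convPow_le hd hu hs₀ hs₁ ?_ ?_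
    · rw [abs_of_pos (by positivity)]
      exact div_le_self hs₀.le (by linarith)
    · have hk' : (k : ℝ) ≤ j := mod_cast hk
      calc k * (3 * (s₀ / (2 * √j) / s₀) ^ 2) = 3 / 4 * (k / j) := by
            rw [div_div, mul_comm _ s₀, ← div_div, div_self hs₀.ne', div_pow, mul_pow,
              Real.sq_sqrt (by positivity)]
            ring
        _ ≤ 3 / 4 * 1 := by gcongr; exact div_le_one_of_le₀ hk' (by positivity)
        _ ≤ 1 := by norm_num
  have hsup {k : ℕ} (hk : 0 < k) (hjk : j ≤ 4 * k) :=
    hp.convPow_conv_expWeight_neg_le_of_le_four_mul hd hu hs₀ hs₁ hk hjk hj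
  have hsplit := conv_conv_expWeight_neg_le_of_le (l := l) (r := s₀ / 8 / u) (by positivity)
    (by rw [hl, div_le_div_iff₀ (by positivity) hu]; nlinarith [mul_pos hs₀ hu])
    (hsup (k := j / 2) (by omega) (by omega)) (hsup (k := j - j / 2) (by omega) (by omega))
    (hmass (Nat.div_le_self _ _)) (hmass (Nat.sub_le _ _))
  rw [← convPow_add, Nat.add_sub_cancel' (Nat.div_le_self _ _),
    show 2 * (s₀ / 8 / u) = s₀ / 4 / u by ring] at hsplit
  refine hsplit.trans fun x => mul_le_mul' ?_ le_rfl
  rw [← ENNReal.ofReal_mul (by positivity), ← ENNReal.ofReal_ofNat 2,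
    ← ENNReal.ofReal_mul (by norm_num)]
  refine ENNReal.ofReal_le_ofReal ?_
  calc 2 * (2 * d * Real.exp 1 * (2 ^ d * concentrationConst d s₀ (s₀ / 8) / √j ^ d))
      = 4 * d * Real.exp 1 * 2 ^ d * concentrationConst d s₀ (s₀ / 8) / √j ^ d := by ring
    _ ≤ localLimitConst d s₀ / √j ^ d := by
        unfold localLimitConst
        gcongr
        exact le_max_right _ _

theorem convPow_conv_expWeight_neg_le (hp : IsStep u s₀ p) (hd : 0 < d) (hu : 0 < u)
    (hs₀ : 0 < s₀) (hs₁ : s₀ ≤ 1) {j : ℕ} (hj : 0 < j) :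
    convPow p j ⋆ expWeight (-(s₀ / 4 / u)) ≤
      ENNReal.ofReal (localLimitConst d s₀ / √j ^ d) • expWeight (-(s₀ / 4 / (u * √j))) := by
  rcases lt_or_ge j 4 with hj₄ | hj₄
  · exact hp.convPow_conv_expWeight_neg_le_of_lt_four hd hu hs₀ hs₁ hj hj₄
  · exact hp.convPow_conv_expWeight_neg_le_of_four_le hd hu hs₀ hs₁ hj₄

end IsStep

end LocalLimitTheorem

section EffectiveStep

open Filter Topology

variable {d : ℕ} {c₀ : ℝ}

lemma le_tsum_convPow_of_le_add_smul_conv {Γ : Type*} [AddCommGroup Γ] [DecidableEq Γ]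
    {f g : Γ → ℝ≥0∞} {b : ℝ≥0∞}
    (h : f ≤ g + b • (g ⋆ f)) (hf : ∑' x, f x ≠ ⊤) (hb : b * ∑' x, g x < 1) (x : Γ) :
    f x ≤ ∑' j : ℕ, b ^ j * convPow g (j + 1) x := by
  have hlim : Tendsto (fun n : ℕ => ∑' j : ℕ, b ^ j * convPow g (j + 1) x +
      (b * ∑' x, g x) ^ n * ∑' x, f x) atTop (𝓝 (∑' j : ℕ, b ^ j * convPow g (j + 1) x)) := by
    simpa using tendsto_const_nhds.add (ENNReal.Tendsto.mul_const
      (ENNReal.tendsto_pow_atTop_nhds_zero_of_lt_one hb) (Or.inr hf))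
  refine ge_of_tendsto' hlim fun n => (le_sum_convPow_of_le_add_smul_conv h n x).trans ?_
  simp only [Pi.add_apply, Finset.sum_apply, Pi.smul_apply, smul_eq_mul]
  refine add_le_add (ENNReal.sum_le_tsum _) ?_
  rw [mul_pow, mul_assoc, ← tsum_convPow]
  exact mul_le_mul' le_rfl (conv_apply_le_tsum_mul (fun y => ENNReal.le_tsum y) x)

lemma expMoment_le_of_le_add_smul_conv {f g : (Fin d → ℤ) → ℝ≥0∞} {b : ℝ≥0∞}
    (h : f ≤ g + b • (g ⋆ f)) (hf : ∑' x, f x ≠ ⊤) (hb : b * ∑' x, g x < 1) (i : Fin d) (s : ℝ) :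
    expMoment i s f ≤ expMoment i s g * (1 - b * expMoment i s g)⁻¹ := by
  refine (expMoment_mono i s (le_tsum_convPow_of_le_add_smul_conv h hf hb)).trans_eq ?_
  have hterm (j : ℕ) : ∑' x : Fin d → ℤ,
      ENNReal.ofReal (Real.exp (s * x i)) * (b ^ j * convPow g (j + 1) x) =
      expMoment i s g * (b * expMoment i s g) ^ j := by
    change expMoment i s (b ^ j • convPow g (j + 1)) = _
    rw [expMoment_smul, expMoment_convPow]
    ring
  simp only [expMoment, ← ENNReal.tsum_mul_left]
  rw [ENNReal.tsum_comm]
  simp only [hterm, ENNReal.tsum_mul_left, ENNReal.tsum_geometric]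
  rfl

namespace Model

lemma effStep_eq_smul (M : Model d c₀) (β : ℝ) : M.effStep β = (M.chi β)⁻¹ • M.F β :=
  funext fun _ => ENNReal.div_eq_inv_mul

variable {M : Model d c₀} {β : ℝ}

namespace Subcritical

lemma F_eq_smul_effStep (h : M.Subcritical β) :
    M.F β = ENNReal.ofReal (M.susc β) • M.effStep β := by
  rw [effStep_eq_smul, smul_smul, h.ofReal_susc, ENNReal.mul_inv_cancel _ h.chi_ne_top, one_smul]
  exact (zero_lt_one.trans_le (one_le_chi h.1 h.2.le)).ne'

lemma tsum_effStep (h : M.Subcritical β) : ∑' x, M.effStep β x = 1 := by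
  rw [effStep_eq_smul]
  simp only [Pi.smul_apply, smul_eq_mul]
  rw [ENNReal.tsum_mul_left, tsum_F, ENNReal.inv_mul_cancel _ h.chi_ne_top]
  exact (zero_lt_one.trans_le (one_le_chi h.1 h.2.le)).ne'

lemma secondMoment_effStep (h : M.Subcritical β) :
    secondMoment (M.effStep β) = ENNReal.ofReal (M.xi β ^ 2) := by
  rw [effStep_eq_smul, secondMoment_smul, h.xi_sq, ENNReal.ofReal_div_of_pos h.susc_pos,
    h.ofReal_spread, h.ofReal_susc, ENNReal.div_eq_inv_mul]

lemma isStep_effStep_of_expMoment_le (h : M.Subcritical β) {s₀ : ℝ}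
    (hexp : ∀ i, expMoment i (s₀ / M.xi β) (M.effStep β) ≤ 2) :
    IsStep (M.xi β) s₀ (M.effStep β) where
  symm π e x := by rw [effStep, M.isSymmFun_F β π e x, effStep]
  mass := h.tsum_effStep
  variance := h.secondMoment_effStep
  exp_le := hexp

lemma expMoment_effStep_zero_le (h : M.Subcritical β) (hc : 0 < c₀) (i : Fin d) :
    expMoment i (c₀ / 100 / M.xi β) (M.effStep 0) ≤ ENNReal.ofReal (1 + 1 / 1000) := by
  have hξ := h.xi_pos hc
  have hcosh (x : Fin d → ℤ) (hx : 0 < M.K.J x) :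
      Real.cosh (c₀ / 100 / M.xi β * x i) ≤ 1 + 1 / 1000 := by
    have hR : M.K.R ≤ M.xi β / c₀ :=
      (M.K.R_le_sigma_div hc).trans (div_le_div_of_nonneg_right h.sigma_le_xi hc.le)
    have hxi : |(x i : ℝ)| ≤ M.xi β / c₀ :=
      (abs_coord_le_norm x i).trans ((supNorm_eq_norm x).ge.trans ((M.K.range_le x hx).trans hR))
    have hr : |c₀ / 100 / M.xi β * x i| ≤ 1 / 100 := by
      rw [abs_mul, abs_of_pos (by positivity)]
      refine (mul_le_mul_of_nonneg_left hxi (by positivity)).trans_eq ?_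
      field_simp
    have h₁ : Real.cosh (1 / 100) ≤ 1 + 1 / 1000 := by
      refine (Real.cosh_le_exp_half_sq _).trans
        ((Real.exp_bound_div_one_sub_of_interval (by norm_num) (by norm_num)).trans ?_)
      norm_num
    exact (Real.cosh_le_cosh.2 (hr.trans (le_abs_self _))).trans h₁
  rw [effStep_eq_smul, chi_zero, inv_one, one_smul, F_zero,
    expMoment_eq_tsum_cosh M.K.isSymmFun_weight.map_neg]
  calc ∑' x, ENNReal.ofReal (Real.cosh (c₀ / 100 / M.xi β * x i)) * M.K.weight x
      ≤ ∑' x, ENNReal.ofReal (1 + 1 / 1000) * M.K.weight x := by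
        refine ENNReal.tsum_le_tsum fun x => ?_
        rcases (M.K.nonneg x).eq_or_lt with hx | hx
        · simp [AdmissibleKernel.weight, ← hx]
        · exact mul_le_mul' (ENNReal.ofReal_le_ofReal (hcosh x hx)) le_rfl
    _ = ENNReal.ofReal (1 + 1 / 1000) := by
        rw [ENNReal.tsum_mul_left, M.K.tsum_weight, mul_one]

end Subcritical

namespace Controlled

variable {δ a b : ℝ}

lemma sub_mul_susc_mul_le (h : M.Controlled δ b) (hδ : δ ≤ 1 / 10000) (h0 : 0 ≤ a) (hab : a ≤ b)
    (hr : M.susc b ≤ 128 * M.susc a) :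
    (b - a) * (M.susc a * (1 + 1 / 1000)) ≤ 1 - 3 / 4 * (M.susc a / M.susc b) := by
  have hb := h.1.susc_pos
  have hy₁ : M.susc a / M.susc b ≤ 1 := (div_le_one hb).2 (h.1.susc_mono h0 hab)
  have hy₂ : 1 / 128 ≤ M.susc a / M.susc b := by
    rw [div_le_div_iff₀ (by norm_num) hb]
    linarith
  have hbc := h.sub_mul_susc_le (by linarith) h0 hab
  set y := M.susc a / M.susc b
  calc (b - a) * (M.susc a * (1 + 1 / 1000))
      ≤ (1 + 4 * δ) * (1 - y) * (1 + 1 / 1000) := by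
        rw [← mul_assoc]
        exact mul_le_mul_of_nonneg_right hbc (by norm_num)
    _ ≤ (1 + 1 / 512) * (1 - y) := by
        nlinarith [mul_nonneg (sub_nonneg.2 hδ) (sub_nonneg.2 hy₁)]
    _ ≤ 1 - 3 / 4 * y := by linarith

lemma expMoment_effStep_le_two (h : M.Controlled δ b) (hδ : δ ≤ 1 / 10000) (h0 : 0 ≤ a)
    (hab : a ≤ b) (hr : M.susc b ≤ 128 * M.susc a) {i : Fin d} {s : ℝ}
    (hm : expMoment i s (M.effStep a) ≤ ENNReal.ofReal (1 + 1 / 1000)) :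
    expMoment i s (M.effStep b) ≤ 2 := by
  have ha := (h.of_le h0 hab).1
  have hA := ha.susc_pos
  have hB := h.1.susc_pos
  have hba := sub_nonneg.2 hab
  have hq := h.sub_mul_susc_mul_le hδ h0 hab hr
  set m := M.susc a * (1 + 1 / 1000) with hm_def
  have hy : 0 < M.susc a / M.susc b := div_pos hA hB
  have hmF : expMoment i s (M.F a) ≤ ENNReal.ofReal m := by
    rw [ha.F_eq_smul_effStep, expMoment_smul, ENNReal.ofReal_mul hA.le]
    exact mul_le_mul' le_rfl hm
  have hlt : ENNReal.ofReal (b - a) * ∑' x, M.F a x < 1 := by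
    rw [tsum_F, ← ha.ofReal_susc, ← ENNReal.ofReal_mul hba, ENNReal.ofReal_lt_one]
    have : (b - a) * M.susc a ≤ (b - a) * m := mul_le_mul_of_nonneg_left (by linarith) hba
    linarith
  have hF : expMoment i s (M.F b) ≤ ENNReal.ofReal (2 * M.susc b) :=
    calc expMoment i s (M.F b)
        ≤ expMoment i s (M.F a) * (1 - ENNReal.ofReal (b - a) * expMoment i s (M.F a))⁻¹ :=
          expMoment_le_of_le_add_smul_conv (h.1.F_le_add_smul_conv h0 hab)
            ((M.tsum_F b).trans_ne h.1.chi_ne_top) hlt i s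
      _ ≤ ENNReal.ofReal m * (1 - ENNReal.ofReal (b - a) * ENNReal.ofReal m)⁻¹ := by gcongr
      _ = ENNReal.ofReal (m / (1 - (b - a) * m)) := by
          rw [← ENNReal.ofReal_mul hba, ← ENNReal.ofReal_one,
            ← ENNReal.ofReal_sub _ (by positivity), ← ENNReal.ofReal_inv_of_pos (by linarith),
            ← ENNReal.ofReal_mul (by positivity), div_eq_mul_inv]
      _ ≤ ENNReal.ofReal (2 * M.susc b) := by
          refine ENNReal.ofReal_le_ofReal ((div_le_iff₀ (by linarith)).2 ?_)
          have : 2 * M.susc b * (3 / 4 * (M.susc a / M.susc b)) = 3 / 2 * M.susc a := by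
            field_simp
            norm_num
          nlinarith
  rw [effStep_eq_smul, expMoment_smul, ← h.1.ofReal_susc, ← ENNReal.div_eq_inv_mul]
  refine ENNReal.div_le_of_le_mul (hF.trans_eq ?_)
  rw [ENNReal.ofReal_mul (by norm_num), ENNReal.ofReal_ofNat]

lemma sq_xi_div_xi_le (h : M.Controlled δ b) (hc : 0 < c₀) (hδ : δ ≤ 1 / 10000) (h0 : 0 ≤ a)
    (hab : a ≤ b) (hr : M.susc b = 128 * M.susc a) : (M.xi a / M.xi b) ^ 2 ≤ 1 / 64 := by
  have ha := (h.of_le h0 hab).1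
  have hratio := h.rpow_susc_div_le_sq_xi_div hc (by linarith) h0 hab
  rw [hr, mul_div_cancel_right₀ _ ha.susc_pos.ne'] at hratio
  have hpow : (64 : ℝ) ≤ 128 ^ (1 - 3 * δ) :=
    calc (64 : ℝ) = 128 ^ (6 / 7 : ℝ) := by
          rw [show (128 : ℝ) = 2 ^ (7 : ℝ) by norm_num, ← Real.rpow_mul (by norm_num)]
          norm_num
      _ ≤ 128 ^ (1 - 3 * δ) := Real.rpow_le_rpow_of_exponent_le (by norm_num) (by linarith)
  rw [← inv_div, inv_pow, one_div]
  exact inv_anti₀ (by norm_num) (hpow.trans hratio)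

lemma expMoment_effStep_le_of_susc_eq (h : M.Controlled δ b) (hc : 0 < c₀) (hc₁ : c₀ ≤ 1)
    (hδ : δ ≤ 1 / 10000) (h0 : 0 ≤ a) (hab : a ≤ b) (hr : M.susc b = 128 * M.susc a)
    (hstep : IsStep (M.xi a) (c₀ / 100) (M.effStep a)) (i : Fin d) :
    expMoment i (c₀ / 100 / M.xi b) (M.effStep a) ≤ ENNReal.ofReal (1 + 1 / 1000) := by
  have hξa := (h.of_le h0 hab).1.xi_pos hc
  have hξb := h.1.xi_pos hc
  have hr₂ := h.sq_xi_div_xi_le hc hδ h0 hab hr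
  set r := M.xi a / M.xi b with hr_def
  have hr₁ : r ≤ 1 := by nlinarith
  have hd : (1 : ℝ) ≤ d := by exact_mod_cast i.pos
  have hs : c₀ / 100 * r ≤ 1 / 100 := by nlinarith
  have hexp := hstep.symm.expMoment_le hξa (s := c₀ / 100 * r) (by positivity : 0 < c₀ / 100)
    (by rw [abs_of_pos (by positivity)]; exact mul_le_of_le_one_right (by positivity) hr₁)
    (by rw [hstep.variance, hstep.mass, mul_one]) i (by simpa [hstep.mass] using hstep.exp_le i)
  rw [hstep.mass, mul_one, mul_div_cancel_left₀ r (by positivity)] at hexp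
  have hscale : c₀ / 100 * r / M.xi a = c₀ / 100 / M.xi b := by
    rw [hr_def]
    field_simp
  rw [hscale] at hexp
  have hquad : (c₀ / 100 * r) ^ 2 / (2 * d) ≤ 1 / 10000 :=
    (div_le_self (sq_nonneg _) (by linarith)).trans
      ((pow_le_pow_left₀ (by positivity) hs 2).trans_eq (by norm_num))
  have hquart : 2 * r ^ 4 ≤ 1 / 2048 := by nlinarith [sq_nonneg r]
  exact hexp.trans (ENNReal.ofReal_le_ofReal (by linarith))

theorem isStep_effStep (h : M.Controlled δ b) (hc : 0 < c₀) (hc₁ : c₀ ≤ 1) (hδ : δ ≤ 1 / 10000) :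
    IsStep (M.xi b) (c₀ / 100) (M.effStep b) := by
  obtain ⟨n, hn⟩ := pow_unbounded_of_one_lt (M.susc b) (show (1 : ℝ) < 128 by norm_num)
  induction n generalizing b with
  | zero => exact absurd h.1.one_le_susc (by simpa using hn)
  | succ n ih =>
    refine h.1.isStep_effStep_of_expMoment_le fun i => ?_
    rcases le_or_gt (M.susc b) 128 with hb | hb
    · exact h.expMoment_effStep_le_two hδ le_rfl h.1.1 (by rwa [susc_zero, mul_one])
        (h.1.expMoment_effStep_zero_le hc i)
    obtain ⟨a, ha, hab⟩ := intermediate_value_Icc h.1.1 h.1.continuousOn_susc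
      (show M.susc b / 128 ∈ Set.Icc (M.susc 0) (M.susc b) by
        rw [susc_zero]
        constructor <;> linarith)
    have hr : M.susc b = 128 * M.susc a := by linarith
    have hstep := ih (h.of_le ha.1 ha.2) (by rw [pow_succ] at hn; linarith)
    exact h.expMoment_effStep_le_two hδ ha.1 ha.2 hr.le
      (h.expMoment_effStep_le_of_susc_eq hc hc₁ hδ ha.1 ha.2 hr hstep i)

end Controlled

end Model

end EffectiveStep

section ScaleRecursion

open Filter

variable {d : ℕ}

/-- The sum over the first `K ^ 2` steps of a walk with step size `u` of its local limit bounds at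
distance `X`, with the volume factor `u ^ d` removed. -/
def heatSum (d : ℕ) (κ X u : ℝ) (K : ℕ) : ℝ :=
  ∑ j ∈ Finset.range (K ^ 2), 1 / √(j + 1 : ℝ) ^ d * Real.exp (-(κ * X / (u * √(j + 1 : ℝ))))

lemma heatSum_nonneg (d : ℕ) (κ X u : ℝ) (K : ℕ) : 0 ≤ heatSum d κ X u K :=
  Finset.sum_nonneg fun _ _ => by positivity

lemma one_le_sqrt_natCast_add_one (j : ℕ) : 1 ≤ √(j + 1 : ℝ) :=
  Real.one_le_sqrt.2 (le_add_of_nonneg_left j.cast_nonneg)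

lemma exp_neg_div_mul_sqrt_le {c u ξ : ℝ} {K j : ℕ} (hc : 0 ≤ c) (hu : 0 < u) (hK : u * K ≤ ξ)
    (hj : j < K ^ 2) :
    Real.exp (-(c / (u * √(j + 1 : ℝ)))) ≤ Real.exp (-(c / ξ)) := by
  have hsqrt : √(j + 1 : ℝ) ≤ K := Real.sqrt_le_left K.cast_nonneg |>.2 (by exact_mod_cast hj)
  refine Real.exp_le_exp.2 (neg_le_neg (div_le_div_of_nonneg_left hc (by positivity) ?_))
  exact (mul_le_mul_of_nonneg_left hsqrt hu.le).trans hK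

lemma heatSum_le {κ X u ξ : ℝ} {K : ℕ} (hκ : 0 ≤ κ) (hX : 0 ≤ X) (hu : 0 < u) (hK : u * K ≤ ξ) :
    heatSum d κ X u K ≤ K ^ 2 * Real.exp (-(κ * X / ξ)) := by
  have hterm (j : ℕ) (hj : j ∈ Finset.range (K ^ 2)) :
      1 / √(j + 1 : ℝ) ^ d * Real.exp (-(κ * X / (u * √(j + 1 : ℝ)))) ≤
        Real.exp (-(κ * X / ξ)) := by
    have h₁ := one_le_pow₀ (n := d) (one_le_sqrt_natCast_add_one j)
    exact (mul_le_of_le_one_left (Real.exp_pos _).le ((div_le_one (by positivity)).2 h₁)).trans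
      (exp_neg_div_mul_sqrt_le (mul_nonneg hκ hX) hu hK (Finset.mem_range.1 hj))
  exact (Finset.sum_le_sum hterm).trans_eq (by simp)

/-- The constant with which `exp (-(κ * t))` is dominated by `t ^ (-d)`. -/
def expPowConst (d : ℕ) (κ : ℝ) : ℝ := max 1 (d.factorial / κ ^ d)

lemma one_le_expPowConst (d : ℕ) (κ : ℝ) : 1 ≤ expPowConst d κ := le_max_left _ _

lemma exp_neg_mul_le_expPowConst_div_pow (d : ℕ) {κ t : ℝ} (hκ : 0 < κ) (ht : 0 < t) :
    Real.exp (-(κ * t)) ≤ expPowConst d κ / t ^ d := by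
  have h := Real.pow_div_factorial_le_exp (x := κ * t) (by positivity) d
  rw [div_le_iff₀ (by positivity), mul_pow] at h
  rw [le_div_iff₀ (by positivity), Real.exp_neg, inv_mul_le_iff₀ (Real.exp_pos _)]
  calc t ^ d ≤ Real.exp (κ * t) * (d.factorial / κ ^ d) := by
        rw [← mul_div_assoc, le_div_iff₀ (by positivity)]
        linarith
    _ ≤ Real.exp (κ * t) * expPowConst d κ :=
        mul_le_mul_of_nonneg_left (le_max_right _ _) (Real.exp_pos _).le

lemma one_div_pow_mul_exp_le {κ X u r q : ℝ} (hκ : 0 < κ) (hu : 0 < u) (hq : 0 < q) (hr : 0 < r)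
    (hrX : r ≤ X) :
    1 / q ^ d * Real.exp (-(κ / 2 * (X / (u * q)))) ≤ expPowConst d (κ / 2) * (u / r) ^ d := by
  have hX : 0 < X := hr.trans_le hrX
  have hC := one_le_expPowConst d (κ / 2)
  calc 1 / q ^ d * Real.exp (-(κ / 2 * (X / (u * q))))
      ≤ 1 / q ^ d * (expPowConst d (κ / 2) / (r / (u * q)) ^ d) := by
        refine mul_le_mul_of_nonneg_left ?_ (by positivity)
        refine (exp_neg_mul_le_expPowConst_div_pow d (half_pos hκ) (by positivity)).trans ?_
        gcongr
    _ = expPowConst d (κ / 2) * (u / r) ^ d := by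
        rw [div_pow, div_pow, mul_pow]
        field_simp

lemma heatSum_le_mul_div_pow {κ X u r ξ : ℝ} {K : ℕ} (hκ : 0 < κ) (hX : 0 ≤ X) (hu : 0 < u)
    (hK : u * K ≤ ξ) (hur : u ≤ r) (hr : r ≤ X ∨ r ≤ u) :
    heatSum d κ X u K ≤
      expPowConst d (κ / 2) * K ^ 2 * (u / r) ^ d * Real.exp (-(κ / 2 * X / ξ)) := by
  have hr₀ : 0 < r := hu.trans_le hur
  have hC := one_le_expPowConst d (κ / 2)
  rcases hr with hrX | hru
  · have hterm (j : ℕ) (hj : j ∈ Finset.range (K ^ 2)) :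
        1 / √(j + 1 : ℝ) ^ d * Real.exp (-(κ * X / (u * √(j + 1 : ℝ)))) ≤
          expPowConst d (κ / 2) * (u / r) ^ d * Real.exp (-(κ / 2 * X / ξ)) := by
      have hsplit : Real.exp (-(κ * X / (u * √(j + 1 : ℝ)))) =
          Real.exp (-(κ / 2 * (X / (u * √(j + 1 : ℝ))))) *
            Real.exp (-(κ / 2 * X / (u * √(j + 1 : ℝ)))) := by
        rw [← Real.exp_add]
        congr 1
        ring
      rw [hsplit, ← mul_assoc]
      exact mul_le_mul (one_div_pow_mul_exp_le hκ hu (by positivity) hr₀ hrX)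
        (exp_neg_div_mul_sqrt_le (by positivity) hu hK (Finset.mem_range.1 hj))
        (Real.exp_pos _).le (by positivity)
    refine (Finset.sum_le_sum hterm).trans_eq ?_
    rw [Finset.sum_const, Finset.card_range, nsmul_eq_mul, Nat.cast_pow]
    ring
  · have hK₀ : 0 ≤ u * K := by positivity
    have hexp : Real.exp (-(κ * X / ξ)) ≤ Real.exp (-(κ / 2 * X / ξ)) := by
      refine Real.exp_le_exp.2 (neg_le_neg (div_le_div_of_nonneg_right ?_ (hK₀.trans hK)))
      nlinarith
    rw [le_antisymm hru hur, div_self hu.ne', one_pow, mul_one, mul_assoc]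
    exact (heatSum_le hκ.le hX hu hK).trans ((mul_le_mul_of_nonneg_left hexp (sq_nonneg _)).trans
      (le_mul_of_one_le_left (by positivity) hC))

/-- A quantity `a u` indexed by length scales `u ∈ [σ, ξ]`, bounded a priori in terms of the top
scale `ξ` and, up to ratios `K ≤ K₀`, recursively in terms of larger scales: comparing the scales
`u` and `u * K` costs `K ^ 2` steps of a walk of step size `u` and gains a factor `K ^ d`. -/
structure ScaleRecursion (d : ℕ) (κ B α X σ ξ : ℝ) (a : ℝ → ℝ) (K₀ : ℕ) : Prop where
  sigma_pos : 0 < σ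
  sigma_le : σ ≤ ξ
  nonneg : 0 ≤ X
  le_top : ∀ u, σ ≤ u → u ≤ ξ → a u ≤ B * (ξ / σ) ^ α * Real.exp (-(κ * X / ξ))
  le_heatSum_add : ∀ (u : ℝ) (K : ℕ), σ ≤ u → 1 ≤ K → K ≤ K₀ → u * K ≤ ξ →
    a u ≤ B * ((u / σ) ^ α * heatSum d κ X u K + a (u * K) / (K : ℝ) ^ d)

namespace ScaleRecursion

variable {κ B α X σ ξ r C u : ℝ} {a : ℝ → ℝ} {K K₀ : ℕ}

lemma exp_neg_le_exp_neg_half (h : ScaleRecursion d κ B α X σ ξ a K₀) (hκ : 0 < κ) :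
    Real.exp (-(κ * X / ξ)) ≤ Real.exp (-(κ / 2 * X / ξ)) := by
  refine Real.exp_le_exp.2 (neg_le_neg (div_le_div_of_nonneg_right ?_
    (h.sigma_pos.le.trans h.sigma_le)))
  nlinarith [h.nonneg]

lemma le_of_top_le_mul (h : ScaleRecursion d κ B α X σ ξ a K₀) (hκ : 0 < κ) (hB : 1 ≤ B)
    (hα : 0 ≤ α) (hα₃ : α ≤ 3) (hK : 1 ≤ K) (hσu : σ ≤ u) (huξ : u ≤ ξ) (hξ : ξ ≤ u * K) :
    a u ≤ B * (K : ℝ) ^ 3 * (u / σ) ^ α * Real.exp (-(κ / 2 * X / ξ)) := by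
  have hσ := h.sigma_pos
  have hu : 0 < u := hσ.trans_le hσu
  have hK₁ : (1 : ℝ) ≤ K := by exact_mod_cast hK
  have hratio : (ξ / σ) ^ α ≤ (K : ℝ) ^ 3 * (u / σ) ^ α :=
    calc (ξ / σ) ^ α ≤ (K * (u / σ)) ^ α := by
          refine Real.rpow_le_rpow (div_nonneg (hu.le.trans huξ) hσ.le) ?_ hα
          rw [← mul_div_assoc, mul_comm (K : ℝ)]
          gcongr
      _ = (K : ℝ) ^ α * (u / σ) ^ α := Real.mul_rpow (by positivity) (by positivity)
      _ ≤ (K : ℝ) ^ 3 * (u / σ) ^ α := by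
          rw [← Real.rpow_natCast (K : ℝ) 3]
          gcongr
          exact_mod_cast hα₃
  calc a u ≤ B * (ξ / σ) ^ α * Real.exp (-(κ * X / ξ)) := h.le_top u hσu huξ
    _ ≤ B * ((K : ℝ) ^ 3 * (u / σ) ^ α) * Real.exp (-(κ / 2 * X / ξ)) := by
        gcongr ?_ * ?_
        · gcongr
        · exact h.exp_neg_le_exp_neg_half hκ
    _ = B * (K : ℝ) ^ 3 * (u / σ) ^ α * Real.exp (-(κ / 2 * X / ξ)) := by ring

lemma mul_rpow_le_half_pow (hd : 2 < d) (hB : 1 ≤ B) (hα : α ≤ 5 / 2) (hK : 4 * B ^ 2 ≤ K) :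
    B * (K : ℝ) ^ α ≤ (K : ℝ) ^ d / 2 := by
  have hK₁ : (1 : ℝ) ≤ K := by nlinarith
  have hBK : 2 * B ≤ (K : ℝ) ^ (1 / 2 : ℝ) := by
    rw [← Real.sqrt_eq_rpow]
    exact Real.le_sqrt_of_sq_le (by linarith)
  have hpow : (K : ℝ) ^ (1 / 2 : ℝ) * (K : ℝ) ^ α ≤ (K : ℝ) ^ d := by
    rw [← Real.rpow_add (by linarith), ← Real.rpow_natCast]
    refine Real.rpow_le_rpow_of_exponent_le hK₁ ?_
    have : (3 : ℝ) ≤ d := by exact_mod_cast hd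
    linarith
  have := mul_le_mul_of_nonneg_right hBK (Real.rpow_nonneg K.cast_nonneg α)
  linarith

lemma div_mul_rpow (hσ : 0 < σ) (hu : 0 < u) (K : ℕ) (α : ℝ) :
    (u * K / σ) ^ α = (u / σ) ^ α * (K : ℝ) ^ α := by
  rw [← Real.mul_rpow (by positivity) (by positivity), div_mul_eq_mul_div]

lemma le_of_le_next (h : ScaleRecursion d κ B α X σ ξ a K₀) (hd : 2 < d) (hκ : 0 < κ)
    (hB : 1 ≤ B) (hα : α ≤ 5 / 2) (hKB : 4 * B ^ 2 ≤ K) (hK₀ : K ≤ K₀) (hσu : σ ≤ u)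
    (huξ : u * K ≤ ξ)
    (hnext : a (u * K) ≤
      2 * B * (K : ℝ) ^ 3 * (u * K / σ) ^ α * Real.exp (-(κ / 2 * X / ξ))) :
    a u ≤ 2 * B * (K : ℝ) ^ 3 * (u / σ) ^ α * Real.exp (-(κ / 2 * X / ξ)) := by
  have hσ := h.sigma_pos
  have hu : 0 < u := hσ.trans_le hσu
  have hK₁ : (1 : ℝ) ≤ K := by nlinarith
  have hheat := (heatSum_le (d := d) hκ.le h.nonneg hu huξ).trans
    (mul_le_mul_of_nonneg_left (h.exp_neg_le_exp_neg_half hκ) (sq_nonneg _))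
  have hrec := h.le_heatSum_add u K hσu (by exact_mod_cast hK₁) hK₀ huξ
  set D := Real.exp (-(κ / 2 * X / ξ))
  have hwalk : (u / σ) ^ α * heatSum d κ X u K ≤ (K : ℝ) ^ 3 * (u / σ) ^ α * D :=
    calc (u / σ) ^ α * heatSum d κ X u K ≤ (u / σ) ^ α * ((K : ℝ) ^ 2 * D) := by gcongr
      _ ≤ (u / σ) ^ α * ((K : ℝ) ^ 3 * D) := by
          gcongr
          norm_num
      _ = (K : ℝ) ^ 3 * (u / σ) ^ α * D := by ring
  have hscale : B * (a (u * K) / (K : ℝ) ^ d) ≤ B * (K : ℝ) ^ 3 * (u / σ) ^ α * D := by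
    rw [← mul_div_assoc, div_le_iff₀ (by positivity)]
    calc B * a (u * K) ≤ B * (2 * B * (K : ℝ) ^ 3 * (u * K / σ) ^ α * D) := by gcongr
      _ = 2 * B * (K : ℝ) ^ 3 * (u / σ) ^ α * D * (B * (K : ℝ) ^ α) := by
          rw [div_mul_rpow hσ hu]
          ring
      _ ≤ 2 * B * (K : ℝ) ^ 3 * (u / σ) ^ α * D * ((K : ℝ) ^ d / 2) := by
          gcongr
          exact mul_rpow_le_half_pow hd hB hα hKB
      _ = B * (K : ℝ) ^ 3 * (u / σ) ^ α * D * (K : ℝ) ^ d := by ring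
  have := mul_le_mul_of_nonneg_left hwalk (zero_le_one.trans hB)
  linarith

lemma le_mul_rpow (h : ScaleRecursion d κ B α X σ ξ a K₀) (hd : 2 < d) (hκ : 0 < κ)
    (hB : 1 ≤ B) (hα₀ : 0 ≤ α) (hα : α ≤ 5 / 2) (hKB : 4 * B ^ 2 ≤ K) (hK₀ : K ≤ K₀)
    (hσu : σ ≤ u) (huξ : u ≤ ξ) :
    a u ≤ 2 * B * (K : ℝ) ^ 3 * (u / σ) ^ α * Real.exp (-(κ / 2 * X / ξ)) := by
  have hσ := h.sigma_pos
  have hK₁ : (1 : ℝ) < K := by nlinarith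
  have hbase (v : ℝ) (hσv : σ ≤ v) (hvξ : v ≤ ξ) (hξ : ξ ≤ v * K) :
      a v ≤ 2 * B * (K : ℝ) ^ 3 * (v / σ) ^ α * Real.exp (-(κ / 2 * X / ξ)) := by
    have hle := h.le_of_top_le_mul hκ hB hα₀ (by linarith) (by exact_mod_cast hK₁.le) hσv hvξ hξ
    have hv : 0 < v := hσ.trans_le hσv
    refine hle.trans ?_
    gcongr ?_ * _ * _ * _
    linarith
  obtain ⟨n, hn⟩ := pow_unbounded_of_one_lt (ξ / u) hK₁
  rw [div_lt_iff₀ (hσ.trans_le hσu)] at hn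
  induction n generalizing u with
  | zero => exact hbase u hσu huξ (by nlinarith)
  | succ n ih =>
    rcases le_total ξ (u * K) with hξ | hξ
    · exact hbase u hσu huξ hξ
    · refine h.le_of_le_next hd hκ hB hα hKB hK₀ hσu hξ (ih ?_ hξ ?_)
      · nlinarith
      · rw [pow_succ] at hn
        linarith

lemma rpow_mul_heatSum_le (h : ScaleRecursion d κ B α X σ ξ a K₀) (hκ : 0 < κ) (hα : 2 ≤ α)
    (hr : r ≤ X ∨ r ≤ σ) (hrξ : r ≤ ξ) (hσu : σ ≤ u) (hK : 1 ≤ K) (hKr : u * K ≤ r) :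
    (u / σ) ^ α * heatSum d κ X u K ≤
      expPowConst d (κ / 2) * ((r / σ) ^ α * (u / r) ^ d * Real.exp (-(κ / 2 * X / ξ))) := by
  have hσ := h.sigma_pos
  have hu : 0 < u := hσ.trans_le hσu
  have hK₁ : (1 : ℝ) ≤ K := by exact_mod_cast hK
  have hur : u ≤ r := (le_mul_of_one_le_right hu.le hK₁).trans hKr
  have hr₀ : 0 < r := hu.trans_le hur
  have hC := one_le_expPowConst d (κ / 2)
  have hheat := heatSum_le_mul_div_pow (d := d) hκ h.nonneg hu (hKr.trans hrξ) hur
    (hr.imp_right fun hle => hle.trans hσu)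
  set D := Real.exp (-(κ / 2 * X / ξ))
  have hpow : (u / σ) ^ α * (K : ℝ) ^ 2 ≤ (r / σ) ^ α :=
    calc (u / σ) ^ α * (K : ℝ) ^ 2 ≤ (u / σ) ^ α * (K : ℝ) ^ α := by
          rw [← Real.rpow_natCast (K : ℝ) 2]
          gcongr
          exact_mod_cast hα
      _ = (u * K / σ) ^ α := (div_mul_rpow hσ hu K α).symm
      _ ≤ (r / σ) ^ α := by gcongr
  calc (u / σ) ^ α * heatSum d κ X u K
      ≤ (u / σ) ^ α * (expPowConst d (κ / 2) * K ^ 2 * (u / r) ^ d * D) := by gcongr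
    _ = (u / σ) ^ α * (K : ℝ) ^ 2 * (expPowConst d (κ / 2) * (u / r) ^ d * D) := by ring
    _ ≤ (r / σ) ^ α * (expPowConst d (κ / 2) * (u / r) ^ d * D) := by gcongr
    _ = expPowConst d (κ / 2) * ((r / σ) ^ α * (u / r) ^ d * D) := by ring

lemma le_of_radius_le_mul (h : ScaleRecursion d κ B α X σ ξ a K₀) (hκ : 0 < κ) (hB : 1 ≤ B)
    (hα : 2 ≤ α) (hr : r ≤ X ∨ r ≤ σ) (hrξ : r ≤ ξ) (hC : 0 ≤ C)
    (hcoarse : ∀ v, σ ≤ v → v ≤ ξ → a v ≤ C * (v / σ) ^ α * Real.exp (-(κ / 2 * X / ξ)))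
    (hK : K ≤ K₀) (hσu : σ ≤ u) (hur : u ≤ r) (hrK : r ≤ u * K) :
    a u ≤ B * (expPowConst d (κ / 2) + 2 ^ d * C) *
      ((r / σ) ^ α * (u / r) ^ d * Real.exp (-(κ / 2 * X / ξ))) := by
  have hσ := h.sigma_pos
  have hu : 0 < u := hσ.trans_le hσu
  have hr₀ : 0 < r := hu.trans_le hur
  obtain ⟨N, hN₁, hNr, hrN⟩ : ∃ N : ℕ, 1 ≤ N ∧ u * N ≤ r ∧ r ≤ 2 * u * N := by
    have hru : 1 ≤ r / u := (one_le_div hu).2 hur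
    have hN : 1 ≤ ⌊r / u⌋₊ := (Nat.one_le_floor_iff _).2 hru
    have hN' : (1 : ℝ) ≤ ⌊r / u⌋₊ := by exact_mod_cast hN
    refine ⟨⌊r / u⌋₊, hN, ?_, ?_⟩
    · rw [mul_comm, ← le_div_iff₀ hu]
      exact Nat.floor_le (by positivity)
    · have hlt := (div_lt_iff₀ hu).1 (Nat.lt_floor_add_one (r / u))
      nlinarith
  have hNK : N ≤ K := by
    have : (N : ℝ) ≤ K := le_of_mul_le_mul_left (hNr.trans hrK) hu
    exact_mod_cast this
  have hN₀ : (1 : ℝ) ≤ N := by exact_mod_cast hN₁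
  have hwalk := h.rpow_mul_heatSum_le hκ hα hr hrξ hσu hN₁ hNr
  have hrec := h.le_heatSum_add u N hσu hN₁ (hNK.trans hK) (hNr.trans hrξ)
  have hnext := hcoarse (u * N) (hσu.trans (le_mul_of_one_le_right hu.le hN₀)) (hNr.trans hrξ)
  set D := Real.exp (-(κ / 2 * X / ξ))
  have hscale : a (u * N) / (N : ℝ) ^ d ≤ 2 ^ d * C * ((r / σ) ^ α * (u / r) ^ d * D) := by
    rw [div_le_iff₀ (by positivity)]
    have hone : 1 ≤ (2 * u / r * N) ^ d := one_le_pow₀ (by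
      rw [div_mul_eq_mul_div]
      exact (one_le_div hr₀).2 hrN)
    calc a (u * N) ≤ C * (u * N / σ) ^ α * D := hnext
      _ ≤ C * (r / σ) ^ α * D := by gcongr
      _ ≤ C * (r / σ) ^ α * D * (2 * u / r * N) ^ d := le_mul_of_one_le_right (by positivity) hone
      _ = 2 ^ d * C * ((r / σ) ^ α * (u / r) ^ d * D) * (N : ℝ) ^ d := by
          rw [mul_div_assoc, mul_pow, mul_pow]
          ring
  calc a u ≤ B * ((u / σ) ^ α * heatSum d κ X u N + a (u * N) / (N : ℝ) ^ d) := hrec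
    _ ≤ B * (expPowConst d (κ / 2) * ((r / σ) ^ α * (u / r) ^ d * D) +
        2 ^ d * C * ((r / σ) ^ α * (u / r) ^ d * D)) := by gcongr
    _ = B * (expPowConst d (κ / 2) + 2 ^ d * C) * ((r / σ) ^ α * (u / r) ^ d * D) := by ring

lemma le_pow_mul (h : ScaleRecursion d κ B α X σ ξ a K₀) (hκ : 0 < κ) (hB : 1 ≤ B)
    (hα : 2 ≤ α) (hr : r ≤ X ∨ r ≤ σ) (hrξ : r ≤ ξ) {A : ℝ}
    (hA : B * (expPowConst d (κ / 2) + 1) ≤ A) (hK : 1 ≤ K) (hK₀ : K ≤ K₀)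
    (hbase : ∀ v, σ ≤ v → v ≤ r → r ≤ v * K →
      a v ≤ A * ((r / σ) ^ α * (v / r) ^ d * Real.exp (-(κ / 2 * X / ξ))))
    (n : ℕ) (hσu : σ ≤ u) (hur : u ≤ r) (hrK : r ≤ u * (K : ℝ) ^ (n + 1)) :
    a u ≤ A ^ (n + 1) * ((r / σ) ^ α * (u / r) ^ d * Real.exp (-(κ / 2 * X / ξ))) := by
  have hσ := h.sigma_pos
  have hK₁ : (1 : ℝ) ≤ K := by exact_mod_cast hK
  have hC := one_le_expPowConst d (κ / 2)
  have hA₁ : 1 ≤ A := by nlinarith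
  induction n generalizing u with
  | zero => simpa using hbase u hσu hur (by simpa using hrK)
  | succ n ih =>
    have hu : 0 < u := hσ.trans_le hσu
    have hr₀ : 0 < r := hu.trans_le hur
    have hAn : 1 ≤ A ^ (n + 1) := one_le_pow₀ hA₁
    rcases le_total r (u * K) with hrK | hKr
    · refine (hbase u hσu hur hrK).trans ?_
      gcongr
      exact le_self_pow₀ hA₁ (by omega)
    have hwalk := h.rpow_mul_heatSum_le hκ hα hr hrξ hσu hK hKr
    have hrec := h.le_heatSum_add u K hσu hK hK₀ (hKr.trans hrξ)
    have hnext := ih (hσu.trans (le_mul_of_one_le_right hu.le hK₁)) hKr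
      (by rwa [mul_assoc, ← pow_succ'])
    set D := Real.exp (-(κ / 2 * X / ξ))
    have hscale :
        a (u * K) / (K : ℝ) ^ d ≤ A ^ (n + 1) * ((r / σ) ^ α * (u / r) ^ d * D) := by
      rw [div_le_iff₀ (by positivity)]
      refine hnext.trans_eq ?_
      rw [div_pow, div_pow, mul_pow]
      ring
    have hconst : B * (expPowConst d (κ / 2) + A ^ (n + 1)) ≤ A ^ (n + 1 + 1) := by
      rw [pow_succ A (n + 1)]
      nlinarith [mul_nonneg (sub_nonneg.2 hAn) (zero_le_one.trans hC)]
    calc a u ≤ B * ((u / σ) ^ α * heatSum d κ X u K + a (u * K) / (K : ℝ) ^ d) := hrec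
      _ ≤ B * (expPowConst d (κ / 2) * ((r / σ) ^ α * (u / r) ^ d * D) +
          A ^ (n + 1) * ((r / σ) ^ α * (u / r) ^ d * D)) := by gcongr
      _ = B * (expPowConst d (κ / 2) + A ^ (n + 1)) * ((r / σ) ^ α * (u / r) ^ d * D) := by ring
      _ ≤ A ^ (n + 1 + 1) * ((r / σ) ^ α * (u / r) ^ d * D) := by gcongr

lemma pow_mul_rpow_mul_pow_le {A ε : ℝ} {n : ℕ} (hσ : 0 < σ) (hr : 0 < r) (hε : 0 ≤ ε)
    (hA : 0 ≤ A) (hAK : A ≤ (K : ℝ) ^ (ε / 2)) (hn : (K : ℝ) ^ n ≤ r / σ) :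
    A ^ n * ((r / σ) ^ (2 + ε / 2) * (σ / r) ^ d) ≤ (σ / r) ^ ((d : ℝ) - 2 - ε) := by
  have hq : 0 < r / σ := div_pos hr hσ
  have hAn : A ^ n ≤ (r / σ) ^ (ε / 2) :=
    calc A ^ n ≤ ((K : ℝ) ^ (ε / 2)) ^ n := by gcongr
      _ = ((K : ℝ) ^ n) ^ (ε / 2) := by
          rw [← Real.rpow_mul_natCast (by positivity), mul_comm, Real.rpow_mul (by positivity),
            Real.rpow_natCast]
      _ ≤ (r / σ) ^ (ε / 2) := by gcongr
  have hsplit : (σ / r) ^ ((d : ℝ) - 2 - ε) =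
      (r / σ) ^ (ε / 2) * ((r / σ) ^ (2 + ε / 2) * (σ / r) ^ d) := by
    rw [← inv_div r σ, Real.inv_rpow hq.le, ← Real.rpow_neg hq.le, ← Real.rpow_natCast,
      Real.inv_rpow hq.le, ← Real.rpow_neg hq.le, ← Real.rpow_add hq, ← Real.rpow_add hq]
    congr 1
    ring
  rw [hsplit]
  gcongr

/-- The constant in the bound obtained from a scale recursion whose coarse bound uses the ratio
`K`. -/
def recursionConst (d : ℕ) (κ B : ℝ) (K : ℕ) : ℝ :=
  B * (expPowConst d (κ / 2) + 2 ^ d * (2 * B * (K : ℝ) ^ 3))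

lemma mul_expPowConst_add_one_le_recursionConst (d : ℕ) (κ : ℝ) (hB : 1 ≤ B) (hK : 1 ≤ K) :
    B * (expPowConst d (κ / 2) + 1) ≤ recursionConst d κ B K := by
  have hK₁ : (1 : ℝ) ≤ (K : ℝ) ^ 3 := one_le_pow₀ (by exact_mod_cast hK)
  have h₂ : (1 : ℝ) ≤ 2 ^ d := one_le_pow₀ (by norm_num)
  have hBK : 1 ≤ 2 * B * (K : ℝ) ^ 3 := by nlinarith
  rw [recursionConst]
  gcongr
  exact one_le_mul_of_one_le_of_one_le h₂ hBK

lemma recursionConst_pos (d : ℕ) (κ : ℝ) (hB : 1 ≤ B) (hK : 1 ≤ K) :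
    0 < recursionConst d κ B K :=
  (mul_pos (by linarith) (by linarith [one_le_expPowConst d (κ / 2)])).trans_le
    (mul_expPowConst_add_one_le_recursionConst d κ hB hK)

lemma le_recursionConst_mul {ε : ℝ} (h : ScaleRecursion d κ B (2 + ε / 2) X σ ξ a K₀)
    (hd : 2 < d) (hκ : 0 < κ) (hB : 1 ≤ B) (hε₀ : 0 ≤ ε) (hε₁ : ε ≤ 1) {K₁ : ℕ}
    (hK₁B : 4 * B ^ 2 ≤ K₁) (hK₁ : K₁ ≤ K₀) (hK₂ : 2 ≤ K) (hK : K ≤ K₀)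
    (hKε : recursionConst d κ B K₁ ≤ (K : ℝ) ^ (ε / 2)) :
    a σ ≤ recursionConst d κ B K₁ * (σ / max σ (min X ξ)) ^ ((d : ℝ) - 2 - ε) *
      Real.exp (-(κ / 2 * X / ξ)) := by
  have hσ := h.sigma_pos
  have hK₁₁ : 1 ≤ K₁ := by
    have : (1 : ℝ) ≤ K₁ := by nlinarith
    exact_mod_cast this
  have hC := recursionConst_pos d κ hB hK₁₁
  set r := max σ (min X ξ)
  have hσr : σ ≤ r := le_max_left _ _
  have hr : r ≤ X ∨ r ≤ σ := by
    rcases le_total (min X ξ) σ with hle | hle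
    · exact Or.inr (max_le le_rfl hle)
    · exact Or.inl ((max_eq_right hle).trans_le (min_le_left _ _))
  have hrξ : r ≤ ξ := max_le h.sigma_le (min_le_right _ _)
  obtain ⟨n, hn, hn'⟩ := exists_nat_pow_near (y := (K : ℝ)) ((one_le_div hσ).2 hσr)
    (by exact_mod_cast hK₂)
  refine (h.le_pow_mul hκ hB (by linarith) hr hrξ
    (mul_expPowConst_add_one_le_recursionConst d κ hB hK₁₁) (by omega) hK
    (fun v hσv hvr hrK => h.le_of_radius_le_mul hκ hB (by linarith) hr hrξ (by positivity)
      (fun w => h.le_mul_rpow hd hκ hB (by linarith) (by linarith) hK₁B hK₁) hK hσv hvr hrK)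
    n le_rfl hσr (by rw [div_lt_iff₀ hσ] at hn'; linarith)).trans ?_
  rw [← mul_assoc, pow_succ', mul_assoc (recursionConst d κ B K₁)]
  gcongr
  exact pow_mul_rpow_mul_pow_le hσ (hσ.trans_le hσr) hε₀ hC.le hKε hn

end ScaleRecursion

theorem exists_forall_le_of_scaleRecursion (hd : 2 < d) {κ B : ℝ} (hκ : 0 < κ) (hB : 1 ≤ B) :
    ∃ C > (0 : ℝ), ∀ ε ∈ Set.Ioc (0 : ℝ) 1, ∃ K₀ : ℕ, ∀ (X σ ξ : ℝ) (a : ℝ → ℝ),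
      ScaleRecursion d κ B (2 + ε / 2) X σ ξ a K₀ →
      a σ ≤ C * (σ / max σ (min X ξ)) ^ ((d : ℝ) - 2 - ε) * Real.exp (-(κ / 2 * X / ξ)) := by
  obtain ⟨K₁, hK₁⟩ := exists_nat_ge (4 * B ^ 2)
  have hK₁₁ : 1 ≤ K₁ := by
    have : (1 : ℝ) ≤ K₁ := by nlinarith
    exact_mod_cast this
  refine ⟨ScaleRecursion.recursionConst d κ B K₁, ScaleRecursion.recursionConst_pos d κ hB hK₁₁,
    fun ε hε => ?_⟩
  have hlim : Tendsto (fun n : ℕ => (n : ℝ) ^ (ε / 2)) atTop atTop :=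
    (tendsto_rpow_atTop (half_pos hε.1)).comp tendsto_natCast_atTop_atTop
  obtain ⟨K, hK₂, hKε⟩ := ((eventually_ge_atTop 2).and
    (hlim.eventually_ge_atTop (ScaleRecursion.recursionConst d κ B K₁))).exists
  exact ⟨max K₁ K, fun X σ ξ a h => h.le_recursionConst_mul hd hκ hB hε.1.le hε.2 hK₁
    (le_max_left _ _) hK₂ (le_max_right _ _) hKε⟩

end ScaleRecursion

section EffectiveWalk

variable {d : ℕ} {c₀ : ℝ}

namespace Model

/-- The function `F_β` averaged at scale `u` around `x`, against the weight `exp(-κ|·|/u)`. It is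
the quantity to which the scale recursion is applied. -/
def smeared (M : Model d c₀) (κ β : ℝ) (x : Fin d → ℤ) (u : ℝ) : ℝ :=
  ((expWeight (-(κ / u)) ⋆ M.F β) x).toReal

lemma smeared_nonneg (M : Model d c₀) (κ β : ℝ) (x : Fin d → ℤ) (u : ℝ) :
    0 ≤ M.smeared κ β x u :=
  ENNReal.toReal_nonneg

variable {M : Model d c₀} {β κ u v : ℝ}

namespace Subcritical

lemma ofReal_smeared (h : M.Subcritical β) (hκ : 0 ≤ κ) (hu : 0 ≤ u) (x : Fin d → ℤ) :
    ENNReal.ofReal (M.smeared κ β x u) = (expWeight (-(κ / u)) ⋆ M.F β) x := by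
  have hle : (expWeight (-(κ / u)) ⋆ M.F β) x ≤ M.chi β := by
    rw [conv_comm, ← mul_one (M.chi β), ← M.tsum_F β]
    exact conv_apply_le_tsum_mul (expWeight_le_one (neg_nonpos.2 (by positivity))) x
  exact ENNReal.ofReal_toReal (ne_top_of_le_ne_top h.chi_ne_top hle)

lemma smeared_mono (h : M.Subcritical β) (hκ : 0 ≤ κ) (hu : 0 < u) (huv : u ≤ v)
    (x : Fin d → ℤ) : M.smeared κ β x u ≤ M.smeared κ β x v := by
  have hrate : -(κ / u) ≤ -(κ / v) := by gcongr
  rw [← ENNReal.ofReal_le_ofReal_iff (M.smeared_nonneg κ β x v), h.ofReal_smeared hκ hu.le,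
    h.ofReal_smeared hκ (hu.le.trans huv)]
  exact conv_mono (expWeight_mono hrate) le_rfl x

lemma exists_xi_eq (h : M.Subcritical β) (hu : M.sigma ≤ u) (huξ : u ≤ M.xi β) :
    ∃ t ∈ Set.Icc 0 β, M.xi t = u :=
  intermediate_value_Icc h.1 h.continuousOn_xi ⟨M.xi_zero.trans_le hu, huξ⟩

end Subcritical

namespace Controlled

variable {δ a b t : ℝ} {j : ℕ}

lemma pow_sub_mul_susc_le (h : M.Controlled δ b) (hδ : δ < 1 / 4) (h0 : 0 ≤ a) (hab : a ≤ b)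
    {n : ℕ} (hj : j ≤ n) : ((b - a) * M.susc a) ^ j ≤ (1 + 4 * δ) ^ n := by
  have hδ₀ := h.pos
  have hratio : 0 ≤ M.susc a / M.susc b := div_nonneg (M.susc_nonneg a) (M.susc_nonneg b)
  have hsusc : 0 ≤ (b - a) * M.susc a := mul_nonneg (sub_nonneg.2 hab) (M.susc_nonneg a)
  have hle : (b - a) * M.susc a ≤ 1 + 4 * δ :=
    (h.sub_mul_susc_le hδ h0 hab).trans (mul_le_of_le_one_right (by positivity) (by linarith))
  calc ((b - a) * M.susc a) ^ j ≤ (1 + 4 * δ) ^ j := by gcongr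
    _ ≤ (1 + 4 * δ) ^ n := pow_le_pow_right₀ (by linarith) hj

lemma le_two (h : M.Controlled δ b) (hδ : δ < 1 / 4) : b ≤ 2 := by
  have hle := h.pow_sub_mul_susc_le (j := 1) hδ le_rfl h.1.1 le_rfl
  rw [M.susc_zero] at hle
  linarith

lemma susc_le_rpow (h : M.Controlled δ b) (hc : 0 < c₀) (hδ : δ < 1 / 4) {α : ℝ}
    (hα : 2 / (1 - 3 * δ) ≤ α) : M.susc b ≤ (M.xi b / M.sigma) ^ α := by
  have hratio := h.rpow_susc_div_le_sq_xi_div hc hδ le_rfl h.1.1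
  rw [M.susc_zero, div_one, M.xi_zero] at hratio
  have hexp : 0 < 1 - 3 * δ := by linarith
  have hq : 1 ≤ M.xi b / M.sigma := (one_le_div (M.K.sigma_pos hc)).2 h.1.sigma_le_xi
  calc M.susc b = (M.susc b ^ (1 - 3 * δ)) ^ (1 - 3 * δ)⁻¹ :=
        (Real.rpow_rpow_inv (M.susc_nonneg b) hexp.ne').symm
    _ ≤ ((M.xi b / M.sigma) ^ 2) ^ (1 - 3 * δ)⁻¹ :=
        Real.rpow_le_rpow (Real.rpow_nonneg (M.susc_nonneg b) _) hratio (inv_nonneg.2 hexp.le)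
    _ = (M.xi b / M.sigma) ^ (2 / (1 - 3 * δ)) := by
        rw [← Real.rpow_natCast_mul (by linarith), Nat.cast_ofNat, ← div_eq_mul_inv]
    _ ≤ (M.xi b / M.sigma) ^ α := Real.rpow_le_rpow_of_exponent_le hq hα

lemma expWeight_conv_convPow_F_le (h : M.Controlled δ t) (hd : 0 < d) (hc : 0 < c₀)
    (hc₁ : c₀ ≤ 1) (hδ : δ ≤ 1 / 10000) (hj : 0 < j) :
    expWeight (-(c₀ / 100 / 4 / M.xi t)) ⋆ convPow (M.F t) j ≤
      ENNReal.ofReal (M.susc t ^ j * (localLimitConst d (c₀ / 100) / √j ^ d)) •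
        expWeight (-(c₀ / 100 / 4 / (M.xi t * √j))) := by
  have hwalk := (h.isStep_effStep hc hc₁ hδ).convPow_conv_expWeight_neg_le hd (h.1.xi_pos hc)
    (by positivity) (by linarith) hj
  rw [conv_comm, h.1.F_eq_smul_effStep, smul_convPow, smul_conv,
    ENNReal.ofReal_mul (pow_nonneg (M.susc_nonneg t) j), mul_smul,
    ENNReal.ofReal_pow (M.susc_nonneg t)]
  exact fun x => mul_le_mul' le_rfl (hwalk x)

end Controlled

end Model

end EffectiveWalk

section SmearedRecursion

variable {d : ℕ} {c₀ : ℝ}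

namespace Model

variable {M : Model d c₀} {β δ t A : ℝ} {K : ℕ}

namespace Controlled

lemma expWeight_conv_sum_convPow_F_le (h : M.Controlled δ t) (hd : 0 < d) (hc : 0 < c₀)
    (hc₁ : c₀ ≤ 1) (hδ : δ ≤ 1 / 10000) (htβ : t ≤ β)
    (hA : ∀ j ≤ K ^ 2, ((β - t) * M.susc t) ^ j ≤ A) (x : Fin d → ℤ) :
    (expWeight (-(c₀ / 100 / 4 / M.xi t)) ⋆
        ∑ j ∈ Finset.range (K ^ 2), ENNReal.ofReal (β - t) ^ j • convPow (M.F t) (j + 1)) x ≤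
      ENNReal.ofReal (A * localLimitConst d (c₀ / 100) *
        (M.susc t * heatSum d (c₀ / 100 / 4) ‖x‖ (M.xi t) K)) := by
  have hL := one_le_localLimitConst hd (c₀ / 100)
  have hχ := M.susc_nonneg t
  have hb : 0 ≤ β - t := sub_nonneg.2 htβ
  have hA₀ : 0 ≤ A := zero_le_one.trans ((pow_zero _).ge.trans (hA 0 (Nat.zero_le _)))
  rw [conv_sum, Finset.sum_apply, heatSum, Finset.mul_sum, Finset.mul_sum,
    ENNReal.ofReal_sum_of_nonneg fun j _ => by positivity]
  refine Finset.sum_le_sum fun j hj => ?_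
  have hterm := h.expWeight_conv_convPow_F_le hd hc hc₁ hδ j.succ_pos x
  rw [conv_smul, Pi.smul_apply, smul_eq_mul]
  refine (mul_le_mul' le_rfl hterm).trans ?_
  rw [Pi.smul_apply, smul_eq_mul, expWeight, ← ENNReal.ofReal_pow hb,
    ← ENNReal.ofReal_mul (by positivity), ← ENNReal.ofReal_mul (by positivity)]
  refine ENNReal.ofReal_le_ofReal ?_
  rw [Nat.succ_eq_add_one, Nat.cast_add_one]
  calc (β - t) ^ j * (M.susc t ^ (j + 1) * (localLimitConst d (c₀ / 100) / √(j + 1 : ℝ) ^ d) *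
          Real.exp (-(c₀ / 100 / 4 / (M.xi t * √(j + 1 : ℝ))) * ‖x‖))
      = ((β - t) * M.susc t) ^ j * localLimitConst d (c₀ / 100) * (M.susc t *
          (1 / √(j + 1 : ℝ) ^ d *
            Real.exp (-(c₀ / 100 / 4 * ‖x‖ / (M.xi t * √(j + 1 : ℝ)))))) := by
        rw [mul_pow, neg_mul, div_mul_eq_mul_div]
        ring
    _ ≤ A * localLimitConst d (c₀ / 100) * (M.susc t * (1 / √(j + 1 : ℝ) ^ d *
          Real.exp (-(c₀ / 100 / 4 * ‖x‖ / (M.xi t * √(j + 1 : ℝ)))))) := by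
        have hAj := hA j (Finset.mem_range.1 hj).le
        gcongr

lemma expWeight_conv_convPow_F_conv_F_le (h : M.Controlled δ β) (hd : 0 < d) (hc : 0 < c₀)
    (hc₁ : c₀ ≤ 1) (hδ : δ ≤ 1 / 10000) (h0 : 0 ≤ t) (htβ : t ≤ β) (hK : 1 ≤ K)
    (hA : ((β - t) * M.susc t) ^ K ^ 2 ≤ A) (x : Fin d → ℤ) :
    (expWeight (-(c₀ / 100 / 4 / M.xi t)) ⋆
        (ENNReal.ofReal (β - t) ^ K ^ 2 • (convPow (M.F t) (K ^ 2) ⋆ M.F β))) x ≤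
      ENNReal.ofReal (A * localLimitConst d (c₀ / 100) *
        (M.smeared (c₀ / 100 / 4) β x (M.xi t * K) / (K : ℝ) ^ d)) := by
  have hL := one_le_localLimitConst hd (c₀ / 100)
  have hχ := M.susc_nonneg t
  have hb : 0 ≤ β - t := sub_nonneg.2 htβ
  have hξ := M.xi_nonneg t
  have hS := M.smeared_nonneg (c₀ / 100 / 4) β x (M.xi t * K)
  have hwalk := (h.of_le h0 htβ).expWeight_conv_convPow_F_le hd hc hc₁ hδ
    (show 0 < K ^ 2 by positivity)
  rw [Nat.cast_pow, Real.sqrt_sq K.cast_nonneg] at hwalk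
  rw [conv_smul, ← conv_assoc, Pi.smul_apply, smul_eq_mul]
  refine (mul_le_mul' le_rfl (conv_mono hwalk le_rfl x)).trans ?_
  rw [smul_conv, Pi.smul_apply, smul_eq_mul, ← h.1.ofReal_smeared (by positivity) (by positivity),
    ← ENNReal.ofReal_pow hb, ← ENNReal.ofReal_mul (by positivity),
    ← ENNReal.ofReal_mul (by positivity)]
  refine ENNReal.ofReal_le_ofReal ?_
  calc (β - t) ^ K ^ 2 * (M.susc t ^ K ^ 2 * (localLimitConst d (c₀ / 100) / (K : ℝ) ^ d) *
          M.smeared (c₀ / 100 / 4) β x (M.xi t * K))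
      = ((β - t) * M.susc t) ^ K ^ 2 * localLimitConst d (c₀ / 100) *
          (M.smeared (c₀ / 100 / 4) β x (M.xi t * K) / (K : ℝ) ^ d) := by
        rw [mul_pow]
        ring
    _ ≤ A * localLimitConst d (c₀ / 100) *
          (M.smeared (c₀ / 100 / 4) β x (M.xi t * K) / (K : ℝ) ^ d) := by gcongr

lemma smeared_xi_le (h : M.Controlled δ β) (hd : 0 < d) (hc : 0 < c₀) (hc₁ : c₀ ≤ 1)
    (hδ : δ ≤ 1 / 10000) (h0 : 0 ≤ t) (htβ : t ≤ β) (hK : 1 ≤ K)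
    (hA : ∀ j ≤ K ^ 2, ((β - t) * M.susc t) ^ j ≤ A) (x : Fin d → ℤ) :
    M.smeared (c₀ / 100 / 4) β x (M.xi t) ≤ A * localLimitConst d (c₀ / 100) *
      (M.susc t * heatSum d (c₀ / 100 / 4) ‖x‖ (M.xi t) K +
        M.smeared (c₀ / 100 / 4) β x (M.xi t * K) / (K : ℝ) ^ d) := by
  have hL := one_le_localLimitConst hd (c₀ / 100)
  have hA₀ : 0 ≤ A := zero_le_one.trans ((pow_zero _).ge.trans (hA 0 (Nat.zero_le _)))
  have hχ := M.susc_nonneg t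
  have hS := M.smeared_nonneg (c₀ / 100 / 4) β x (M.xi t * K)
  have hheat := heatSum_nonneg d (c₀ / 100 / 4) ‖x‖ (M.xi t) K
  have hwalk : M.F β ≤ _ :=
    le_sum_convPow_of_le_add_smul_conv (h.1.F_le_add_smul_conv h0 htβ) (K ^ 2)
  rw [← ENNReal.ofReal_le_ofReal_iff (by positivity),
    h.1.ofReal_smeared (by positivity) (M.xi_nonneg t), mul_add,
    ENNReal.ofReal_add (by positivity) (by positivity)]
  refine (conv_mono le_rfl hwalk x).trans ?_
  rw [conv_add]
  exact add_le_add
    ((h.of_le h0 htβ).expWeight_conv_sum_convPow_F_le hd hc hc₁ hδ htβ hA x)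
    (h.expWeight_conv_convPow_F_conv_F_le hd hc hc₁ hδ h0 htβ hK (hA _ le_rfl) x)

lemma smeared_le_susc_mul_exp (h : M.Controlled δ β) (hd : 0 < d) (hc : 0 < c₀) (hc₁ : c₀ ≤ 1)
    (hδ : δ ≤ 1 / 10000) (x : Fin d → ℤ) :
    M.smeared (c₀ / 100 / 4) β x (M.xi β) ≤
      localLimitConst d (c₀ / 100) * M.susc β * Real.exp (-(c₀ / 100 / 4 * ‖x‖ / M.xi β)) := by
  have hL := one_le_localLimitConst hd (c₀ / 100)
  have hχ := M.susc_nonneg β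
  have hwalk := h.expWeight_conv_convPow_F_le hd hc hc₁ hδ one_pos x
  rw [convPow_one, Nat.cast_one, Real.sqrt_one, one_pow, div_one, mul_one, pow_one,
    ← h.1.ofReal_smeared (by positivity) (M.xi_nonneg β), Pi.smul_apply, smul_eq_mul, expWeight,
    ← ENNReal.ofReal_mul (by positivity), ENNReal.ofReal_le_ofReal_iff (by positivity)] at hwalk
  rwa [mul_comm (localLimitConst d _), ← div_mul_eq_mul_div, ← neg_mul]

lemma scaleRecursion_smeared (h : M.Controlled δ β) (hd : 0 < d) (hc : 0 < c₀) (hc₁ : c₀ ≤ 1)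
    (hδ : δ ≤ 1 / 10000) {α : ℝ} (hα : 2 / (1 - 3 * δ) ≤ α) (hK : (1 + 4 * δ) ^ K ^ 2 ≤ 3)
    (x : Fin d → ℤ) :
    ScaleRecursion d (c₀ / 100 / 4) (3 * localLimitConst d (c₀ / 100)) α ‖x‖ M.sigma (M.xi β)
      (M.smeared (c₀ / 100 / 4) β x) K where
  sigma_pos := M.K.sigma_pos hc
  sigma_le := h.1.sigma_le_xi
  nonneg := norm_nonneg x
  le_top u hσu huξ := by
    have hσ : 0 < M.sigma := M.K.sigma_pos hc
    have hL := one_le_localLimitConst hd (c₀ / 100)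
    have hsusc := h.susc_le_rpow hc (by linarith) hα
    calc M.smeared (c₀ / 100 / 4) β x u ≤ M.smeared (c₀ / 100 / 4) β x (M.xi β) :=
          h.1.smeared_mono (by positivity) (hσ.trans_le hσu) huξ x
      _ ≤ localLimitConst d (c₀ / 100) * M.susc β *
            Real.exp (-(c₀ / 100 / 4 * ‖x‖ / M.xi β)) :=
          h.smeared_le_susc_mul_exp hd hc hc₁ hδ x
      _ ≤ 3 * localLimitConst d (c₀ / 100) * (M.xi β / M.sigma) ^ α *
            Real.exp (-(c₀ / 100 / 4 * ‖x‖ / M.xi β)) := by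
          have hχ := M.susc_nonneg β
          gcongr
          linarith
  le_heatSum_add u k hσu hk hkK huk := by
    have hu : 0 < u := (M.K.sigma_pos hc).trans_le hσu
    have huξ : u ≤ M.xi β :=
      (le_mul_of_one_le_right hu.le (Nat.one_le_cast.2 hk)).trans huk
    obtain ⟨t, ⟨ht₀, htβ⟩, rfl⟩ := h.1.exists_xi_eq hσu huξ
    have hsusc := (h.of_le ht₀ htβ).susc_le_rpow hc (by linarith) hα
    have hL := one_le_localLimitConst hd (c₀ / 100)
    have hheat := heatSum_nonneg d (c₀ / 100 / 4) ‖x‖ (M.xi t) k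
    refine (h.smeared_xi_le hd hc hc₁ hδ ht₀ htβ hk (A := 3) (fun j hj => ?_) x).trans
      (by gcongr)
    exact (h.pow_sub_mul_susc_le (by linarith) ht₀ htβ
      (hj.trans (Nat.pow_le_pow_left hkK 2))).trans hK

end Controlled

end Model

end SmearedRecursion

section SubcriticalBound

open Filter Topology

variable {d : ℕ} {c₀ : ℝ}

/-- The constant in the bound of the kernel by `σ ^ (-d)` times an exponential weight at
scale `σ`. -/
def kernelConst (d : ℕ) (c₀ : ℝ) : ℝ := 2 * c₀⁻¹ * √d ^ d

lemma kernelConst_pos (hd : 0 < d) (hc : 0 < c₀) : 0 < kernelConst d c₀ := by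
  unfold kernelConst
  positivity

namespace AdmissibleKernel

lemma sigma_le_sqrt_mul_R (K : AdmissibleKernel d c₀) : K.sigma ≤ √d * K.R := by
  have hR : 0 ≤ K.R := zero_le_one.trans K.R_ge_one
  refine le_of_sq_le_sq ?_ (by positivity)
  rw [mul_pow, Real.sq_sqrt d.cast_nonneg]
  exact K.sigma_sq_le

lemma half_le_exp_neg (K : AdmissibleKernel d c₀) (hc : 0 < c₀) {x : Fin d → ℤ}
    (hx : 0 < K.J x) : 1 / 2 ≤ Real.exp (-(c₀ / 100 / 4 / K.sigma) * ‖x‖) := by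
  have hσ := K.sigma_pos hc
  have hnorm : ‖x‖ ≤ K.sigma / c₀ := by
    rw [← supNorm_eq_norm]
    exact (K.range_le x hx).trans (K.R_le_sigma_div hc)
  have hle : c₀ / 100 / 4 / K.sigma * ‖x‖ ≤ 1 / 2 :=
    calc c₀ / 100 / 4 / K.sigma * ‖x‖ ≤ c₀ / 100 / 4 / K.sigma * (K.sigma / c₀) := by gcongr
      _ = 1 / 400 := by field_simp; norm_num
      _ ≤ 1 / 2 := by norm_num
  linarith [Real.add_one_le_exp (-(c₀ / 100 / 4 / K.sigma) * ‖x‖)]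

lemma weight_le (K : AdmissibleKernel d c₀) (hc : 0 < c₀) :
    K.weight ≤ ENNReal.ofReal (kernelConst d c₀ / K.sigma ^ d) •
      expWeight (-(c₀ / 100 / 4 / K.sigma)) := by
  intro x
  have hσ := K.sigma_pos hc
  have hR : 0 < K.R := zero_lt_one.trans_le K.R_ge_one
  rw [Pi.smul_apply, smul_eq_mul, weight, expWeight, ← ENNReal.ofReal_mul
    (by unfold kernelConst; positivity)]
  refine ENNReal.ofReal_le_ofReal ?_
  rcases (K.nonneg x).eq_or_lt with hx | hx
  · rw [← hx]
    unfold kernelConst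
    positivity
  calc K.J x ≤ c₀⁻¹ / K.R ^ d := K.J_upper x
    _ ≤ c₀⁻¹ * √d ^ d / K.sigma ^ d := by
        have hpow : K.sigma ^ d ≤ √d ^ d * K.R ^ d := by
          rw [← mul_pow]
          exact pow_le_pow_left₀ hσ.le K.sigma_le_sqrt_mul_R d
        rw [div_le_div_iff₀ (by positivity) (by positivity), mul_assoc]
        gcongr
    _ = kernelConst d c₀ / K.sigma ^ d * (1 / 2) := by
        unfold kernelConst
        ring
    _ ≤ kernelConst d c₀ / K.sigma ^ d * Real.exp (-(c₀ / 100 / 4 / K.sigma) * ‖x‖) := by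
        refine mul_le_mul_of_nonneg_left (K.half_le_exp_neg hc hx) ?_
        unfold kernelConst
        positivity

end AdmissibleKernel

section Profile

variable {κ p X σ ξ : ℝ}

lemma exp_neg_le_mul_profile (hκ : 0 < κ) (hp : p ≤ d) (hX : 0 ≤ X) (hσ : 0 < σ) (hσξ : σ ≤ ξ) :
    Real.exp (-(κ * X / σ)) ≤ expPowConst d (κ / 2) *
      ((σ / max σ (min X ξ)) ^ p * Real.exp (-(κ / 2 * X / ξ))) := by
  have hr : max σ (min X ξ) ≤ X ∨ max σ (min X ξ) ≤ σ := by
    rcases le_total σ (min X ξ) with h | h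
    · exact Or.inl ((max_eq_right h).trans_le (min_le_left X ξ))
    · exact Or.inr (max_eq_left h).le
  set r := max σ (min X ξ)
  have hσr : σ ≤ r := le_max_left _ _
  have hr₀ : 0 < r := hσ.trans_le hσr
  have hC := one_le_expPowConst d (κ / 2)
  have hheat := heatSum_le_mul_div_pow (d := d) (K := 1) hκ hX hσ (by simpa using hσξ) hσr hr
  simp only [heatSum, one_pow, Finset.range_one, Finset.sum_singleton, Nat.cast_zero, zero_add,
    Nat.cast_one, Real.sqrt_one, div_one, one_mul, mul_one] at hheat
  have hpow : (σ / r) ^ d ≤ (σ / r) ^ p := by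
    rw [← Real.rpow_natCast]
    exact Real.rpow_le_rpow_of_exponent_ge (by positivity) ((div_le_one hr₀).2 hσr) hp
  refine hheat.trans ?_
  rw [← mul_assoc]
  gcongr

lemma profile_min_le_mul_profile (hκ : 0 < κ) (hp : p ≤ d) (hX : 0 ≤ X) (hσ : 0 < σ)
    (hσξ : σ ≤ ξ) :
    (σ / max σ (min X ξ)) ^ p * Real.exp (-(κ * X / ξ)) ≤ expPowConst d (κ / 2) *
      ((σ / max σ X) ^ p * Real.exp (-(κ / 2 * X / ξ))) := by
  have hξ : 0 < ξ := hσ.trans_le hσξ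
  have hC := one_le_expPowConst d (κ / 2)
  have hsplit : Real.exp (-(κ * X / ξ)) =
      Real.exp (-(κ / 2 * (X / ξ))) * Real.exp (-(κ / 2 * X / ξ)) := by
    rw [← Real.exp_add]
    ring_nf
  rw [hsplit, ← mul_assoc, ← mul_assoc]
  refine mul_le_mul_of_nonneg_right ?_ (Real.exp_pos _).le
  rcases le_total X ξ with hXξ | hξX
  · have hexp : Real.exp (-(κ / 2 * (X / ξ))) ≤ 1 :=
      Real.exp_le_one_iff.2 (neg_nonpos.2 (by positivity))
    rw [min_eq_left hXξ, mul_comm]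
    exact mul_le_mul_of_nonneg_right (hexp.trans hC) (by positivity)
  · have hX₀ : 0 < X := hξ.trans_le hξX
    have hpow : (X / ξ) ^ p ≤ (X / ξ) ^ d := by
      rw [← Real.rpow_natCast]
      exact Real.rpow_le_rpow_of_exponent_le ((one_le_div hξ).2 hξX) hp
    rw [min_eq_right hξX, max_eq_right hσξ, max_eq_right (hσξ.trans hξX)]
    calc (σ / ξ) ^ p * Real.exp (-(κ / 2 * (X / ξ)))
        ≤ (σ / ξ) ^ p * (expPowConst d (κ / 2) / (X / ξ) ^ d) := by
          gcongr
          exact exp_neg_mul_le_expPowConst_div_pow d (half_pos hκ) (by positivity)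
      _ = (σ / X) ^ p * (X / ξ) ^ p * (expPowConst d (κ / 2) / (X / ξ) ^ d) := by
          rw [← Real.mul_rpow (by positivity) (by positivity), div_mul_div_cancel₀ hX₀.ne']
      _ ≤ (σ / X) ^ p * (X / ξ) ^ d * (expPowConst d (κ / 2) / (X / ξ) ^ d) := by gcongr
      _ = expPowConst d (κ / 2) * (σ / X) ^ p := by field_simp

end Profile

lemma exists_small_threshold {η : ℝ} (hη : 0 < η) (n : ℕ) :
    ∃ δ ∈ Set.Ioo (0 : ℝ) (1 / 10000), 2 / (1 - 3 * δ) ≤ 2 + η ∧ (1 + 4 * δ) ^ n ≤ 3 := by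
  have hratio : ContinuousAt (fun δ : ℝ => 2 / (1 - 3 * δ)) 0 :=
    ContinuousAt.div (by fun_prop) (by fun_prop) (by norm_num)
  have hpow : ContinuousAt (fun δ : ℝ => (1 + 4 * δ) ^ n) 0 := by fun_prop
  have hratio' : ∀ᶠ δ : ℝ in 𝓝[>] 0, 2 / (1 - 3 * δ) ≤ 2 + η :=
    (hratio.tendsto.mono_left nhdsWithin_le_nhds).eventually_le_const (by norm_num [hη])
  have hpow' : ∀ᶠ δ : ℝ in 𝓝[>] 0, (1 + 4 * δ) ^ n ≤ 3 :=
    (hpow.tendsto.mono_left nhdsWithin_le_nhds).eventually_le_const (by norm_num)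
  have hsmall : ∀ᶠ δ : ℝ in 𝓝[>] 0, δ ∈ Set.Ioo (0 : ℝ) (1 / 10000) :=
    Ioo_mem_nhdsGT (by norm_num)
  exact (hsmall.and (hratio'.and hpow')).exists

namespace Model

variable {M : Model d c₀} {β : ℝ}

namespace Subcritical

lemma F_le_exp_add_smeared (h : M.Subcritical β) (hd : 0 < d) (hc : 0 < c₀) (x : Fin d → ℤ) :
    M.F β x ≤ ENNReal.ofReal (kernelConst d c₀ / M.sigma ^ d *
      (Real.exp (-(c₀ / 100 / 4 * ‖x‖ / M.sigma)) +
        β * M.smeared (c₀ / 100 / 4) β x M.sigma)) := by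
  have hσ : 0 < M.sigma := M.K.sigma_pos hc
  have hβ := h.1
  have hker := kernelConst_pos hd hc
  have hS := M.smeared_nonneg (c₀ / 100 / 4) β x M.sigma
  have hJ : M.K.weight ≤ ENNReal.ofReal (kernelConst d c₀ / M.sigma ^ d) •
      expWeight (-(c₀ / 100 / 4 / M.sigma)) := M.K.weight_le hc
  have hF := h.F_le_add_smul_conv le_rfl hβ
  rw [M.F_zero, sub_zero] at hF
  calc M.F β x ≤ M.K.weight x + ENNReal.ofReal β * (M.K.weight ⋆ M.F β) x := hF x
    _ ≤ (ENNReal.ofReal (kernelConst d c₀ / M.sigma ^ d) •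
            expWeight (-(c₀ / 100 / 4 / M.sigma))) x +
          ENNReal.ofReal β * ((ENNReal.ofReal (kernelConst d c₀ / M.sigma ^ d) •
            expWeight (-(c₀ / 100 / 4 / M.sigma))) ⋆ M.F β) x := by
        gcongr
        exacts [hJ x, conv_mono hJ le_rfl x]
    _ = _ := by
        rw [smul_conv, Pi.smul_apply, Pi.smul_apply, smul_eq_mul, smul_eq_mul, expWeight,
          ← h.ofReal_smeared (by positivity) hσ.le, ← ENNReal.ofReal_mul (by positivity),
          ← ENNReal.ofReal_mul (by positivity), ← ENNReal.ofReal_mul hβ,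
          ← ENNReal.ofReal_add (by positivity) (by positivity)]
        ring_nf

lemma G_le_single_add_smul_F (h : M.Subcritical β) :
    M.G β ≤ Pi.single 0 1 + ENNReal.ofReal β • M.F β := by
  have hG := h.G_le_add_smul_conv le_rfl h.1
  rwa [M.G_zero, single_conv, sub_zero] at hG

end Subcritical

lemma Controlled.F_le_mul_profile {δ ε C : ℝ} (h : M.Controlled δ β) (hd : 2 < d) (hc : 0 < c₀)
    (hδ : δ < 1 / 4) (hε : 0 ≤ ε) (hC : 0 ≤ C) {x : Fin d → ℤ}
    (hsmeared : M.smeared (c₀ / 100 / 4) β x M.sigma ≤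
      C * (M.sigma / max M.sigma (min ‖x‖ (M.xi β))) ^ ((d : ℝ) - 2 - ε) *
        Real.exp (-(c₀ / 100 / 4 / 2 * ‖x‖ / M.xi β))) :
    M.F β x ≤ ENNReal.ofReal (kernelConst d c₀ / M.sigma ^ d *
      ((expPowConst d (c₀ / 100 / 4 / 2) + 2 * C) * (expPowConst d (c₀ / 100 / 4 / 2 / 2) *
        ((M.sigma / max M.sigma ‖x‖) ^ ((d : ℝ) - 2 - ε) *
          Real.exp (-(c₀ / 100 / 4 / 2 / 2 * ‖x‖ / M.xi β)))))) := by
  have hσ : 0 < M.sigma := M.K.sigma_pos hc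
  have hσξ := h.1.sigma_le_xi
  have hker := kernelConst_pos (zero_lt_two.trans hd) hc
  have hκ : 0 < c₀ / 100 / 4 := by positivity
  have hp : (d : ℝ) - 2 - ε ≤ d := by linarith
  have hconst := one_le_expPowConst d (c₀ / 100 / 4 / 2)
  have hexp := exp_neg_le_mul_profile hκ hp (norm_nonneg x) hσ hσξ
  have hprofile := profile_min_le_mul_profile (half_pos hκ) hp (norm_nonneg x) hσ hσξ
  refine (h.1.F_le_exp_add_smeared (zero_lt_two.trans hd) hc x).trans
    (ENNReal.ofReal_le_ofReal (mul_le_mul_of_nonneg_left ?_ (by positivity)))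
  refine le_trans ?_ (mul_le_mul_of_nonneg_left hprofile (by positivity))
  rw [add_mul]
  refine add_le_add hexp ?_
  rw [mul_assoc 2, ← mul_assoc C]
  exact mul_le_mul (h.le_two hδ) hsmeared (M.smeared_nonneg _ _ _ _) zero_le_two

end Model

end SubcriticalBound

section CriticalPoint

open Filter Topology

variable {d : ℕ} {c₀ : ℝ}

lemma piSingle_zero_one_apply_eq_ofReal {Γ : Type*} [Zero Γ] [DecidableEq Γ] (x : Γ) :
    (Pi.single 0 1 : Γ → ℝ≥0∞) x = ENNReal.ofReal (if x = 0 then 1 else 0) := by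
  rw [Pi.single_apply]
  split_ifs
  · exact ENNReal.ofReal_one.symm
  · exact ENNReal.ofReal_zero.symm

namespace Model

theorem exists_forall_controlled_G_le (hd : 2 < d) (hc : 0 < c₀) (hc₁ : c₀ ≤ 1) :
    ∃ c > (0 : ℝ), ∃ C > (0 : ℝ), ∀ ε ∈ Set.Ioc (0 : ℝ) 1, ∃ δ ∈ Set.Ioo (0 : ℝ) (1 / 10000),
      ∀ (M : Model d c₀) (β : ℝ), M.Controlled δ β → ∀ x : Fin d → ℤ,
        M.G β x ≤ ENNReal.ofReal ((if x = 0 then 1 else 0) +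
          C / M.sigma ^ d * (M.sigma / max M.sigma ‖x‖) ^ ((d : ℝ) - 2 - ε) *
            Real.exp (-(c * ‖x‖ / M.xi β))) := by
  have hd₀ : 0 < d := zero_lt_two.trans hd
  have hL := one_le_localLimitConst hd₀ (c₀ / 100)
  obtain ⟨C₁, hC₁, hrec⟩ := exists_forall_le_of_scaleRecursion hd
    (κ := c₀ / 100 / 4) (B := 3 * localLimitConst d (c₀ / 100)) (by positivity) (by linarith)
  have hker := kernelConst_pos hd₀ hc
  have hC₂ := one_le_expPowConst d (c₀ / 100 / 4 / 2)
  have hC₃ := one_le_expPowConst d (c₀ / 100 / 4 / 2 / 2)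
  refine ⟨c₀ / 100 / 4 / 2 / 2, by positivity, 2 * (kernelConst d c₀ *
    ((expPowConst d (c₀ / 100 / 4 / 2) + 2 * C₁) * expPowConst d (c₀ / 100 / 4 / 2 / 2))),
    by positivity, fun ε hε => ?_⟩
  obtain ⟨K, hK⟩ := hrec ε hε
  obtain ⟨δ, hδ, hα, hpow⟩ := exists_small_threshold (half_pos hε.1) (K ^ 2)
  refine ⟨δ, hδ, fun M β h x => ?_⟩
  have hσ : 0 < M.sigma := M.K.sigma_pos hc
  have hδ' : δ < 1 / 4 := by linarith [hδ.2]
  have hF := h.F_le_mul_profile hd hc hδ' hε.1.le hC₁.le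
    (hK _ _ _ _ (h.scaleRecursion_smeared hd₀ hc hc₁ hδ.2.le hα hpow x))
  refine (h.1.G_le_single_add_smul_F x).trans ?_
  rw [Pi.add_apply, Pi.smul_apply, smul_eq_mul, piSingle_zero_one_apply_eq_ofReal,
    ENNReal.ofReal_add (by split_ifs <;> norm_num) (by positivity)]
  refine add_le_add le_rfl ((mul_le_mul' (ENNReal.ofReal_le_ofReal (h.le_two hδ')) hF).trans ?_)
  rw [← ENNReal.ofReal_mul zero_le_two]
  exact ENNReal.ofReal_le_ofReal (le_of_eq (by ring))

variable {M : Model d c₀} {β δ t : ℝ}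

lemma Subcritical.tendsto_G_nhdsLT (h : M.Subcritical β) (h0 : 0 < β) (x : Fin d → ℤ) :
    Tendsto (fun t => M.G t x) (𝓝[<] β) (𝓝 (M.G β x)) := by
  have hfin : ∀ t, M.Subcritical t → M.G t x ≠ ⊤ := fun t ht =>
    ENNReal.ne_top_of_tsum_ne_top ht.chi_ne_top x
  have hreal : Tendsto (fun t => (M.G t x).toReal) (𝓝[<] β) (𝓝 (M.G β x).toReal) :=
    (M.deriv x h.1 h.2).continuousWithinAt.tendsto.mono_left
      (le_inf nhdsWithin_le_nhds (le_principal_iff.2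
        (mem_of_superset (Ioo_mem_nhdsLT h0) fun _ ht => ht.1.le)))
  have hlim := ENNReal.tendsto_ofReal hreal
  rw [ENNReal.ofReal_toReal (hfin β h)] at hlim
  refine hlim.congr' ?_
  filter_upwards [Ioo_mem_nhdsLT h0] with t ht
  exact ENNReal.ofReal_toReal (hfin t (h.of_le ht.1.le ht.2.le))

lemma tendsto_G_nhdsLT_of_eq (h0 : 0 < β) (h : ENNReal.ofReal β = M.βc) (x : Fin d → ℤ) :
    Tendsto (fun t => M.G t x) (𝓝[<] β) (𝓝 (M.G β x)) := by
  have hβ : M.βc.toReal = β := by rw [← h, ENNReal.toReal_ofReal h0.le]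
  have hsup := M.limit (h ▸ ENNReal.ofReal_ne_top) x
  rw [hβ] at hsup
  refine tendsto_order.2 ⟨fun a ha => ?_, fun a ha => ?_⟩
  · rw [hsup] at ha
    obtain ⟨s, hs, has⟩ := lt_biSup_iff.1 ha
    filter_upwards [Ioo_mem_nhdsLT hs.2] with t ht
    exact has.trans_le (M.mono x hs.1 ht.1.le ((ENNReal.ofReal_le_ofReal ht.2.le).trans h.le))
  · filter_upwards [Ioo_mem_nhdsLT h0] with t ht
    exact (M.mono x ht.1.le ht.2.le h.le).trans_lt ha

lemma tendsto_G_nhdsLT (h0 : 0 < β) (h : ENNReal.ofReal β ≤ M.βc) (x : Fin d → ℤ) :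
    Tendsto (fun t => M.G t x) (𝓝[<] β) (𝓝 (M.G β x)) := by
  rcases h.lt_or_eq with hlt | heq
  · exact Subcritical.tendsto_G_nhdsLT ⟨h0.le, hlt⟩ h0 x
  · exact tendsto_G_nhdsLT_of_eq h0 heq x

lemma mul_chi_le_of_forall_lt (h0 : 0 < β) (h : ENNReal.ofReal β ≤ M.βc) (ht : t < β)
    {a B : ℝ≥0∞} (ha : a ≠ ⊤) (hB : ∀ s, t ≤ s → s < β → a * M.chi s ≤ B) :
    a * M.chi β ≤ B := by
  rw [chi, ENNReal.tsum_eq_iSup_sum, ENNReal.mul_iSup]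
  refine iSup_le fun S => ?_
  have hlim : Tendsto (fun s => a * ∑ x ∈ S, M.G s x) (𝓝[<] β) (𝓝 (a * ∑ x ∈ S, M.G β x)) :=
    ENNReal.Tendsto.const_mul (tendsto_finsetSum _ fun x _ => tendsto_G_nhdsLT h0 h x) (Or.inr ha)
  refine le_of_tendsto hlim ?_
  filter_upwards [Ioo_mem_nhdsLT ht] with s hs
  exact (mul_le_mul' le_rfl (ENNReal.sum_le_tsum S)).trans (hB s hs.1.le hs.2)

lemma Subcritical.xiSq_mul_chi (h : M.Subcritical β) :
    M.xiSq β * M.chi β = secondMoment (M.F β) :=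
  ENNReal.div_mul_cancel (zero_lt_one.trans_le (one_le_chi h.1 h.2.le)).ne' h.chi_ne_top

lemma Subcritical.xiSq_ne_top (h : M.Subcritical β) : M.xiSq β ≠ ⊤ :=
  h.xiSq_eq ▸ ENNReal.ofReal_ne_top

lemma Subcritical.xiSq_le_of_xi_le (h : M.Subcritical β) (ht : M.Subcritical t)
    (hle : M.xi t ≤ M.xi β) : M.xiSq t ≤ M.xiSq β :=
  (ENNReal.toReal_le_toReal ht.xiSq_ne_top h.xiSq_ne_top).1
    ((Real.sqrt_le_sqrt_iff ENNReal.toReal_nonneg).1 hle)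

lemma ofReal_le_βc_of_forall_lt (h0 : 0 < β)
    (hctrl : ∀ s, 0 ≤ s → s < β → M.Controlled δ s) : ENNReal.ofReal β ≤ M.βc := by
  refine le_of_tendsto (ENNReal.continuous_ofReal.continuousWithinAt (s := Set.Iio β)).tendsto ?_
  filter_upwards [Ioo_mem_nhdsLT h0] with t ht
  exact (hctrl t ht.1.le ht.2).1.2.le

lemma xiSq_mul_chi_le_of_forall_lt (hc : 0 < c₀) (hδ : δ < 1 / 4) (h0 : 0 < β)
    (hctrl : ∀ s, 0 ≤ s → s < β → M.Controlled δ s) (ht₀ : 0 ≤ t)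
    (ht : t < β) : M.xiSq t * M.chi β ≤ secondMoment (M.F β) := by
  have h := ofReal_le_βc_of_forall_lt h0 hctrl
  have htsub := (hctrl t ht₀ ht).1
  refine mul_chi_le_of_forall_lt h0 h ht htsub.xiSq_ne_top fun s hts hsβ => ?_
  have hs := hctrl s (ht₀.trans hts) hsβ
  calc M.xiSq t * M.chi s ≤ M.xiSq s * M.chi s :=
        mul_le_mul' (hs.1.xiSq_le_of_xi_le htsub (hs.xi_mono hc hδ ht₀ hts)) le_rfl
    _ = secondMoment (M.F s) := hs.1.xiSq_mul_chi
    _ ≤ secondMoment (M.F β) :=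
        ENNReal.tsum_le_tsum fun x => mul_le_mul' le_rfl (F_mono h hs.1.1 hsβ.le x)

lemma xi_le_of_forall_lt (hc : 0 < c₀) (hδ : δ < 1 / 4) (h0 : 0 < β)
    (hctrl : ∀ s, 0 ≤ s → s < β → M.Controlled δ s) (ht₀ : 0 ≤ t)
    (ht : t < β) (hξ : 0 < M.xi β) : M.xi t ≤ M.xi β := by
  have hpos : 0 < (M.xiSq β).toReal := Real.sqrt_pos.1 hξ
  obtain ⟨hzero, htop⟩ := ENNReal.toReal_pos_iff.1 hpos
  have hχtop : M.chi β ≠ ⊤ := fun hχ => hzero.ne' (by rw [xiSq, hχ, ENNReal.div_top])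
  have hχzero : M.chi β ≠ 0 := (zero_lt_one.trans_le (one_le_chi h0.le
    (ofReal_le_βc_of_forall_lt h0 hctrl))).ne'
  have hsq : M.xiSq t ≤ M.xiSq β :=
    (ENNReal.le_div_iff_mul_le (Or.inl hχzero) (Or.inl hχtop)).2
      (xiSq_mul_chi_le_of_forall_lt hc hδ h0 hctrl ht₀ ht)
  exact Real.sqrt_le_sqrt (ENNReal.toReal_mono htop.ne hsq)

-- The value `M.xi β = 0` occurs only as the junk value of an infinite `ξ(β)`; the right-hand side
-- is then `1`, in accordance with the convention of the theorem.
lemma exp_neg_div_xi_le_of_forall_lt (hc : 0 < c₀) (hδ : δ < 1 / 4) (h0 : 0 < β)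
    (hctrl : ∀ s, 0 ≤ s → s < β → M.Controlled δ s) (ht₀ : 0 ≤ t)
    (ht : t < β) {a : ℝ} (ha : 0 ≤ a) :
    Real.exp (-(a / M.xi t)) ≤ Real.exp (-(a / M.xi β)) := by
  have hξt : 0 < M.xi t := (hctrl t ht₀ ht).1.xi_pos hc
  refine Real.exp_le_exp.2 (neg_le_neg ?_)
  rcases (M.xi_nonneg β).eq_or_lt with hξ | hξ
  · rw [← hξ, div_zero]
    positivity
  · have hle := xi_le_of_forall_lt hc hδ h0 hctrl ht₀ ht hξ
    gcongr

lemma controlled_of_lt_betaOf (h0 : 0 ≤ t) (ht : t < M.betaOf δ) : M.Controlled δ t := by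
  have hne : {β : ℝ | 0 ≤ β ∧ ENNReal.ofReal β < M.βc ∧ M.E β < ENNReal.ofReal δ}.Nonempty := by
    by_contra! hempty
    rw [betaOf, hempty, Real.sSup_empty] at ht
    exact h0.not_gt ht
  obtain ⟨b, hb, htb⟩ := exists_lt_of_lt_csSup hne ht
  exact Controlled.of_le ⟨⟨hb.1, hb.2.1⟩, hb.2.2⟩ h0 htb.le

lemma G_le_of_forall_lt (hc : 0 < c₀) (hδ : δ < 1 / 4) (h0 : 0 < β)
    (hctrl : ∀ s, 0 ≤ s → s < β → M.Controlled δ s) {a A B : ℝ} (ha : 0 ≤ a) (hB : 0 ≤ B)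
    {x : Fin d → ℤ} (hG : ∀ s, M.Controlled δ s →
      M.G s x ≤ ENNReal.ofReal (A + B * Real.exp (-(a / M.xi s)))) :
    M.G β x ≤ ENNReal.ofReal (A + B * Real.exp (-(a / M.xi β))) := by
  refine le_of_tendsto (tendsto_G_nhdsLT h0 (ofReal_le_βc_of_forall_lt h0 hctrl) x) ?_
  filter_upwards [Ioo_mem_nhdsLT h0] with t ht
  refine (hG t (hctrl t ht.1.le ht.2)).trans (ENNReal.ofReal_le_ofReal ?_)
  have hexp := exp_neg_div_xi_le_of_forall_lt hc hδ h0 hctrl ht.1.le ht.2 ha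
  gcongr

end Model

end CriticalPoint

end Blackbox

/-- near-critical upper bound for `G_β` (Theorem 1.5 / `thm:maintheorem`). -/
theorem statement0 (d : ℕ) (hd : 2 < d) (c₀ : ℝ) (hc₀ : c₀ ∈ Set.Ioc (0:ℝ) 1) :
    ∃ c > (0:ℝ), ∃ C > (0:ℝ), ∀ ε ∈ Set.Ioo (0:ℝ) 1, ∃ δ ∈ Set.Ioo (0:ℝ) 1,
      ∀ M : Model d c₀, ∀ β : ℝ, 0 ≤ β → β ≤ M.betaOf δ → ∀ x : Fin d → ℤ,
        M.G β x ≤ ENNReal.ofReal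
          ((if x = 0 then 1 else 0) +
            C / M.sigma ^ d *
              (M.sigma / max M.sigma (supNorm x)) ^ ((d : ℝ) - 2 - ε) *
              Real.exp (-c * supNorm x / M.xi β)) := by
  obtain ⟨c, hc, C, hC, H⟩ := Model.exists_forall_controlled_G_le hd hc₀.1 hc₀.2
  refine ⟨c, hc, C, hC, fun ε hε => ?_⟩
  obtain ⟨δ, hδ, H⟩ := H ε ⟨hε.1, hε.2.le⟩
  refine ⟨δ, ⟨hδ.1, by linarith [hδ.2]⟩, fun M β h0 hβ x => ?_⟩
  have hσ : 0 < M.sigma := M.K.sigma_pos hc₀.1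
  rw [supNorm_eq_norm, neg_mul, neg_div]
  rcases h0.eq_or_lt with rfl | h0
  · rw [M.G_zero, piSingle_zero_one_apply_eq_ofReal]
    exact ENNReal.ofReal_le_ofReal (le_add_of_nonneg_right (by positivity))
  · have hctrl : ∀ s, 0 ≤ s → s < β → M.Controlled δ s := fun s hs hsβ =>
      Model.controlled_of_lt_betaOf hs (hsβ.trans_le hβ)
    exact Model.G_le_of_forall_lt hc₀.1 (by linarith [hδ.2]) h0 hctrl (by positivity)
      (by positivity) fun s hs => H M s hs x
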